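/- arXiv:0903.3395 — 4 statements merged into one kernel-verified Lean document; each statement's English description precedes it below -/
import Mathlib

section
/- Let X = (ℂ^n, ‖·‖) be a Banach space and m a positive integer. For each multi-index α with |α| = m set d_α := sup{|a_α| : P(z) = ∑_{|β|=m} a_β z^β is an m-homogeneous polynomial with sup_{z ∈ B_X} |P(z)| ≤ 1}. Then the projection constant of the space of m-homogeneous polynomials satisfies λ(𝒫(^m X)) ≤ sup_{‖z‖ ≤ 1} ∑_{|α|=m} d_α |z^α|. In particular, there is a bounded linear projection from ℓ_∞(B_X) (the bounded functions on B_X with sup norm) onto the subspace of restrictions of m-homogeneous polynomials to B_X, with norm at most sup_{‖z‖≤1} ∑_{|α|=m} d_α |z^α|. -/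
open Finset MeasureTheory
open scoped ENNReal

/-- Coefficient space of `m`-homogeneous polynomials on `ℂ^n`: families of complex
numbers indexed by the multi-indices `α` with `|α| = m`. -/
abbrev Coef (n m : ℕ) :=
  { α : Fin n → ℕ // α ∈ Finset.Nat.antidiagonalTuple n m } → ℂ

/-- Evaluation of the `m`-homogeneous polynomial `∑_{|α|=m} a_α z^α` at `z ∈ ℂ^n`. -/
noncomputable def evalC {n m : ℕ} (a : Coef n m) (z : Fin n → ℂ) : ℂ :=
  ∑ α : { α : Fin n → ℕ // α ∈ Finset.Nat.antidiagonalTuple n m },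
    a α * ∏ i, z i ^ (α : Fin n → ℕ) i

/-- The norm of an `m`-homogeneous polynomial on `X = (ℂ^n, ν)`:
`‖P‖ = sup_{ν(z) ≤ 1} |P(z)|`. -/
noncomputable def polyNorm (n m : ℕ) (ν : (Fin n → ℂ) → ℝ) (a : Coef n m) : ℝ :=
  sSup {x : ℝ | ∃ z : Fin n → ℂ, ν z ≤ 1 ∧ x = ‖evalC a z‖}

/-- The projection constant of `(V, νV)`: the supremum, over all isometric linear
embeddings `I : V → Z` into Banach spaces `Z`, of the infimum of `‖P‖` over all bounded
linear projections `P` of `Z` onto `I(V)`. -/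
noncomputable def projConstWith (V : Type*) [AddCommGroup V] [Module ℂ V]
    (νV : V → ℝ) : ℝ :=
  sSup {x : ℝ |
    ∃ (Z : Type) (_iZ : NormedAddCommGroup Z) (_iS : NormedSpace ℂ Z) (I : V →ₗ[ℂ] Z),
      (∀ v, ‖I v‖ = νV v) ∧
      x = sInf {c : ℝ | ∃ P : Z →L[ℂ] Z,
        (∀ v, P (I v) = I v) ∧ (∀ z, ∃ v, P z = I v) ∧ c = ‖P‖}}

/-- `d_α`: the supremum of `|a_α|` over all `m`-homogeneous polynomials `P = ∑ a_β z^β`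
with `sup_{z ∈ B_X} |P(z)| ≤ 1`. -/
noncomputable def dCoef (n m : ℕ) (ν : (Fin n → ℂ) → ℝ)
    (α : { α : Fin n → ℕ // α ∈ Finset.Nat.antidiagonalTuple n m }) : ℝ :=
  sSup {x : ℝ | ∃ a : Coef n m,
    (∀ z : Fin n → ℂ, ν z < 1 → ‖evalC a z‖ ≤ 1) ∧ x = ‖a α‖}

section Helpers

theorem evalC_add {n m : ℕ} (a b : Coef n m) (z : Fin n → ℂ) :
    evalC (a + b) z = evalC a z + evalC b z := by
  simp [evalC, add_mul, Finset.sum_add_distrib]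

theorem evalC_smul {n m : ℕ} (c : ℂ) (a : Coef n m) (z : Fin n → ℂ) :
    evalC (c • a) z = c * evalC a z := by
  simp [evalC, Finset.mul_sum, mul_assoc]

theorem evalC_continuous {n m : ℕ} (a : Coef n m) : Continuous (evalC a) := by
  unfold evalC
  fun_prop

/-- Comparison of `ν` with the sup norm. -/
theorem nu_upper (n : ℕ) (ν : (Fin n → ℂ) → ℝ)
    (hadd : ∀ z w, ν (z + w) ≤ ν z + ν w)
    (hsmul : ∀ (c : ℂ) (z), ν (c • z) = ‖c‖ * ν z) :
    (∀ z, 0 ≤ ν z) ∧ ∃ C : ℝ, 0 < C ∧ ∀ z, ν z ≤ C * ‖z‖ := by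
  have h0 : ν 0 = 0 := by simpa using hsmul 0 0
  have hnn : ∀ z, 0 ≤ ν z := by
    intro z
    have h1 := hadd z ((-1 : ℂ) • z)
    rw [hsmul] at h1
    simp [h0] at h1
    linarith
  refine ⟨hnn, 1 + ∑ i, ν (Pi.single i 1), ?_, ?_⟩
  · have : 0 ≤ ∑ i, ν (Pi.single i (1 : ℂ)) := Finset.sum_nonneg fun i _ => hnn _
    linarith
  · intro z
    have hz : z = ∑ i, z i • (Pi.single i (1 : ℂ) : Fin n → ℂ) := by
      ext j
      simp [Finset.sum_apply, Pi.single_apply]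
    have hsum : ν (∑ i, z i • (Pi.single i (1 : ℂ) : Fin n → ℂ))
        ≤ ∑ i, ν (z i • (Pi.single i (1 : ℂ) : Fin n → ℂ)) :=
      Finset.le_sum_of_subadditive ν h0.le hadd _ _
    calc ν z = ν (∑ i, z i • (Pi.single i (1 : ℂ) : Fin n → ℂ)) := by rw [← hz]
      _ ≤ _ := hsum
      _ = ∑ i, ‖z i‖ * ν (Pi.single i 1) := by simp only [hsmul]
      _ ≤ ∑ i, ‖z‖ * ν (Pi.single i 1) :=
          Finset.sum_le_sum fun i _ => mul_le_mul_of_nonneg_right (norm_le_pi_norm z i) (hnn _)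
      _ = (∑ i, ν (Pi.single i 1)) * ‖z‖ := by rw [← Finset.mul_sum, mul_comm]
      _ ≤ _ := by nlinarith [norm_nonneg z]

theorem nu_lower (n : ℕ) (hn : 0 < n) (ν : (Fin n → ℂ) → ℝ)
    (hadd : ∀ z w, ν (z + w) ≤ ν z + ν w)
    (hsmul : ∀ (c : ℂ) (z), ν (c • z) = ‖c‖ * ν z)
    (hdef : ∀ z, ν z = 0 → z = 0) :
    ∃ R : ℝ, ∀ z, ν z ≤ 1 → z ∈ Metric.closedBall (0 : Fin n → ℂ) R := by
  obtain ⟨hnn, C, hC, hCz⟩ := nu_upper n ν hadd hsmul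
  have hcont : Continuous ν := by
    have : LipschitzWith C.toNNReal ν := by
      refine LipschitzWith.of_le_add_mul _ fun x y => ?_
      have h1 := hadd y (x - y)
      have h2 := hCz (x - y)
      rw [add_sub_cancel] at h1
      rw [Real.coe_toNNReal _ hC.le, dist_eq_norm]
      linarith
    exact this.continuous
  have : Nonempty (Fin n) := ⟨⟨0, hn⟩⟩
  have hne : (Metric.sphere (0 : Fin n → ℂ) 1).Nonempty := ⟨fun _ => 1, by simp⟩
  obtain ⟨w, hw, hmin⟩ := (isCompact_sphere (0 : Fin n → ℂ) 1).exists_isMinOn hne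
    hcont.continuousOn
  have hw1 : ‖w‖ = 1 := by simpa using hw
  have hwpos : 0 < ν w := by
    refine lt_of_le_of_ne (hnn w) fun h => ?_
    have := hdef w h.symm
    rw [this] at hw1
    simp at hw1
  refine ⟨(ν w)⁻¹, fun z hz => ?_⟩
  rw [mem_closedBall_zero_iff]
  by_cases hz0 : z = 0
  · subst hz0
    simp [hwpos.le]
  have hzp : 0 < ‖z‖ := norm_pos_iff.2 hz0
  have hs : ((‖z‖⁻¹ : ℝ) : ℂ) • z ∈ Metric.sphere (0 : Fin n → ℂ) 1 := by
    rw [mem_sphere_zero_iff_norm, norm_smul]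
    simp [hzp.ne']
  have h3 : ν w ≤ ν (((‖z‖⁻¹ : ℝ) : ℂ) • z) := hmin hs
  rw [hsmul] at h3
  simp only [Complex.norm_real, norm_inv, norm_norm] at h3
  rw [inv_mul_eq_div, le_div_iff₀ hzp] at h3
  rw [← one_div, le_div_iff₀ hwpos]
  linarith

theorem evalC_inj {n m : ℕ} (a : Coef n m) (r : ℝ) (hr : 0 < r)
    (h : ∀ z : Fin n → ℂ, ‖z‖ < r → evalC a z = 0) : a = 0 := by
  classical
  let p : MvPolynomial (Fin n) ℂ :=
    ∑ α : { α : Fin n → ℕ // α ∈ Finset.Nat.antidiagonalTuple n m },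
      MvPolynomial.monomial (Finsupp.equivFunOnFinite.symm (α : Fin n → ℕ)) (a α)
  have hp : p = 0 := by
    refine MvPolynomial.funext_set (fun _ => Metric.ball (0 : ℂ) r) (fun _ => ?_) fun x hx => ?_
    · exact infinite_of_mem_nhds (0 : ℂ) (Metric.ball_mem_nhds _ hr)
    · have hxr : ‖x‖ < r := by
        rw [pi_norm_lt_iff hr]
        intro i
        simpa using hx i (Set.mem_univ i)
      rw [map_zero, ← h x hxr]
      simp only [p, evalC, map_sum, MvPolynomial.eval_monomial]
      refine Finset.sum_congr rfl fun α _ => ?_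
      rw [Finsupp.prod_fintype _ _ (by simp)]
      simp
  funext β
  have hc := congrArg (MvPolynomial.coeff (Finsupp.equivFunOnFinite.symm (β : Fin n → ℕ))) hp
  simp only [p, MvPolynomial.coeff_sum, MvPolynomial.coeff_monomial, MvPolynomial.coeff_zero,
    EmbeddingLike.apply_eq_iff_eq, Subtype.coe_inj] at hc
  simpa using hc

/-- Restriction to the open ball, as a linear map into `ℓ_∞`. -/
noncomputable def restrictB {n m : ℕ} (ν : (Fin n → ℂ) → ℝ)
    (hb : ∀ a : Coef n m, Memℓp (fun z : {z : Fin n → ℂ // ν z < 1} => evalC a z.1) ∞) :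
    Coef n m →ₗ[ℂ] lp (fun _ : {z : Fin n → ℂ // ν z < 1} => ℂ) ∞ where
  toFun a := ⟨fun z => evalC a z.1, hb a⟩
  map_add' a b := by
    ext z
    exact evalC_add a b z.1
  map_smul' c a := by
    ext z
    exact evalC_smul c a z.1

theorem dCoef_spec (n m : ℕ) (ν : (Fin n → ℂ) → ℝ)
    (hadd : ∀ z w, ν (z + w) ≤ ν z + ν w)
    (hsmul : ∀ (c : ℂ) (z), ν (c • z) = ‖c‖ * ν z)
    (hb : ∀ a : Coef n m, Memℓp (fun z : {z : Fin n → ℂ // ν z < 1} => evalC a z.1) ∞)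
    (α : { α : Fin n → ℕ // α ∈ Finset.Nat.antidiagonalTuple n m })
    (a : Coef n m) (c : ℝ) (hc : 0 ≤ c) (h : ∀ z, ν z < 1 → ‖evalC a z‖ ≤ c) :
    ‖a α‖ ≤ dCoef n m ν α * c := by
  obtain ⟨hnn, C, hC, hCz⟩ := nu_upper n ν hadd hsmul
  have hinj : ∀ b : Coef n m, (∀ z, ν z < 1 → evalC b z = 0) → b = 0 := by
    intro b hb0
    refine evalC_inj b C⁻¹ (inv_pos.2 hC) fun z hz => hb0 z ?_
    refine (hCz z).trans_lt ?_
    rwa [← one_div, lt_div_iff₀' hC] at hz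
  have hker : LinearMap.ker (restrictB ν hb) = ⊥ := by
    rw [LinearMap.ker_eq_bot']
    intro b hb0
    refine hinj b fun z hz => ?_
    exact congrArg (fun f : lp (fun _ : {z : Fin n → ℂ // ν z < 1} => ℂ) ∞ => f ⟨z, hz⟩) hb0
  obtain ⟨K, hK, hanti⟩ := LinearMap.exists_antilipschitzWith (restrictB ν hb) hker
  have hbdd : BddAbove {x : ℝ | ∃ a : Coef n m,
      (∀ z : Fin n → ℂ, ν z < 1 → ‖evalC a z‖ ≤ 1) ∧ x = ‖a α‖} := by
    refine ⟨K * 1, ?_⟩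
    rintro x ⟨b, hb1, rfl⟩
    have h1 : ‖b‖ ≤ K * ‖restrictB ν hb b‖ := by
      have := hanti.le_mul_dist b 0
      simpa using this
    have h2 : ‖restrictB ν hb b‖ ≤ 1 :=
      lp.norm_le_of_forall_le zero_le_one fun z => hb1 z.1 z.2
    exact (norm_le_pi_norm b α).trans (h1.trans (mul_le_mul_of_nonneg_left h2 K.2))
  rcases hc.eq_or_lt with rfl | hc
  · have := hinj a fun z hz => norm_le_zero_iff.1 (h z hz)
    simp [this]
  · have h1 : ‖(((c⁻¹ : ℝ) : ℂ) • a) α‖ ≤ dCoef n m ν α := by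
      refine le_csSup hbdd ⟨_, fun z hz => ?_, rfl⟩
      rw [evalC_smul, norm_mul, Complex.norm_real, Real.norm_of_nonneg (inv_pos.2 hc).le,
        inv_mul_le_iff₀ hc, mul_one]
      exact h z hz
    rw [Pi.smul_apply, norm_smul, Complex.norm_real, Real.norm_of_nonneg (inv_pos.2 hc).le,
      inv_mul_le_iff₀ hc] at h1
    linarith

theorem dCoef_nonneg (n m : ℕ) (ν : (Fin n → ℂ) → ℝ)
    (α : { α : Fin n → ℕ // α ∈ Finset.Nat.antidiagonalTuple n m }) :
    0 ≤ dCoef n m ν α := by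
  refine Real.sSup_nonneg ?_
  rintro x ⟨a, -, rfl⟩
  exact norm_nonneg _

theorem exists_functional {V Z : Type*} [AddCommGroup V] [Module ℂ V]
    [NormedAddCommGroup Z] [NormedSpace ℂ Z] (I : V →ₗ[ℂ] Z) (hI : Function.Injective I)
    (f : V →ₗ[ℂ] ℂ) (d : ℝ) (hd : 0 ≤ d) (h : ∀ v, ‖f v‖ ≤ d * ‖I v‖) :
    ∃ φ : Z →L[ℂ] ℂ, (∀ v, φ (I v) = f v) ∧ ‖φ‖ ≤ d := by
  let e := LinearEquiv.ofInjective I hI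
  have hb : ∀ x : LinearMap.range I, ‖(f ∘ₗ e.symm.toLinearMap) x‖ ≤ d * ‖x‖ := by
    intro x
    obtain ⟨v, rfl⟩ := e.surjective x
    simpa [e] using h v
  obtain ⟨g, hg, hgn⟩ := exists_extension_norm_eq (LinearMap.range I)
    ((f ∘ₗ e.symm.toLinearMap).mkContinuous d hb)
  refine ⟨g, fun v => ?_, ?_⟩
  · have := hg (e v)
    simpa [e] using this
  · rw [hgn]
    exact LinearMap.mkContinuous_norm_le _ hd hb

theorem exists_coef_functional (n m : ℕ) (ν : (Fin n → ℂ) → ℝ)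
    {Z : Type*} [NormedAddCommGroup Z] [NormedSpace ℂ Z] (I : Coef n m →ₗ[ℂ] Z)
    (hspec : ∀ α v, ‖v α‖ ≤ dCoef n m ν α * ‖I v‖) :
    ∃ φ : Z →ₗ[ℂ] Coef n m, (∀ v, φ (I v) = v) ∧
      ∀ x α, ‖φ x α‖ ≤ dCoef n m ν α * ‖x‖ := by
  have hinj : Function.Injective I := by
    rw [injective_iff_map_eq_zero]
    intro v hv
    funext α
    have := hspec α v
    rw [hv, norm_zero, mul_zero] at this
    exact norm_le_zero_iff.1 this
  choose φ hφ hn using fun α => exists_functional I hinj (LinearMap.proj α) (dCoef n m ν α)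
    (dCoef_nonneg n m ν α) (hspec α)
  refine ⟨LinearMap.pi fun α => (φ α).toLinearMap, fun v => ?_, fun x α => ?_⟩
  · funext α
    exact hφ α v
  · exact ((φ α).le_opNorm x).trans (mul_le_mul_of_nonneg_right (hn α) (norm_nonneg _))

end Helpers

/-- For `X = (ℂ^n, ν)`: `λ(𝒫(^m X)) ≤ sup_{ν(z) ≤ 1} ∑_{|α|=m} d_α |z^α|`, and there is
a bounded linear projection of `ℓ_∞(B_X)` onto the subspace of restrictions of
`m`-homogeneous polynomials to `B_X` of norm at most this quantity. -/
theorem projection_constant_le (n m : ℕ) (hn : 0 < n) (hm : 0 < m)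
    (ν : (Fin n → ℂ) → ℝ)
    (hadd : ∀ z w, ν (z + w) ≤ ν z + ν w)
    (hsmul : ∀ (c : ℂ) (z), ν (c • z) = ‖c‖ * ν z)
    (hdef : ∀ z, ν z = 0 → z = 0) :
    projConstWith (Coef n m) (polyNorm n m ν)
        ≤ sSup {x : ℝ | ∃ z : Fin n → ℂ, ν z ≤ 1 ∧
            x = ∑ α : { α : Fin n → ℕ // α ∈ Finset.Nat.antidiagonalTuple n m },
              dCoef n m ν α * ‖∏ i, z i ^ (α : Fin n → ℕ) i‖}
      ∧ ∃ P : lp (fun _ : {z : Fin n → ℂ // ν z < 1} => ℂ) ∞ →L[ℂ]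
            lp (fun _ : {z : Fin n → ℂ // ν z < 1} => ℂ) ∞,
          (∀ f, ∃ a : Coef n m, ∀ z : {z : Fin n → ℂ // ν z < 1}, P f z = evalC a z.1) ∧
          (∀ f, (∃ a : Coef n m, ∀ z : {z : Fin n → ℂ // ν z < 1}, f z = evalC a z.1) →
            P f = f) ∧
          ‖P‖ ≤ sSup {x : ℝ | ∃ z : Fin n → ℂ, ν z ≤ 1 ∧
            x = ∑ α : { α : Fin n → ℕ // α ∈ Finset.Nat.antidiagonalTuple n m },
              dCoef n m ν α * ‖∏ i, z i ^ (α : Fin n → ℕ) i‖} := by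
  obtain ⟨R, hR⟩ := nu_lower n hn ν hadd hsmul hdef
  have hbd : ∀ g : (Fin n → ℂ) → ℝ, Continuous g →
      BddAbove {x : ℝ | ∃ z : Fin n → ℂ, ν z ≤ 1 ∧ x = g z} := by
    intro g hg
    refine ((isCompact_closedBall (0 : Fin n → ℂ) R).bddAbove_image hg.continuousOn).mono ?_
    rintro x ⟨z, hz, rfl⟩
    exact ⟨z, hR z hz, rfl⟩
  set S := sSup {x : ℝ | ∃ z : Fin n → ℂ, ν z ≤ 1 ∧
            x = ∑ α : { α : Fin n → ℕ // α ∈ Finset.Nat.antidiagonalTuple n m },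
              dCoef n m ν α * ‖∏ i, z i ^ (α : Fin n → ℕ) i‖} with hS
  have hSle : ∀ z, ν z ≤ 1 → ∑ α : { α : Fin n → ℕ // α ∈ Finset.Nat.antidiagonalTuple n m },
      dCoef n m ν α * ‖∏ i, z i ^ (α : Fin n → ℕ) i‖ ≤ S := fun z hz =>
    le_csSup (hbd (fun z => ∑ α : { α : Fin n → ℕ // α ∈ Finset.Nat.antidiagonalTuple n m },
      dCoef n m ν α * ‖∏ i, z i ^ (α : Fin n → ℕ) i‖) (by fun_prop)) ⟨z, hz, rfl⟩
  have hS0 : 0 ≤ S := by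
    refine Real.sSup_nonneg ?_
    rintro x ⟨z, -, rfl⟩
    exact Finset.sum_nonneg fun α _ => mul_nonneg (dCoef_nonneg n m ν α) (norm_nonneg _)
  have hpn : ∀ (a : Coef n m) z, ν z ≤ 1 → ‖evalC a z‖ ≤ polyNorm n m ν a := fun a z hz =>
    le_csSup (hbd (fun z => ‖evalC a z‖) (evalC_continuous a).norm) ⟨z, hz, rfl⟩
  have hb : ∀ a : Coef n m,
      Memℓp (fun z : {z : Fin n → ℂ // ν z < 1} => evalC a z.1) ∞ := by
    intro a
    refine memℓp_infty ⟨polyNorm n m ν a, ?_⟩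
    rintro x ⟨z, rfl⟩
    exact hpn a z.1 z.2.le
  -- key estimate
  have key : ∀ (a : Coef n m) (t : ℝ), (∀ α, ‖a α‖ ≤ dCoef n m ν α * t) → 0 ≤ t →
      ∀ z, ν z ≤ 1 → ‖evalC a z‖ ≤ S * t := by
    intro a t ha ht z hz
    calc ‖evalC a z‖ ≤ ∑ α, ‖a α * ∏ i, z i ^ (α : Fin n → ℕ) i‖ := norm_sum_le _ _
      _ ≤ ∑ α : { α : Fin n → ℕ // α ∈ Finset.Nat.antidiagonalTuple n m },
          dCoef n m ν α * ‖∏ i, z i ^ (α : Fin n → ℕ) i‖ * t := by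
        refine Finset.sum_le_sum fun α _ => ?_
        rw [norm_mul]
        have := mul_le_mul_of_nonneg_right (ha α) (norm_nonneg (∏ i, z i ^ (α : Fin n → ℕ) i))
        linarith
      _ = (∑ α : { α : Fin n → ℕ // α ∈ Finset.Nat.antidiagonalTuple n m },
          dCoef n m ν α * ‖∏ i, z i ^ (α : Fin n → ℕ) i‖) * t := by rw [Finset.sum_mul]
      _ ≤ S * t := mul_le_mul_of_nonneg_right (hSle z hz) ht
  refine ⟨?_, ?_⟩
  · refine Real.sSup_le ?_ hS0
    rintro x ⟨Z, iZ, iS, I, hI, rfl⟩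
    obtain ⟨φ, hφ, hn⟩ := exists_coef_functional n m ν I fun α v =>
      dCoef_spec n m ν hadd hsmul hb α v _ (norm_nonneg _) fun z hz => by
        rw [hI]
        exact hpn v z hz.le
    have hPb : ∀ x, ‖(I ∘ₗ φ) x‖ ≤ S * ‖x‖ := by
      intro x
      rw [LinearMap.comp_apply, hI]
      refine Real.sSup_le ?_ (mul_nonneg hS0 (norm_nonneg _))
      rintro y ⟨z, hz, rfl⟩
      exact key _ _ (hn x) (norm_nonneg _) z hz
    refine le_trans (csInf_le ?_ ?_) (LinearMap.mkContinuous_norm_le (I ∘ₗ φ) hS0 hPb)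
    · refine ⟨0, ?_⟩
      rintro c ⟨P, -, -, rfl⟩
      exact norm_nonneg _
    · exact ⟨(I ∘ₗ φ).mkContinuous S hPb, fun v => by simp [hφ], fun z => ⟨φ z, rfl⟩, rfl⟩
  · obtain ⟨φ, hφ, hn⟩ := exists_coef_functional n m ν (restrictB ν hb) fun α v =>
      dCoef_spec n m ν hadd hsmul hb α v _ (norm_nonneg _) fun z hz =>
        lp.norm_apply_le_norm (by simp) (restrictB ν hb v) ⟨z, hz⟩
    have hPb : ∀ x, ‖(restrictB ν hb ∘ₗ φ) x‖ ≤ S * ‖x‖ := fun x =>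
      lp.norm_le_of_forall_le (mul_nonneg hS0 (norm_nonneg _)) fun z =>
        key _ _ (hn x) (norm_nonneg _) z.1 z.2.le
    refine ⟨(restrictB ν hb ∘ₗ φ).mkContinuous S hPb, fun f => ⟨φ f, fun z => rfl⟩, ?_,
      LinearMap.mkContinuous_norm_le _ hS0 hPb⟩
    rintro f ⟨a, ha⟩
    have hf : f = restrictB ν hb a := by
      ext z
      exact ha z
    rw [hf]
    simp [hφ]
end

section
/- There is an absolute constant C ≥ 1 such that for all 1 ≤ p ≤ ∞ and all positive integers m, n, the projection constant of the space of m-homogeneous polynomials on ℓ_p^n satisfies λ(𝒫(^m ℓ_p^n)) ≤ C^m · (1 + n/m)^{m(1 - 1/min(p,2))}. -/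
open Finset MeasureTheory
open scoped ENNReal

/-- The `ℓ_p`-norm of a vector in `ℂ^n`, for `1 ≤ p ≤ ∞`. -/
noncomputable def pNorm (p : ℝ≥0∞) {n : ℕ} (z : Fin n → ℂ) : ℝ :=
  if p = ∞ then ⨆ i, ‖z i‖ else (∑ i, ‖z i‖ ^ p.toReal) ^ (1 / p.toReal)

/-- The norm of `𝒫(^m ℓ_p^n)`: `‖P‖ = sup_{‖z‖_p ≤ 1} |P(z)|`. -/
noncomputable def polyNormLp (p : ℝ≥0∞) (n m : ℕ) (a : Coef n m) : ℝ :=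
  sSup {x : ℝ | ∃ z : Fin n → ℂ, pNorm p z ≤ 1 ∧ x = ‖evalC a z‖}

/-- Abstract projection lemma. -/
theorem proj_abstract {V : Type*} [AddCommGroup V] [Module ℂ V] (νV : V → ℝ)
    {J : Type*} [Fintype J] (φ : J → V →ₗ[ℂ] ℂ) (v : J → V) (B : ℝ) (hB : 0 ≤ B)
    (hφ : ∀ j x, ‖φ j x‖ ≤ νV x)
    (hrep : ∀ x, ∑ j, φ j x • v j = x)
    (hbd : ∀ (c : J → ℂ) (R : ℝ), 0 ≤ R → (∀ j, ‖c j‖ ≤ R) → νV (∑ j, c j • v j) ≤ B * R) :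
    projConstWith V νV ≤ B := by
  unfold projConstWith
  refine Real.sSup_le ?_ hB
  rintro x ⟨Z, iZ, iS, I, hI, rfl⟩
  have hinj : Function.Injective I := by
    rw [injective_iff_map_eq_zero]
    intro a ha
    have h0 : νV a = 0 := by rw [← hI a, ha, norm_zero]
    rw [← hrep a]
    refine Finset.sum_eq_zero fun j _ => ?_
    have := hφ j a
    rw [h0] at this
    rw [norm_le_zero_iff.1 this, zero_smul]
  let e := LinearEquiv.ofInjective I hinj
  have hext : ∀ j, ∃ g : StrongDual ℂ Z, (∀ x, g (I x) = φ j x) ∧ ‖g‖ ≤ 1 := by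
    intro j
    let f : StrongDual ℂ (LinearMap.range I) :=
      LinearMap.mkContinuous ((φ j).comp e.symm.toLinearMap) 1 (by
        intro x
        obtain ⟨y, rfl⟩ := e.surjective x
        have h1 : ‖e y‖ = νV y := hI y
        simpa [h1] using hφ j y)
    obtain ⟨g, hg, hgn⟩ := exists_extension_norm_eq (LinearMap.range I) f
    refine ⟨g, fun x => ?_, hgn.trans_le (LinearMap.mkContinuous_norm_le _ zero_le_one _)⟩
    have h1 := hg (e x)
    have h2 : f (e x) = φ j x := by simp [f]
    rw [h2] at h1
    exact h1
  choose g hg hgn using hext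
  let P : Z →L[ℂ] Z := ∑ j, (g j).smulRight (I (v j))
  have hP : ∀ z, P z = I (∑ j, g j z • v j) := by
    intro z
    simp [P]
  have hPn : ‖P‖ ≤ B := by
    refine ContinuousLinearMap.opNorm_le_bound _ hB fun z => ?_
    rw [hP, hI]
    refine hbd _ _ (norm_nonneg z) fun j => ?_
    calc ‖g j z‖ ≤ ‖g j‖ * ‖z‖ := (g j).le_opNorm z
      _ ≤ 1 * ‖z‖ := by gcongr; exact hgn j
      _ = ‖z‖ := one_mul _
  refine le_trans (csInf_le ⟨0, ?_⟩ ⟨P, ?_, ?_, rfl⟩) hPn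
  · rintro c ⟨Q, -, -, rfl⟩
    exact norm_nonneg _
  · intro x
    rw [hP]
    simp only [hg, hrep]
  · intro z
    exact ⟨_, hP z⟩

/-- The multi-indices. -/
abbrev Idx (n m : ℕ) := { α : Fin n → ℕ // α ∈ Finset.Nat.antidiagonalTuple n m }

/-- monomials -/
noncomputable def mon {n m : ℕ} (α : Idx n m) (z : Fin n → ℂ) : ℂ := ∏ i, z i ^ (α : Fin n → ℕ) i

theorem evalC_eq {n m : ℕ} (a : Coef n m) (z : Fin n → ℂ) :
    evalC a z = ∑ α : Idx n m, a α * mon α z := rfl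

theorem mon_mul {n m : ℕ} (α : Idx n m) (z w : Fin n → ℂ) :
    mon α (z * w) = mon α z * mon α w := by
  simp [mon, mul_pow, Finset.prod_mul_distrib]

theorem idx_sum {n m : ℕ} (α : Idx n m) : ∑ i, α.1 i = m :=
  Finset.Nat.mem_antidiagonalTuple.1 α.2

theorem idx_le {n m : ℕ} (α : Idx n m) (i : Fin n) : α.1 i ≤ m := by
  exact (Finset.single_le_sum (f := α.1) (fun _ _ => Nat.zero_le _) (Finset.mem_univ i)).trans_eq
    (idx_sum α)

theorem pNorm_eq (p : ℝ≥0∞) [Fact (1 ≤ p)] {n : ℕ} (z : Fin n → ℂ) :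
    pNorm p z = ‖WithLp.toLp p z‖ := by
  unfold pNorm
  split_ifs with h
  · subst h
    rw [PiLp.norm_eq_ciSup]
  · rw [PiLp.norm_eq_sum]
    exact ENNReal.toReal_pos (by have := Fact.out (p := 1 ≤ p); positivity) h

theorem norm_le_pNorm (p : ℝ≥0∞) (hp : 1 ≤ p) {n : ℕ} (z : Fin n → ℂ) (i : Fin n) :
    ‖z i‖ ≤ pNorm p z := by
  have : Fact (1 ≤ p) := ⟨hp⟩
  rw [pNorm_eq]
  exact PiLp.norm_apply_le (WithLp.toLp p z) i

theorem compact_ball (p : ℝ≥0∞) (hp : 1 ≤ p) (n : ℕ) :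
    IsCompact {z : Fin n → ℂ | pNorm p z ≤ 1} := by
  have : Fact (1 ≤ p) := ⟨hp⟩
  have h := isCompact_closedBall (0 : PiLp p (fun _ : Fin n => ℂ)) 1
  have h2 := h.image (PiLp.continuous_ofLp p (fun _ : Fin n => ℂ))
  convert h2 using 1
  ext z
  simp only [Set.mem_ofPred_eq, Set.mem_image, mem_closedBall_zero_iff]
  constructor
  · intro hz
    exact ⟨WithLp.toLp p z, by rwa [← pNorm_eq], rfl⟩
  · rintro ⟨x, hx, rfl⟩
    rw [pNorm_eq]
    exact hx

theorem norm_mon_le_one {p : ℝ≥0∞} (hp : 1 ≤ p) {n m : ℕ} (α : Idx n m) {z : Fin n → ℂ}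
    (hz : pNorm p z ≤ 1) : ‖mon α z‖ ≤ 1 := by
  unfold mon
  rw [norm_prod]
  refine Finset.prod_le_one (fun _ _ => norm_nonneg _) fun i _ => ?_
  rw [norm_pow]
  exact pow_le_one₀ (norm_nonneg _) ((norm_le_pNorm p hp z i).trans hz)

theorem le_polyNorm {p : ℝ≥0∞} (hp : 1 ≤ p) {n m : ℕ} (a : Coef n m) {z : Fin n → ℂ}
    (hz : pNorm p z ≤ 1) : ‖evalC a z‖ ≤ polyNormLp p n m a := by
  refine le_csSup ⟨∑ α, ‖a α‖, ?_⟩ ⟨z, hz, rfl⟩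
  rintro x ⟨w, hw, rfl⟩
  rw [evalC_eq]
  refine (norm_sum_le _ _).trans (Finset.sum_le_sum fun α _ => ?_)
  rw [norm_mul]
  exact mul_le_of_le_one_right (norm_nonneg _) (norm_mon_le_one hp α hw)

/-- Concrete projection lemma. -/
theorem proj_poly {p : ℝ≥0∞} (hp : 1 ≤ p) {n m : ℕ} {J : Type*} [Fintype J]
    (w : J → Fin n → ℂ) (v : J → Coef n m) (B : ℝ) (hB : 0 ≤ B)
    (hw : ∀ j, pNorm p (w j) ≤ 1)
    (hrep : ∀ a : Coef n m, ∑ j, evalC a (w j) • v j = a)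
    (hbd : ∀ z : Fin n → ℂ, pNorm p z ≤ 1 → ∑ j, ‖evalC (v j) z‖ ≤ B) :
    projConstWith (Coef n m) (polyNormLp p n m) ≤ B := by
  refine proj_abstract (polyNormLp p n m)
    (fun j => { toFun := fun a => evalC a (w j)
                map_add' := fun a b => by
                  simp [evalC_eq, add_mul, Finset.sum_add_distrib]
                map_smul' := fun c a => by
                  simp [evalC_eq, mul_assoc, Finset.mul_sum] }) v B hB ?_ ?_ ?_
  · intro j x
    exact le_polyNorm hp x (hw j)
  · intro x
    exact hrep x
  · intro c R hR hc
    refine Real.sSup_le ?_ (mul_nonneg hB hR)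
    rintro x ⟨z, hz, rfl⟩
    have h1 : evalC (∑ j, c j • v j) z = ∑ j, c j * evalC (v j) z := by
      simp only [evalC_eq, Finset.sum_apply, Pi.smul_apply, smul_eq_mul, Finset.sum_mul,
        Finset.mul_sum]
      rw [Finset.sum_comm]
      simp only [mul_assoc]
    rw [h1]
    calc ‖∑ j, c j * evalC (v j) z‖ ≤ ∑ j, ‖c j * evalC (v j) z‖ := norm_sum_le _ _
      _ ≤ ∑ j, R * ‖evalC (v j) z‖ := by
          refine Finset.sum_le_sum fun j _ => ?_
          rw [norm_mul]
          gcongr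
          exact hc j
      _ = R * ∑ j, ‖evalC (v j) z‖ := by rw [Finset.mul_sum]
      _ ≤ R * B := by gcongr; exact hbd z hz
      _ = B * R := mul_comm _ _

/-- roots of unity -/
noncomputable def zt (m : ℕ) : ℂ := Complex.exp (2 * Real.pi * Complex.I / ((m + 1 : ℕ) : ℂ))

theorem zt_prim (m : ℕ) : IsPrimitiveRoot (zt m) (m + 1) :=
  Complex.isPrimitiveRoot_exp (m + 1) (Nat.succ_ne_zero m)

theorem zt_norm (m : ℕ) : ‖zt m‖ = 1 :=
  (zt_prim m).norm'_eq_one (Nat.succ_ne_zero m)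

theorem zt_conj (m : ℕ) : zt m * (starRingEnd ℂ) (zt m) = 1 := by
  rw [Complex.mul_conj']
  simp [zt_norm]

theorem zt_sum (m a b : ℕ) (ha : a ≤ m) (hb : b ≤ m) :
    ∑ k : Fin (m + 1), (zt m ^ (k : ℕ)) ^ a * (starRingEnd ℂ) ((zt m ^ (k : ℕ)) ^ b)
      = if a = b then ((m + 1 : ℕ) : ℂ) else 0 := by
  set η : ℂ := zt m ^ a * (starRingEnd ℂ) (zt m) ^ b with hη
  have h1 : ∀ k : ℕ, (zt m ^ k) ^ a * (starRingEnd ℂ) ((zt m ^ k) ^ b) = η ^ k := by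
    intro k
    rw [hη, mul_pow, map_pow, map_pow]
    ring
  simp only [h1]
  rw [Fin.sum_univ_eq_sum_range (fun k => η ^ k) (m + 1)]
  have hz := zt_conj m
  have hzM : zt m ^ (m + 1) = 1 := (zt_prim m).pow_eq_one
  split_ifs with hab
  · subst hab
    have : η = 1 := by rw [hη, ← mul_pow, hz, one_pow]
    simp [this]
  · have hne : η ≠ 1 := by
      intro h
      apply hab
      refine (zt_prim m).pow_inj (by omega) (by omega) ?_
      calc zt m ^ a = zt m ^ a * (zt m * (starRingEnd ℂ) (zt m)) ^ b := by rw [hz]; simp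
        _ = η * zt m ^ b := by rw [hη]; ring
        _ = zt m ^ b := by rw [h, one_mul]
    have hM : η ^ (m + 1) = 1 := by
      have h3 : (starRingEnd ℂ) (zt m) ^ (m + 1) = 1 := by rw [← map_pow, hzM, map_one]
      calc η ^ (m + 1) = (zt m ^ (m + 1)) ^ a * ((starRingEnd ℂ) (zt m) ^ (m + 1)) ^ b := by
            rw [hη]; ring
        _ = 1 := by rw [h3, hzM]; simp
    rw [geom_sum_eq hne, hM]
    simp

/-- discrete torus -/
noncomputable def tor {n m : ℕ} (k : Fin n → Fin (m + 1)) : Fin n → ℂ := fun i => zt m ^ (k i : ℕ)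

theorem tor_orth {n m : ℕ} (α β : Idx n m) :
    ∑ k : Fin n → Fin (m + 1), mon α (tor k) * (starRingEnd ℂ) (mon β (tor k))
      = if α = β then ((m + 1 : ℕ) : ℂ) ^ n else 0 := by
  have h1 : ∀ k : Fin n → Fin (m + 1), mon α (tor k) * (starRingEnd ℂ) (mon β (tor k))
      = ∏ i, ((zt m ^ (k i : ℕ)) ^ α.1 i * (starRingEnd ℂ) ((zt m ^ (k i : ℕ)) ^ β.1 i)) := by
    intro k
    simp only [mon, tor, map_prod, Finset.prod_mul_distrib]
  simp only [h1]
  rw [← Fintype.prod_sum (fun i (j : Fin (m + 1)) =>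
    ((zt m ^ (j : ℕ)) ^ α.1 i * (starRingEnd ℂ) ((zt m ^ (j : ℕ)) ^ β.1 i)))]
  simp only [zt_sum m _ _ (idx_le α _) (idx_le β _)]
  split_ifs with h
  · subst h
    simp
  · have : ∃ i, α.1 i ≠ β.1 i := by
      by_contra hc
      push Not at hc
      exact h (Subtype.ext (funext hc))
    obtain ⟨i, hi⟩ := this
    exact Finset.prod_eq_zero (Finset.mem_univ i) (by simp [hi])

theorem pNorm_tor (p : ℝ≥0∞) {n m : ℕ} (z : Fin n → ℂ) (k : Fin n → Fin (m + 1)) :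
    pNorm p (z * tor k) = pNorm p z := by
  simp [pNorm, tor, zt_norm]

theorem norm_mon_tor {n m : ℕ} (α : Idx n m) (k : Fin n → Fin (m + 1)) :
    ‖mon α (tor k)‖ = 1 := by
  simp [mon, tor, zt_norm]

theorem tor_avg {n m : ℕ} (a : Coef n m) (w : Fin n → ℂ) (α : Idx n m) :
    ∑ k : Fin n → Fin (m + 1), evalC a (w * tor k) * (starRingEnd ℂ) (mon α (tor k))
      = ((m + 1 : ℕ) : ℂ) ^ n * (a α * mon α w) := by
  simp only [evalC_eq, mon_mul, Finset.sum_mul]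
  rw [Finset.sum_comm]
  have h : ∀ β : Idx n m, ∑ k : Fin n → Fin (m + 1),
      a β * (mon β w * mon β (tor k)) * (starRingEnd ℂ) (mon α (tor k))
      = (a β * mon β w) * if β = α then ((m + 1 : ℕ) : ℂ) ^ n else 0 := by
    intro β
    rw [← tor_orth β α, Finset.mul_sum]
    refine Finset.sum_congr rfl fun k _ => ?_
    ring
  simp only [h]
  simp [mul_comm]

theorem tor_parseval {n m : ℕ} (b : Idx n m → ℂ) :
    ∑ k : Fin n → Fin (m + 1), ‖∑ α, b α * (starRingEnd ℂ) (mon α (tor k))‖ ^ 2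
      = ((m + 1 : ℕ) : ℝ) ^ n * ∑ α, ‖b α‖ ^ 2 := by
  have h : ∀ k : Fin n → Fin (m + 1),
      ((‖∑ α, b α * (starRingEnd ℂ) (mon α (tor k))‖ ^ 2 : ℝ) : ℂ)
      = ∑ α, ∑ β, (b α * (starRingEnd ℂ) (b β)) *
          (mon β (tor k) * (starRingEnd ℂ) (mon α (tor k))) := by
    intro k
    rw [Complex.ofReal_pow, ← Complex.mul_conj', map_sum, Finset.sum_mul_sum]
    refine Finset.sum_congr rfl fun α _ => Finset.sum_congr rfl fun β _ => ?_
    rw [map_mul, Complex.conj_conj]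
    ring
  apply Complex.ofReal_injective
  rw [Complex.ofReal_sum]
  simp only [h]
  rw [Finset.sum_comm]
  have h2 : ∀ α : Idx n m, ∑ k : Fin n → Fin (m + 1), ∑ β, (b α * (starRingEnd ℂ) (b β)) *
          (mon β (tor k) * (starRingEnd ℂ) (mon α (tor k)))
      = ((m + 1 : ℕ) : ℂ) ^ n * (‖b α‖ : ℂ) ^ 2 := by
    intro α
    rw [Finset.sum_comm]
    simp only [← Finset.mul_sum, tor_orth]
    rw [Finset.sum_eq_single α]
    · rw [Complex.mul_conj', if_pos rfl, mul_comm]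
    · intro β _ hβ
      rw [if_neg hβ, mul_zero]
    · simp
  simp only [h2]
  push_cast
  rw [Finset.mul_sum]

theorem first_order {ι : Type*} [Fintype ι] (q : ι → ℝ)
    (h : ∀ t : ℝ, 0 < t → t < 1 → ∏ i, (1 + t * (q i - 1)) ≤ 1) :
    ∑ i, q i ≤ Fintype.card ι := by
  classical
  have hd : HasDerivAt (fun t : ℝ => ∏ i, (1 + t * (q i - 1))) (∑ i, (q i - 1)) 0 := by
    have h1 : ∀ i ∈ (Finset.univ : Finset ι),
        HasDerivAt (fun t : ℝ => 1 + t * (q i - 1)) (q i - 1) 0 := by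
      intro i _
      simpa using ((hasDerivAt_id (0 : ℝ)).mul_const (q i - 1)).const_add 1
    have h2 := HasDerivAt.fun_finsetProd h1
    simpa using h2
  have ht := hd.tendsto_slope_zero_right
  have hle : ∑ i, (q i - 1) ≤ 0 := by
    refine le_of_tendsto ht ?_
    filter_upwards [Ioo_mem_nhdsGT (zero_lt_one : (0 : ℝ) < 1)] with t ht
    have := h t ht.1 ht.2
    simp only [zero_add, zero_mul, add_zero, Finset.prod_const_one, smul_eq_mul]
    exact mul_nonpos_of_nonneg_of_nonpos (inv_nonneg.2 ht.1.le) (by linarith)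
  rw [Finset.sum_sub_distrib] at hle
  simp at hle
  linarith

theorem exists_pos_point {p : ℝ≥0∞} (hp : 1 ≤ p) (n m : ℕ) :
    ∃ z : Fin n → ℂ, pNorm p z ≤ 1 ∧ ∀ α : Idx n m, 0 < ‖mon α z‖ ^ 2 := by
  have : Fact (1 ≤ p) := ⟨hp⟩
  set t : ℝ := ‖WithLp.toLp p (fun _ : Fin n => (1 : ℂ))‖ with ht
  have ht0 : 0 ≤ t := norm_nonneg _
  have hc : ((1 + t : ℝ) : ℂ) ≠ 0 := by
    rw [Complex.ofReal_ne_zero]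
    positivity
  refine ⟨((1 + t : ℝ) : ℂ)⁻¹ • (fun _ : Fin n => (1 : ℂ)), ?_, ?_⟩
  · rw [pNorm_eq, WithLp.toLp_smul, norm_smul, ← ht, norm_inv, Complex.norm_real,
      Real.norm_of_nonneg (by positivity), inv_mul_le_iff₀ (by positivity)]
    linarith
  · intro α
    have : mon α (((1 + t : ℝ) : ℂ)⁻¹ • (fun _ : Fin n => (1 : ℂ))) ≠ 0 := by
      unfold mon
      refine Finset.prod_ne_zero_iff.2 fun i _ => pow_ne_zero _ ?_
      simpa using hc
    positivity

theorem continuous_mon {n m : ℕ} (α : Idx n m) : Continuous (mon α) := by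
  unfold mon
  fun_prop

/-- Optimal design. -/
theorem design {p : ℝ≥0∞} (hp : 1 ≤ p) (n m : ℕ) :
    ∃ (ι : Type) (_ : Fintype ι) (l : ι → ℝ) (w : ι → Fin n → ℂ) (S : Idx n m → ℝ),
      (∀ j, 0 ≤ l j) ∧ ∑ j, l j = 1 ∧ (∀ j, pNorm p (w j) ≤ 1) ∧
      (∀ α, S α = ∑ j, l j * ‖mon α (w j)‖ ^ 2) ∧ (∀ α, 0 < S α) ∧
      ∀ z, pNorm p z ≤ 1 → ∑ α, ‖mon α z‖ ^ 2 / S α ≤ 2 * Fintype.card (Idx n m) := by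
  let F : (Fin n → ℂ) → Idx n m → ℝ := fun z α => ‖mon α z‖ ^ 2
  have hF : Continuous F := by
    refine continuous_pi fun α => ?_
    exact ((continuous_mon α).norm).pow 2
  set K : Set (Idx n m → ℝ) := F '' {z | pNorm p z ≤ 1} with hK
  have hKc : IsCompact K := (compact_ball p hp n).image hF
  have hH : IsCompact (closure (convexHull ℝ K)) :=
    (hKc.totallyBounded.convexHull).closure.isCompact_of_isClosed isClosed_closure
  obtain ⟨z0, hz0, hz0p⟩ := exists_pos_point hp n m
  have hz0K : F z0 ∈ closure (convexHull ℝ K) :=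
    subset_closure (subset_convexHull ℝ K ⟨z0, hz0, rfl⟩)
  obtain ⟨T, hTH, hmax⟩ := hH.exists_isMaxOn ⟨_, hz0K⟩
    (f := fun s : Idx n m → ℝ => ∏ α, s α) (by fun_prop)
  have hT0 : ∀ α, 0 ≤ T α := by
    have hsub : closure (convexHull ℝ K) ⊆ Set.Ici 0 := by
      refine closure_minimal (convexHull_min ?_ (convex_Ici 0)) isClosed_Ici
      rintro _ ⟨z, -, rfl⟩ α
      simp only [F, Pi.zero_apply]
      positivity
    exact hsub hTH
  have hprod : 0 < ∏ α, T α := by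
    refine lt_of_lt_of_le ?_ (hmax hz0K)
    exact Finset.prod_pos fun α _ => hz0p α
  have hTp : ∀ α, 0 < T α := by
    intro α
    refine lt_of_le_of_ne (hT0 α) fun h => ?_
    rw [Finset.prod_eq_zero (Finset.mem_univ α) h.symm] at hprod
    exact lt_irrefl _ hprod
  have hTN : ∀ z, pNorm p z ≤ 1 → ∑ α, ‖mon α z‖ ^ 2 / T α ≤ Fintype.card (Idx n m) := by
    intro z hz
    refine first_order _ fun t ht0 ht1 => ?_
    have hmem : (1 - t) • T + t • F z ∈ closure (convexHull ℝ K) :=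
      (convex_convexHull ℝ K).closure hTH
        (subset_closure (subset_convexHull ℝ K ⟨z, hz, rfl⟩)) (by linarith) ht0.le (by ring)
    have h1 := hmax hmem
    simp only [Set.mem_ofPred_eq] at h1
    have h2 : ∏ α, ((1 - t) • T + t • F z) α
        = (∏ α, T α) * ∏ α, (1 + t * (‖mon α z‖ ^ 2 / T α - 1)) := by
      rw [← Finset.prod_mul_distrib]
      refine Finset.prod_congr rfl fun α _ => ?_
      have := (hTp α).ne'
      simp only [Pi.add_apply, Pi.smul_apply, smul_eq_mul, F]
      field_simp
      ring
    rw [h2] at h1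
    exact (mul_le_iff_le_one_right hprod).1 h1
  have hopen : IsOpen {s : Idx n m → ℝ | ∀ α, T α / 2 < s α} := by
    simp only [Set.ofPred_forall]
    exact isOpen_iInter_of_finite fun α => isOpen_lt continuous_const (continuous_apply α)
  obtain ⟨S, hST, hSH⟩ := mem_closure_iff.1 hTH _ hopen (fun α => by
    have := hTp α
    linarith)
  obtain ⟨ι, hι, l, y, hl0, hl1, hy, hS⟩ := mem_convexHull_iff_exists_fintype.1 hSH
  choose w hw hwy using hy
  have hSα : ∀ α, S α = ∑ j, l j * ‖mon α (w j)‖ ^ 2 := by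
    intro α
    rw [← hS]
    simp only [Finset.sum_apply, Pi.smul_apply, smul_eq_mul, ← hwy]
    rfl
  have hSp : ∀ α, 0 < S α := fun α => lt_trans (half_pos (hTp α)) (hST α)
  refine ⟨ι, hι, l, w, S, hl0, hl1, hw, hSα, hSp, fun z hz => ?_⟩
  calc ∑ α, ‖mon α z‖ ^ 2 / S α ≤ ∑ α, 2 * (‖mon α z‖ ^ 2 / T α) := by
        refine Finset.sum_le_sum fun α _ => ?_
        have h1 := hTp α
        have h2 := hST α
        have h3 : 2 * (‖mon α z‖ ^ 2 / T α) = ‖mon α z‖ ^ 2 / (T α / 2) := by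
          field_simp
        rw [h3]
        exact div_le_div_of_nonneg_left (by positivity) (half_pos h1) h2.le
    _ = 2 * ∑ α, ‖mon α z‖ ^ 2 / T α := by rw [Finset.mul_sum]
    _ ≤ 2 * Fintype.card (Idx n m) := by
        gcongr
        exact hTN z hz

theorem proj_sqrt {p : ℝ≥0∞} (hp : 1 ≤ p) (n m : ℕ) :
    projConstWith (Coef n m) (polyNormLp p n m) ≤ √(2 * Fintype.card (Idx n m)) := by
  obtain ⟨ι, hι, l, w, S, hl0, hl1, hw, hS, hSp, hN⟩ := design hp n m
  set M : ℝ := ((m + 1 : ℕ) : ℝ) ^ n with hM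
  have hMp : 0 < M := by positivity
  have hMc : ((m + 1 : ℕ) : ℂ) ^ n = (M : ℂ) := by rw [hM]; push_cast; rfl
  have hMc0 : (M : ℂ) ≠ 0 := by exact_mod_cast hMp.ne'
  let v : ι × (Fin n → Fin (m + 1)) → Coef n m := fun x α =>
    ((l x.1 / M / S α : ℝ) : ℂ) * (starRingEnd ℂ) (mon α (w x.1) * mon α (tor x.2))
  refine proj_poly hp (fun x : ι × (Fin n → Fin (m + 1)) => w x.1 * tor x.2) v _
    (Real.sqrt_nonneg _) ?_ ?_ ?_
  · intro x
    rw [pNorm_tor]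
    exact hw _
  · intro a
    funext α
    rw [Finset.sum_apply, Fintype.sum_prod_type]
    have h1 : ∀ j, ∑ k : Fin n → Fin (m + 1), (evalC a (w j * tor k) • v (j, k)) α
        = (a α / S α) * ((l j * ‖mon α (w j)‖ ^ 2 : ℝ) : ℂ) := by
      intro j
      have h2 : ∀ k : Fin n → Fin (m + 1), (evalC a (w j * tor k) • v (j, k)) α
          = (((l j / M / S α : ℝ) : ℂ) * (starRingEnd ℂ) (mon α (w j))) *
            (evalC a (w j * tor k) * (starRingEnd ℂ) (mon α (tor k))) := by
        intro k
        simp only [v, Pi.smul_apply, smul_eq_mul, map_mul]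
        ring
      simp only [h2]
      rw [← Finset.mul_sum, tor_avg, hMc]
      push_cast
      rw [← Complex.mul_conj']
      have : (S α : ℂ) ≠ 0 := by exact_mod_cast (hSp α).ne'
      field_simp
    simp only [h1]
    rw [← Finset.mul_sum, ← Complex.ofReal_sum, ← hS]
    have : (S α : ℂ) ≠ 0 := by exact_mod_cast (hSp α).ne'
    field_simp
  · intro z hz
    let X : ι × (Fin n → Fin (m + 1)) → ℝ := fun x =>
      ‖∑ α, ((starRingEnd ℂ) (mon α (w x.1)) * mon α z / S α) *
        (starRingEnd ℂ) (mon α (tor x.2))‖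
    have hX : ∀ x, ‖evalC (v x) z‖ = (l x.1 / M) * X x := by
      intro x
      have : evalC (v x) z = ((l x.1 / M : ℝ) : ℂ) *
          ∑ α, ((starRingEnd ℂ) (mon α (w x.1)) * mon α z / S α) *
        (starRingEnd ℂ) (mon α (tor x.2)) := by
        rw [evalC_eq, Finset.mul_sum]
        refine Finset.sum_congr rfl fun α _ => ?_
        simp only [v, map_mul]
        push_cast
        ring
      rw [this, norm_mul, Complex.norm_real,
        Real.norm_of_nonneg (div_nonneg (hl0 _) hMp.le)]
    simp only [hX]
    apply Real.le_sqrt_of_sq_le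
    have hwt : ∑ x : ι × (Fin n → Fin (m + 1)), l x.1 / M = 1 := by
      rw [Fintype.sum_prod_type]
      simp only [Finset.sum_const, Finset.card_univ, Fintype.card_pi, Fintype.card_fin,
        Finset.prod_const, nsmul_eq_mul]
      rw [← Finset.mul_sum, ← Finset.sum_div, hl1, hM]
      push_cast
      field_simp
    refine (Real.pow_arith_mean_le_arith_mean_pow _ (fun x => l x.1 / M) X
      (fun x _ => div_nonneg (hl0 _) hMp.le) hwt (fun x _ => norm_nonneg _) 2).trans ?_
    refine le_trans (le_of_eq ?_) (hN z hz)
    rw [Fintype.sum_prod_type]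
    have h3 : ∀ j, ∑ k : Fin n → Fin (m + 1), l j / M * X (j, k) ^ 2
        = ∑ α, (‖mon α z‖ ^ 2 / S α ^ 2) * (l j * ‖mon α (w j)‖ ^ 2) := by
      intro j
      simp only [X]
      rw [← Finset.mul_sum, tor_parseval, ← hM, Finset.mul_sum, Finset.mul_sum]
      refine Finset.sum_congr rfl fun α _ => ?_
      rw [norm_div, norm_mul, RCLike.norm_conj, Complex.norm_real,
        Real.norm_of_nonneg (hSp α).le]
      have := (hSp α).ne'
      field_simp
    simp only [h3]
    rw [Finset.sum_comm]
    refine Finset.sum_congr rfl fun α _ => ?_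
    rw [← Finset.mul_sum, ← hS]
    have := (hSp α).ne'
    field_simp

theorem card_idx (n m : ℕ) : Fintype.card (Idx n m) = n.multichoose m := by
  rw [Fintype.card_coe, ← Finset.piAntidiag_univ_fin_eq_antidiagonalTuple,
    ← Finset.map_sym_eq_piAntidiag, Finset.card_map, Finset.sym_univ, Finset.card_univ,
    Sym.card_sym_eq_multichoose, Fintype.card_fin]

theorem pow_self_le (m : ℕ) : (m : ℝ) ^ m ≤ Real.exp 1 ^ m * (m.factorial : ℝ) := by
  have h := Real.pow_div_factorial_le_exp (m : ℝ) (Nat.cast_nonneg m) m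
  rw [div_le_iff₀ (by positivity)] at h
  rwa [← Real.exp_nat_mul, mul_one]

theorem card_idx_le (n m : ℕ) (hm : 0 < m) :
    (Fintype.card (Idx n m) : ℝ) ≤ Real.exp 1 ^ m * (1 + (n : ℝ) / m) ^ m := by
  rw [card_idx, Nat.multichoose_eq]
  have hm' : (0 : ℝ) < m := by exact_mod_cast hm
  calc ((n + m - 1).choose m : ℝ) ≤ ((n + m - 1 : ℕ) : ℝ) ^ m / (m.factorial : ℝ) :=
        Nat.choose_le_pow_div m _
    _ ≤ ((n : ℝ) + m) ^ m / (m.factorial : ℝ) := by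
        gcongr
        have : n + m - 1 ≤ n + m := Nat.sub_le _ _
        exact_mod_cast this
    _ ≤ Real.exp 1 ^ m * (1 + (n : ℝ) / m) ^ m := by
        have h1 : (n : ℝ) + m = (1 + (n : ℝ) / m) * m := by field_simp; ring
        rw [h1, mul_pow, div_le_iff₀ (by positivity)]
        have := pow_self_le m
        calc (1 + (n : ℝ) / m) ^ m * (m : ℝ) ^ m
            ≤ (1 + (n : ℝ) / m) ^ m * (Real.exp 1 ^ m * (m.factorial : ℝ)) := by gcongr
          _ = _ := by ring

theorem sum_multinomial {n : ℕ} (m : ℕ) (x : Fin n → ℝ) :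
    ∑ α : Idx n m, ((m.factorial : ℝ) / ∏ i, ((α.1 i).factorial : ℝ)) * ∏ i, x i ^ α.1 i
      = (∑ i, x i) ^ m := by
  rw [Finset.sum_pow_eq_sum_piAntidiag, Finset.piAntidiag_univ_fin_eq_antidiagonalTuple,
    ← Finset.sum_coe_sort (Finset.Nat.antidiagonalTuple n m)]
  refine Finset.sum_congr rfl fun α _ => ?_
  congr 1
  have h := Nat.multinomial_spec Finset.univ α.1
  rw [idx_sum α] at h
  have h' : (∏ i, ((α.1 i).factorial : ℝ)) * (Nat.multinomial Finset.univ α.1 : ℝ)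
      = (m.factorial : ℝ) := by exact_mod_cast h
  have hp : (∏ i, ((α.1 i).factorial : ℝ)) ≠ 0 :=
    Finset.prod_ne_zero_iff.2 fun i _ => by positivity
  rw [← h']
  field_simp

/-- inverse of `∏ (α_i/m)^{α_i}`. -/
theorem tmon_bound {n m : ℕ} (hm : 0 < m) (α : Idx n m) :
    0 < ∏ i, ((α.1 i : ℝ) / m) ^ α.1 i ∧
    (∏ i, ((α.1 i : ℝ) / m) ^ α.1 i)⁻¹
      ≤ Real.exp 1 ^ m * ((m.factorial : ℝ) / ∏ i, ((α.1 i).factorial : ℝ)) := by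
  have hm' : (0 : ℝ) < m := by exact_mod_cast hm
  have h1 : ∏ i, ((α.1 i : ℝ) / m) ^ α.1 i = (∏ i, (α.1 i : ℝ) ^ α.1 i) / (m : ℝ) ^ m := by
    simp only [div_pow]
    rw [Finset.prod_div_distrib, Finset.prod_pow_eq_pow_sum, idx_sum α]
  have h2 : ∏ i, ((α.1 i).factorial : ℝ) ≤ ∏ i, (α.1 i : ℝ) ^ α.1 i := by
    refine Finset.prod_le_prod (fun i _ => by positivity) fun i _ => ?_
    exact_mod_cast Nat.factorial_le_pow (α.1 i)
  have h3 : 0 < ∏ i, ((α.1 i).factorial : ℝ) := Finset.prod_pos fun i _ => by positivity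
  have h4 := h3.trans_le h2
  rw [h1]
  refine ⟨by positivity, ?_⟩
  rw [inv_div, mul_div_assoc']
  exact div_le_div₀ (by positivity) (pow_self_le m) h3 h2

theorem proj_small {p : ℝ≥0∞} (hp : 1 ≤ p) (hpt : p ≠ ∞) (n m : ℕ) (hm : 0 < m) :
    projConstWith (Coef n m) (polyNormLp p n m)
      ≤ ((Fintype.card (Idx n m) : ℝ) ^ (p.toReal - 1) * Real.exp 1 ^ m) ^ (1 / p.toReal) := by
  have hq : 1 ≤ p.toReal := by
    have := ENNReal.toReal_mono hpt hp
    simpa using this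
  set q := p.toReal with hqd
  have hq0 : 0 < q := by linarith
  have hm' : (0 : ℝ) < m := by exact_mod_cast hm
  set M : ℝ := ((m + 1 : ℕ) : ℝ) ^ n with hM
  have hMp : 0 < M := by positivity
  have hMc : ((m + 1 : ℕ) : ℂ) ^ n = (M : ℂ) := by rw [hM]; push_cast; rfl
  have hMc0 : (M : ℂ) ≠ 0 := by exact_mod_cast hMp.ne'
  let r : Idx n m → Fin n → ℂ := fun α i => ((((α.1 i : ℝ) / m) ^ (1 / q) : ℝ) : ℂ)
  have hrn : ∀ α i, ‖r α i‖ = ((α.1 i : ℝ) / m) ^ (1 / q) := by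
    intro α i
    simp only [r]
    rw [Complex.norm_real, Real.norm_of_nonneg (by positivity)]
  have hr1 : ∀ α, pNorm p (r α) ≤ 1 := by
    intro α
    unfold pNorm
    rw [if_neg hpt]
    simp only [hrn]
    have : ∀ i, (((α.1 i : ℝ) / m) ^ (1 / q)) ^ q = (α.1 i : ℝ) / m := by
      intro i
      rw [← Real.rpow_mul (by positivity), one_div_mul_cancel hq0.ne', Real.rpow_one]
    simp only [← hqd, this]
    rw [← Finset.sum_div, ← Nat.cast_sum, idx_sum α, div_self hm'.ne', Real.one_rpow]
  have hrm : ∀ α, ‖mon α (r α)‖ ^ q = ∏ i, ((α.1 i : ℝ) / m) ^ α.1 i := by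
    intro α
    unfold mon
    rw [norm_prod, ← Real.finsetProd_rpow _ _ (fun i _ => norm_nonneg _)]
    refine Finset.prod_congr rfl fun i _ => ?_
    rw [norm_pow, hrn, ← Real.rpow_natCast, ← Real.rpow_natCast, ← Real.rpow_mul (by positivity),
      ← Real.rpow_mul (by positivity)]
    congr 1
    field_simp
  have hrm0 : ∀ α, mon α (r α) ≠ 0 := by
    intro α h
    have h1 := (tmon_bound hm α).1
    rw [← hrm, h, norm_zero, Real.zero_rpow hq0.ne'] at h1
    exact lt_irrefl _ h1
  let v : Idx n m × (Fin n → Fin (m + 1)) → Coef n m := fun x =>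
    Pi.single x.1 ((M : ℂ)⁻¹ * (mon x.1 (r x.1))⁻¹ * (starRingEnd ℂ) (mon x.1 (tor x.2)))
  refine proj_poly hp (fun x : Idx n m × (Fin n → Fin (m + 1)) => r x.1 * tor x.2) v _
    (by positivity) ?_ ?_ ?_
  · intro x
    rw [pNorm_tor]
    exact hr1 _
  · intro a
    rw [Fintype.sum_prod_type]
    have h1 : ∀ α : Idx n m, ∑ k : Fin n → Fin (m + 1), evalC a (r α * tor k) • v (α, k)
        = Pi.single α (a α) := by
      intro α
      have h2 : ∀ k : Fin n → Fin (m + 1), evalC a (r α * tor k) • v (α, k)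
          = Pi.single α (((M : ℂ)⁻¹ * (mon α (r α))⁻¹) *
            (evalC a (r α * tor k) * (starRingEnd ℂ) (mon α (tor k)))) := by
        intro k
        simp only [v]
        rw [← Pi.single_smul, smul_eq_mul]
        congr 1
        ring
      simp only [h2]
      have hsingle : ∀ f : (Fin n → Fin (m + 1)) → ℂ,
          ∑ k, (Pi.single α (f k) : Coef n m) = Pi.single α (∑ k, f k) := fun f =>
        (map_sum (AddMonoidHom.single (fun _ : Idx n m => ℂ) α) f Finset.univ).symm
      rw [hsingle, ← Finset.mul_sum, tor_avg, hMc]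
      congr 1
      have := hrm0 α
      field_simp
    simp only [h1]
    exact Finset.univ_sum_single a
  · intro z hz
    have h1 : ∀ x, ‖evalC (v x) z‖ = M⁻¹ * (‖mon x.1 (r x.1)‖⁻¹ * ‖mon x.1 z‖) := by
      intro x
      rw [evalC_eq, Finset.sum_eq_single x.1]
      · simp only [v, Pi.single_eq_same]
        rw [norm_mul, norm_mul, norm_mul, RCLike.norm_conj, norm_mon_tor, norm_inv, norm_inv,
          Complex.norm_real, Real.norm_of_nonneg hMp.le]
        ring
      · intro β _ hβ
        simp only [v]
        rw [Pi.single_eq_of_ne hβ, zero_mul]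
      · simp
    simp only [h1]
    rw [Fintype.sum_prod_type]
    simp only [Finset.sum_const, Finset.card_univ, Fintype.card_pi, Fintype.card_fin,
        Finset.prod_const, nsmul_eq_mul]
    have h2 : ∀ y : ℝ, (((m + 1) ^ n : ℕ) : ℝ) * (M⁻¹ * y) = y := by
      intro y
      rw [hM]
      push_cast
      field_simp
    simp only [h2]
    have hz' : ∑ i, ‖z i‖ ^ q ≤ 1 := by
      unfold pNorm at hz
      rw [if_neg hpt, ← hqd] at hz
      by_contra hc
      push Not at hc
      exact absurd hz (not_le.2 (Real.one_lt_rpow hc (by positivity)))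
    have hsn : 0 ≤ ∑ i, ‖z i‖ ^ q := Finset.sum_nonneg fun i _ => by positivity
    rw [one_div, Real.le_rpow_inv_iff_of_pos (Finset.sum_nonneg fun i _ => by positivity)
      (by positivity) hq0]
    refine (Real.rpow_sum_le_const_mul_sum_rpow_of_nonneg _ hq (fun α _ => by positivity)).trans ?_
    rw [Finset.card_univ]
    gcongr
    calc ∑ α : Idx n m, (‖mon α (r α)‖⁻¹ * ‖mon α z‖) ^ q
        ≤ ∑ α : Idx n m, Real.exp 1 ^ m * (((m.factorial : ℝ) /
            ∏ i, ((α.1 i).factorial : ℝ)) * ∏ i, (‖z i‖ ^ q) ^ α.1 i) := by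
          refine Finset.sum_le_sum fun α _ => ?_
          have h3 : ‖mon α z‖ ^ q = ∏ i, (‖z i‖ ^ q) ^ α.1 i := by
            unfold mon
            rw [norm_prod, ← Real.finsetProd_rpow _ _ (fun i _ => norm_nonneg _)]
            refine Finset.prod_congr rfl fun i _ => ?_
            rw [norm_pow, ← Real.rpow_natCast, ← Real.rpow_natCast,
              ← Real.rpow_mul (by positivity), ← Real.rpow_mul (by positivity), mul_comm]
          rw [Real.mul_rpow (by positivity) (by positivity), Real.inv_rpow (by positivity), hrm,
            h3, ← mul_assoc]
          refine mul_le_mul_of_nonneg_right (tmon_bound hm α).2 ?_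
          exact Finset.prod_nonneg fun i _ => by positivity
      _ = Real.exp 1 ^ m * (∑ i, ‖z i‖ ^ q) ^ m := by
          rw [← Finset.mul_sum, sum_multinomial]
      _ ≤ Real.exp 1 ^ m * 1 := by
          gcongr
          exact pow_le_one₀ hsn hz'
      _ = Real.exp 1 ^ m := mul_one _

/-- There is an absolute constant `C ≥ 1` such that
`λ(𝒫(^m ℓ_p^n)) ≤ C^m · (1 + n/m)^{m(1 - 1/min(p,2))}` for all `1 ≤ p ≤ ∞` and `m, n`. -/
theorem projection_constant_polynomials_lp :
    ∃ C : ℝ, 1 ≤ C ∧ ∀ (p : ℝ≥0∞), 1 ≤ p → ∀ (m n : ℕ), 0 < m → 0 < n →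
      projConstWith (Coef n m) (polyNormLp p n m)
        ≤ C ^ m * (1 + (n : ℝ) / (m : ℝ)) ^ ((m : ℝ) * (1 - 1 / (min p 2).toReal)) := by
  refine ⟨2 * Real.exp 1 ^ 2, ?_, ?_⟩
  · have : 1 ≤ Real.exp 1 := Real.one_le_exp zero_le_one
    nlinarith
  intro p hp m n hm hn
  have hm' : (0 : ℝ) < m := by exact_mod_cast hm
  have he : 1 ≤ Real.exp 1 := Real.one_le_exp zero_le_one
  have hN := card_idx_le n m hm
  set N : ℝ := (Fintype.card (Idx n m) : ℝ) with hNd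
  have hN0 : 0 ≤ N := Nat.cast_nonneg _
  set E : ℝ := Real.exp 1 ^ m with hE
  have hE1 : 1 ≤ E := one_le_pow₀ he
  set D : ℝ := 1 + (n : ℝ) / m with hD
  have hD0 : 0 < D := by positivity
  have hC : (2 * Real.exp 1 ^ 2) ^ m = 2 ^ m * E ^ 2 := by
    rw [mul_pow, hE]; ring
  have h2m : (2 : ℝ) ≤ 2 ^ m := by
    calc (2 : ℝ) = 2 ^ 1 := (pow_one _).symm
      _ ≤ 2 ^ m := pow_le_pow_right₀ one_le_two hm
  rw [hC]
  rcases le_total p 2 with h | h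
  · have hpt : p ≠ ∞ := ne_top_of_le_ne_top (by simp) h
    rw [min_eq_left h]
    have hq : 1 ≤ p.toReal := by
      have := ENNReal.toReal_mono hpt hp
      simpa using this
    refine (proj_small hp hpt n m hm).trans ?_
    set q := p.toReal
    have hq0 : 0 < q := by linarith
    have hs0 : 0 ≤ 1 - 1 / q := by
      rw [sub_nonneg, div_le_one hq0]; exact hq
    have hs1 : 1 - 1 / q ≤ 1 := by
      have : 0 ≤ 1 / q := by positivity
      linarith
    rw [Real.mul_rpow (by positivity) (by positivity), ← Real.rpow_mul hN0]
    have hexp : (q - 1) * (1 / q) = 1 - 1 / q := by field_simp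
    rw [hexp]
    have h1 : E ^ (1 / q) ≤ E := by
      calc E ^ (1 / q) ≤ E ^ (1 : ℝ) := Real.rpow_le_rpow_of_exponent_le hE1 (by linarith)
        _ = E := Real.rpow_one _
    have h2 : N ^ (1 - 1 / q) ≤ E * D ^ ((m : ℝ) * (1 - 1 / q)) := by
      calc N ^ (1 - 1 / q) ≤ (E * D ^ m) ^ (1 - 1 / q) := by gcongr
        _ = E ^ (1 - 1 / q) * D ^ ((m : ℝ) * (1 - 1 / q)) := by
            rw [Real.mul_rpow (by positivity) (by positivity), Real.rpow_mul hD0.le,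
              Real.rpow_natCast]
        _ ≤ E * D ^ ((m : ℝ) * (1 - 1 / q)) := by
            gcongr
            calc E ^ (1 - 1 / q) ≤ E ^ (1 : ℝ) := Real.rpow_le_rpow_of_exponent_le hE1 hs1
              _ = E := Real.rpow_one _
    calc N ^ (1 - 1 / q) * E ^ (1 / q) ≤ (E * D ^ ((m : ℝ) * (1 - 1 / q))) * E := by gcongr
      _ = 1 * (E ^ 2 * D ^ ((m : ℝ) * (1 - 1 / q))) := by ring
      _ ≤ 2 ^ m * (E ^ 2 * D ^ ((m : ℝ) * (1 - 1 / q))) := by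
          gcongr
          linarith
      _ = _ := by ring
  · rw [min_eq_right h]
    refine (proj_sqrt hp n m).trans ?_
    rw [← hNd]
    rw [Real.sqrt_le_left (by positivity)]
    have h1 : (D ^ ((m : ℝ) * (1 - 1 / (2 : ℝ≥0∞).toReal))) ^ 2 = D ^ m := by
      rw [← Real.rpow_natCast, ← Real.rpow_mul hD0.le, ← Real.rpow_natCast]
      congr 1
      simp
      ring
    rw [mul_pow, h1]
    have h3 : 2 * E ≤ (2 ^ m * E ^ 2) ^ 2 := by
      have h4 : 2 * E ≤ 2 ^ m * E ^ 2 := by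
        gcongr
        nlinarith
      nlinarith
    calc 2 * N ≤ 2 * (E * D ^ m) := by gcongr
      _ = (2 * E) * D ^ m := by ring
      _ ≤ _ := by gcongr
end

section
/- Let 1 ≤ p ≤ 2 and let m, n be positive integers. For every m-homogeneous polynomial P(z) = ∑_{|β|=m} a_β z^β on ℂ^n with sup_{‖z‖_p ≤ 1} |P(z)| ≤ 1 and every multi-index α with |α| = m, one has |a_α| ≤ e^{m/p} · (m!/α!)^{1/p}, where α! = α₁!⋯α_n!. -/
open Finset

/-- Evaluation of the `m`-homogeneous polynomial on `ℂ^n` with coefficient family `a`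
(indexed by the multi-indices `α` with `|α| = m`) at the point `z`. -/
noncomputable def mhEval (n m : ℕ) (a : (Fin n → ℕ) → ℂ) (z : Fin n → ℂ) : ℂ :=
  ∑ α ∈ Finset.Nat.antidiagonalTuple n m, a α * ∏ i, z i ^ α i

lemma cauchy_aux_geom (K : ℕ) (ζ : ℂ) (hζ : IsPrimitiveRoot ζ K) (b c : ℕ)
    (hb : b < K) (hc : c < K) (hbc : b ≠ c) :
    ∑ j : Fin K, (ζ ^ (j : ℕ)) ^ b * ((ζ ^ (j : ℕ)) ^ c)⁻¹ = 0 := by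
  have hK : K ≠ 0 := by omega
  have h0 : ζ ≠ 0 := hζ.ne_zero hK
  have h1 : ζ ^ b * (ζ ^ c)⁻¹ ≠ 1 := by
    intro h
    have h2 : ζ ^ b = ζ ^ c := by
      field_simp at h
      exact h
    exact hbc (hζ.pow_inj hb hc h2)
  have h3 : ∀ j : Fin K, (ζ ^ (j : ℕ)) ^ b * ((ζ ^ (j : ℕ)) ^ c)⁻¹
      = (ζ ^ b * (ζ ^ c)⁻¹) ^ (j : ℕ) := by
    intro j
    rw [mul_pow, inv_pow, ← pow_mul, ← pow_mul, ← pow_mul, ← pow_mul, mul_comm b, mul_comm c]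
  simp_rw [h3]
  rw [Fin.sum_univ_eq_sum_range (fun j => (ζ ^ b * (ζ ^ c)⁻¹) ^ j) K, geom_sum_eq h1]
  have : (ζ ^ b * (ζ ^ c)⁻¹) ^ K = 1 := by
    rw [mul_pow, inv_pow, ← pow_mul, ← pow_mul, mul_comm b, mul_comm c, pow_mul, pow_mul,
      hζ.pow_eq_one]
    simp
  rw [this]
  simp

lemma cauchy_aux (m n : ℕ) (a : (Fin n → ℕ) → ℂ) (r : Fin n → ℝ)
    (ha : ∀ z : Fin n → ℂ, (∀ i, ‖z i‖ = r i) → ‖mhEval n m a z‖ ≤ 1)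
    (hr : ∀ i, 0 ≤ r i)
    (α : Fin n → ℕ) (hα : α ∈ Finset.Nat.antidiagonalTuple n m) :
    ‖a α‖ * ∏ i, r i ^ α i ≤ 1 := by
  obtain ⟨ζ, hζ⟩ : ∃ ζ : ℂ, IsPrimitiveRoot ζ (m + 1) :=
    ⟨_, Complex.isPrimitiveRoot_exp (m + 1) (by omega)⟩
  have h0 : ζ ≠ 0 := hζ.ne_zero (by omega)
  have hn1 : ‖ζ‖ = 1 := hζ.norm'_eq_one (by omega)
  have hle : ∀ β ∈ Finset.Nat.antidiagonalTuple n m, ∀ i, β i < m + 1 := by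
    intro β hβ i
    rw [Finset.Nat.mem_antidiagonalTuple] at hβ
    have := Finset.single_le_sum (f := β) (fun _ _ => Nat.zero_le _) (Finset.mem_univ i)
    omega
  have key : ∑ k : Fin n → Fin (m + 1), mhEval n m a (fun i => (r i : ℂ) * ζ ^ (k i : ℕ)) *
      ∏ i, ((ζ ^ (k i : ℕ)) ^ α i)⁻¹
      = ((m + 1 : ℕ) : ℂ) ^ n * (a α * ∏ i, (r i : ℂ) ^ α i) := by
    unfold mhEval
    simp_rw [Finset.sum_mul]
    rw [Finset.sum_comm]
    have h : ∀ β : Fin n → ℕ, ∑ k : Fin n → Fin (m + 1),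
        (a β * ∏ i, ((r i : ℂ) * ζ ^ (k i : ℕ)) ^ β i) * ∏ i, ((ζ ^ (k i : ℕ)) ^ α i)⁻¹
        = (a β * ∏ i, (r i : ℂ) ^ β i) *
          ∏ i, ∑ j : Fin (m + 1), (ζ ^ (j : ℕ)) ^ β i * ((ζ ^ (j : ℕ)) ^ α i)⁻¹ := by
      intro β
      rw [Finset.prod_univ_sum, Fintype.piFinset_univ, Finset.mul_sum]
      refine Finset.sum_congr rfl fun k _ => ?_
      simp_rw [mul_pow, Finset.prod_mul_distrib]
      ring
    simp_rw [h]
    rw [Finset.sum_eq_single α]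
    · have : ∀ i, ∑ j : Fin (m + 1), (ζ ^ (j : ℕ)) ^ α i * ((ζ ^ (j : ℕ)) ^ α i)⁻¹
          = ((m + 1 : ℕ) : ℂ) := by
        intro i
        rw [Finset.sum_congr rfl (fun j _ => mul_inv_cancel₀ (pow_ne_zero _ (pow_ne_zero _ h0)))]
        simp
      simp_rw [this]
      rw [Finset.prod_const, Finset.card_univ, Fintype.card_fin]
      ring
    · intro β hβ hne
      obtain ⟨i, hi⟩ := Function.ne_iff.mp hne
      refine mul_eq_zero_of_right _ (Finset.prod_eq_zero (Finset.mem_univ i) ?_)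
      exact cauchy_aux_geom _ ζ hζ _ _ (hle β hβ i) (hle α hα i) hi
    · intro h; exact absurd hα h
  have hb : ‖((m + 1 : ℕ) : ℂ) ^ n * (a α * ∏ i, (r i : ℂ) ^ α i)‖ ≤ ((m + 1 : ℕ) : ℝ) ^ n := by
    rw [← key]
    refine (norm_sum_le _ _).trans ?_
    have : ∀ k ∈ (Finset.univ : Finset (Fin n → Fin (m + 1))),
        ‖mhEval n m a (fun i => (r i : ℂ) * ζ ^ (k i : ℕ)) *
          ∏ i, ((ζ ^ (k i : ℕ)) ^ α i)⁻¹‖ ≤ 1 := by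
      intro k _
      rw [norm_mul, norm_prod]
      simp only [norm_inv, norm_pow, hn1, one_pow, inv_one, Finset.prod_const_one, mul_one]
      apply ha
      intro i
      simp [hn1, abs_of_nonneg (hr i)]
    refine (Finset.sum_le_sum this).trans ?_
    simp
  have e : ‖((m + 1 : ℕ) : ℂ) ^ n * (a α * ∏ i, (r i : ℂ) ^ α i)‖
      = ((m + 1 : ℕ) : ℝ) ^ n * (‖a α‖ * ∏ i, r i ^ α i) := by
    rw [norm_mul, norm_mul, norm_pow, norm_prod, Complex.norm_natCast]
    congr 2
    refine Finset.prod_congr rfl fun i _ => ?_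
    rw [norm_pow, Complex.norm_real, Real.norm_of_nonneg (hr i)]
  rw [e] at hb
  have hp : (0 : ℝ) < ((m + 1 : ℕ) : ℝ) ^ n := by positivity
  exact le_of_mul_le_mul_left (by simpa using hb) hp

/-- Coefficient estimate for `m`-homogeneous polynomials on `ℓ_p^n`, `1 ≤ p ≤ 2`:
if `sup_{‖z‖_p ≤ 1} |P(z)| ≤ 1` then `|a_α| ≤ e^{m/p} · (m!/α!)^{1/p}`. -/
theorem coefficient_estimate_lp (p : ℝ) (hp1 : 1 ≤ p) (hp2 : p ≤ 2)
    (m n : ℕ) (hm : 0 < m) (hn : 0 < n) (a : (Fin n → ℕ) → ℂ)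
    (ha : ∀ z : Fin n → ℂ, (∑ i, ‖z i‖ ^ p) ^ (1 / p) ≤ 1 → ‖mhEval n m a z‖ ≤ 1)
    (α : Fin n → ℕ) (hα : α ∈ Finset.Nat.antidiagonalTuple n m) :
    ‖a α‖ ≤ Real.exp ((m : ℝ) / p) *
      ((Nat.factorial m : ℝ) / ∏ i, (Nat.factorial (α i) : ℝ)) ^ (1 / p) := by
  have hp0 : 0 < p := by linarith
  have hm0 : (0 : ℝ) < m := by exact_mod_cast hm
  have hs : ∑ i, α i = m := Finset.Nat.mem_antidiagonalTuple.mp hα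
  have h1 := cauchy_aux m n a (fun i => ((α i : ℝ) / m) ^ (1 / p)) (by
    intro z hz
    apply ha
    have : ∀ i, ‖z i‖ ^ p = (α i : ℝ) / m := by
      intro i
      rw [hz i, ← Real.rpow_mul (by positivity), one_div_mul_cancel hp0.ne', Real.rpow_one]
    simp_rw [this]
    rw [← Finset.sum_div, ← Nat.cast_sum, hs, div_self hm0.ne', Real.one_rpow])
    (fun i => by positivity) α hα
  have h2 : ∏ i, (((α i : ℝ) / m) ^ (1 / p)) ^ α i
      = (∏ i, ((α i : ℝ) / m) ^ α i) ^ (1 / p) := by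
    rw [← Real.finsetProd_rpow _ _ (fun i _ => by positivity)]
    refine Finset.prod_congr rfl fun i _ => ?_
    rw [← Real.rpow_natCast, ← Real.rpow_natCast, ← Real.rpow_mul (by positivity),
      ← Real.rpow_mul (by positivity), mul_comm]
  rw [h2] at h1
  set Q : ℝ := ∏ i, ((α i : ℝ) / m) ^ α i with hQ
  have hQpos : 0 < Q := by
    refine Finset.prod_pos fun i _ => ?_
    rcases Nat.eq_zero_or_pos (α i) with h | h
    · simp [h]
    · positivity
  have hF : (0 : ℝ) < ∏ i, (Nat.factorial (α i) : ℝ) :=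
    Finset.prod_pos fun i _ => by positivity
  have hQ2 : Q = (∏ i, (α i : ℝ) ^ α i) / (m : ℝ) ^ m := by
    rw [hQ]
    simp_rw [div_pow]
    rw [Finset.prod_div_distrib, Finset.prod_pow_eq_pow_sum, hs]
  have hFle : ∏ i, (Nat.factorial (α i) : ℝ) ≤ ∏ i, (α i : ℝ) ^ α i := by
    refine Finset.prod_le_prod (fun i _ => by positivity) fun i _ => ?_
    exact_mod_cast Nat.factorial_le_pow (α i)
  have hexp : (m : ℝ) ^ m ≤ Real.exp m * m.factorial := by
    have := Real.pow_div_factorial_le_exp (m : ℝ) hm0.le m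
    rwa [div_le_iff₀ (by positivity)] at this
  have hmain : 1 / Q ≤ Real.exp m * (m.factorial / ∏ i, (Nat.factorial (α i) : ℝ)) := by
    rw [hQ2, one_div_div, ← mul_div_assoc]
    exact div_le_div₀ (by positivity) hexp hF hFle
  have hE : Real.exp ((m : ℝ) / p) = (Real.exp m) ^ (1 / p) := by
    rw [← Real.exp_mul]; congr 1; ring
  rw [hE, ← Real.mul_rpow (by positivity) (by positivity)]
  calc ‖a α‖ ≤ 1 / Q ^ (1 / p) := by
        rw [le_div_iff₀ (by positivity)]; exact h1
    _ = (1 / Q) ^ (1 / p) := by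
        rw [Real.div_rpow (by norm_num) hQpos.le, Real.one_rpow]
    _ ≤ _ := Real.rpow_le_rpow (by positivity) hmain (by positivity)
end

section
/- There is a constant C > 0 such that for every 1 ≤ p ≤ ∞ and every integer n ≥ 2, one has (1/C) · (n / log n)^{1 - 1/min(p,2)} ≤ sup_m χ_mon(𝒫(^m ℓ_p^n))^{1/m} ≤ C · (n / log n)^{1 - 1/min(p,2)}, where the supremum is over all positive integers m. -/
open Finset
open scoped ENNReal

/-- The unconditional basis constant `χ_mon(𝒫(^m ℓ_p^n))` of the monomials in the space
of `m`-homogeneous polynomials on `ℓ_p^n`: the best constant `c` such that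
`sup_{z ∈ B} |∑ ε_α a_α z^α| ≤ c · sup_{z ∈ B} |∑ a_α z^α|` for all coefficients `a` and
all scalars `|ε_α| ≤ 1`, where `B` is the open unit ball of `ℓ_p^n`. -/
noncomputable def chiMon (p : ℝ≥0∞) (m n : ℕ) : ℝ :=
  sInf {c : ℝ | 0 ≤ c ∧ ∀ (a ε : (Fin n → ℕ) → ℂ), (∀ α, ‖ε α‖ ≤ 1) →
    ∀ z : Fin n → ℂ, pNorm p z < 1 →
      ‖mhEval n m (fun α => ε α * a α) z‖
        ≤ c * sSup {x : ℝ | ∃ w : Fin n → ℂ, pNorm p w < 1 ∧ x = ‖mhEval n m a w‖}}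


namespace ChiMonProof

/-- A point of the discrete torus of `N`-th roots of unity. -/
noncomputable def rt (N : ℕ) {n : ℕ} (θ : Fin n → Fin N) (i : Fin n) : ℂ :=
  Complex.exp (2 * Real.pi * Complex.I / N) ^ (θ i : ℕ)

lemma norm_zeta (N : ℕ) : ‖Complex.exp (2 * Real.pi * Complex.I / N)‖ = 1 := by
  have : (2 * Real.pi * Complex.I / N : ℂ) = ((2 * Real.pi / N : ℝ) : ℂ) * Complex.I := by
    push_cast; ring
  rw [this, Complex.norm_exp_ofReal_mul_I]

lemma norm_rt (N : ℕ) {n : ℕ} (θ : Fin n → Fin N) (i : Fin n) : ‖rt N θ i‖ = 1 := by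
  simp [rt, norm_zeta]

lemma orth1 (N : ℕ) (hN : N ≠ 0) (a b : ℕ) (ha : a < N) (hb : b < N) :
    ∑ j : Fin N, (Complex.exp (2 * Real.pi * Complex.I / N) ^ (j : ℕ)) ^ a *
      (starRingEnd ℂ) ((Complex.exp (2 * Real.pi * Complex.I / N) ^ (j : ℕ)) ^ b)
      = if a = b then (N : ℂ) else 0 := by
  have hprim := Complex.isPrimitiveRoot_exp N hN
  have hn := norm_zeta N
  set ζ := Complex.exp (2 * Real.pi * Complex.I / N) with hζ
  have hcc : (starRingEnd ℂ) ζ * ζ = 1 := by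
    rw [mul_comm, Complex.mul_conj, Complex.normSq_eq_norm_sq, hn]; simp
  set x : ℂ := ζ ^ a * (starRingEnd ℂ) ζ ^ b with hx
  have hterm : ∀ j : ℕ, (ζ ^ j) ^ a * (starRingEnd ℂ) ((ζ ^ j) ^ b) = x ^ j := by
    intro j
    rw [hx, map_pow, map_pow, mul_pow, ← pow_mul, ← pow_mul, ← pow_mul, ← pow_mul,
      mul_comm j a, mul_comm j b]
  simp only [hterm]
  rw [Fin.sum_univ_eq_sum_range (fun j => x ^ j) N]
  split_ifs with h
  · have : x = 1 := by
      rw [hx, h, ← mul_pow, mul_comm, hcc, one_pow]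
    simp [this]
  · have hx1 : x ≠ 1 := by
      intro h1
      apply h
      apply hprim.pow_inj ha hb
      calc ζ ^ a = ζ ^ a * ((starRingEnd ℂ) ζ * ζ) ^ b := by rw [hcc]; simp
        _ = x * ζ ^ b := by rw [hx, mul_pow]; ring
        _ = ζ ^ b := by rw [h1, one_mul]
    have hxN : x ^ N = 1 := by
      rw [hx, mul_pow, ← pow_mul, ← pow_mul, mul_comm a, mul_comm b, pow_mul, pow_mul,
        hprim.pow_eq_one, ← map_pow, hprim.pow_eq_one]; simp
    have := mul_geom_sum x N
    rw [hxN, sub_self, mul_eq_zero] at this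
    exact this.resolve_left (sub_ne_zero.2 hx1)

lemma parseval (n N : ℕ) (hN : N ≠ 0) (S : Finset (Fin n → ℕ))
    (hS : ∀ α ∈ S, ∀ i, α i < N) (c : (Fin n → ℕ) → ℂ) :
    ∑ θ : Fin n → Fin N, ‖∑ α ∈ S, c α * ∏ i, rt N θ i ^ α i‖ ^ 2
      = (N : ℝ) ^ n * ∑ α ∈ S, ‖c α‖ ^ 2 := by
  have key : ∀ α ∈ S, ∀ β ∈ S, ∑ θ : Fin n → Fin N, (∏ i, rt N θ i ^ α i) *
      (starRingEnd ℂ) (∏ i, rt N θ i ^ β i) = if α = β then (N : ℂ) ^ n else 0 := by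
    intro α hα β hβ
    have h1 : ∀ θ : Fin n → Fin N, (∏ i, rt N θ i ^ α i) *
      (starRingEnd ℂ) (∏ i, rt N θ i ^ β i) = ∏ i,
        ((Complex.exp (2 * Real.pi * Complex.I / N) ^ (θ i : ℕ)) ^ α i *
      (starRingEnd ℂ) ((Complex.exp (2 * Real.pi * Complex.I / N) ^ (θ i : ℕ)) ^ β i)) := by
      intro θ
      rw [map_prod, ← Finset.prod_mul_distrib]; rfl
    simp only [h1]
    rw [← Fintype.prod_sum (fun i (j : Fin N) =>
      ((Complex.exp (2 * Real.pi * Complex.I / N) ^ (j : ℕ)) ^ α i *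
      (starRingEnd ℂ) ((Complex.exp (2 * Real.pi * Complex.I / N) ^ (j : ℕ)) ^ β i)))]
    rw [Finset.prod_congr rfl (fun i _ => orth1 N hN (α i) (β i) (hS α hα i) (hS β hβ i))]
    split_ifs with h
    · subst h; simp
    · obtain ⟨i, hi⟩ := Function.ne_iff.1 h
      exact Finset.prod_eq_zero (Finset.mem_univ i) (by simp [hi])
  have h2 : (∑ θ : Fin n → Fin N, ((‖∑ α ∈ S, c α * ∏ i, rt N θ i ^ α i‖ ^ 2 : ℝ) : ℂ))
      = (N : ℂ) ^ n * ∑ α ∈ S, ((‖c α‖ ^ 2 : ℝ) : ℂ) := by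
    have h3 : ∀ θ : Fin n → Fin N, ((‖∑ α ∈ S, c α * ∏ i, rt N θ i ^ α i‖ ^ 2 : ℝ) : ℂ)
        = ∑ α ∈ S, ∑ β ∈ S, (c α * (starRingEnd ℂ) (c β)) * ((∏ i, rt N θ i ^ α i) *
      (starRingEnd ℂ) (∏ i, rt N θ i ^ β i)) := by
      intro θ
      rw [← Complex.normSq_eq_norm_sq, ← Complex.mul_conj, map_sum, Finset.sum_mul_sum]
      refine Finset.sum_congr rfl fun α _ => Finset.sum_congr rfl fun β _ => ?_
      rw [map_mul]; ring
    simp only [h3]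
    rw [Finset.sum_comm, Finset.mul_sum]
    refine Finset.sum_congr rfl fun α hα => ?_
    rw [Finset.sum_comm]
    calc _ = ∑ β ∈ S, (c α * (starRingEnd ℂ) (c β)) * (if α = β then (N : ℂ) ^ n else 0) := by
          refine Finset.sum_congr rfl fun β hβ => ?_
          rw [← Finset.mul_sum, key α hα β hβ]
      _ = _ := by
          simp only [mul_ite, mul_zero]
          rw [Finset.sum_ite_eq S α, if_pos hα, Complex.mul_conj, Complex.normSq_eq_norm_sq]
          ring
  exact_mod_cast h2

lemma le_of_mem_J {n m : ℕ} {α : Fin n → ℕ} (h : α ∈ Finset.Nat.antidiagonalTuple n m)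
    (i : Fin n) : α i ≤ m := by
  rw [Finset.Nat.mem_antidiagonalTuple] at h
  rw [← h]
  exact Finset.single_le_sum (f := α) (fun _ _ => Nat.zero_le _) (Finset.mem_univ i)

/-- coefficient estimate -/
lemma coeff_le (n k : ℕ) (c : (Fin n → ℕ) → ℂ) (r : Fin n → ℝ) (hr : ∀ i, 0 ≤ r i) (M : ℝ)
    (hM : ∀ ξ : Fin n → ℂ, (∀ i, ‖ξ i‖ = r i) → ‖mhEval n k c ξ‖ ≤ M)
    (β : Fin n → ℕ) (hβ : β ∈ Finset.Nat.antidiagonalTuple n k) :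
    ‖c β‖ * ∏ i, r i ^ β i ≤ M := by
  have hM0 : 0 ≤ M := (norm_nonneg _).trans (hM (fun i => (r i : ℂ)) (fun i => by simp [hr i]))
  have hp := parseval n (k+1) (Nat.succ_ne_zero _) (Finset.Nat.antidiagonalTuple n k)
    (fun α hα i => Nat.lt_succ_of_le (le_of_mem_J hα i)) (fun α => c α * ∏ i, (r i : ℂ) ^ α i)
  have h1 : ∀ θ : Fin n → Fin (k+1), ‖∑ α ∈ Finset.Nat.antidiagonalTuple n k,
      (c α * ∏ i, (r i : ℂ) ^ α i) * ∏ i, rt (k+1) θ i ^ α i‖ ^ 2 ≤ M ^ 2 := by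
    intro θ
    have := hM (fun i => (r i : ℂ) * rt (k+1) θ i) (fun i => by simp [norm_rt, abs_of_nonneg (hr i)])
    have e : mhEval n k c (fun i => (r i : ℂ) * rt (k+1) θ i) =
      ∑ α ∈ Finset.Nat.antidiagonalTuple n k,
      (c α * ∏ i, (r i : ℂ) ^ α i) * ∏ i, rt (k+1) θ i ^ α i := by
      unfold mhEval
      refine Finset.sum_congr rfl fun α _ => ?_
      simp only [mul_pow, Finset.prod_mul_distrib]; ring
    rw [e] at this
    gcongr
  have h2 := Finset.sum_le_sum (s := Finset.univ) fun θ _ => h1 θ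
  rw [hp] at h2
  simp only [Finset.sum_const, Finset.card_univ, Fintype.card_pi, Fintype.card_fin,
    Finset.prod_const, nsmul_eq_mul] at h2
  push_cast at h2
  have hpos : (0:ℝ) < ((k:ℝ)+1)^n := by positivity
  have h3 := le_of_mul_le_mul_left h2 hpos
  have h4 := (Finset.single_le_sum (f := fun α => ‖c α * ∏ i, (r i : ℂ) ^ α i‖ ^ 2)
    (fun _ _ => by positivity) hβ).trans h3
  have h5 : ‖c β * ∏ i, (r i : ℂ) ^ β i‖ ≤ M :=
    (le_abs_self _).trans (abs_le_of_sq_le_sq h4 hM0)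
  rw [norm_mul, norm_prod] at h5
  simpa [abs_of_nonneg (hr _)] using h5

lemma card_decomp (n k : ℕ) (γ : Fin n → ℕ) (hγ : γ ∈ Finset.Nat.antidiagonalTuple n (k + k)) :
    ((Finset.Nat.antidiagonalTuple n k ×ˢ Finset.Nat.antidiagonalTuple n k).filter
      (fun x => x.1 + x.2 = γ)).card ≤ 4 ^ k := by
  have h1 : ((Finset.Nat.antidiagonalTuple n k ×ˢ Finset.Nat.antidiagonalTuple n k).filter
      (fun x => x.1 + x.2 = γ)).card ≤ (Fintype.piFinset fun i => Finset.range (γ i + 1)).card := by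
    apply Finset.card_le_card_of_injOn (fun x => x.1)
    · intro x hx
      simp only [Finset.coe_filter, Set.mem_ofPred_eq] at hx
      simp only [Finset.mem_coe, Fintype.mem_piFinset, Finset.mem_range]
      intro i
      have := congrFun hx.2 i
      simp only [Pi.add_apply] at this
      omega
    · intro x hx y hy hxy
      simp only [Finset.coe_filter, Set.mem_ofPred_eq] at hx hy
      simp only at hxy
      refine Prod.ext hxy ?_
      have := hx.2.trans hy.2.symm
      rw [hxy] at this
      exact add_left_cancel this
  refine h1.trans ?_
  rw [Fintype.card_piFinset]
  simp only [Finset.card_range]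
  calc ∏ i, (γ i + 1) ≤ ∏ i, 2 ^ γ i := by
        apply Finset.prod_le_prod'
        intro i _
        exact Nat.lt_two_pow_self
    _ = 4 ^ k := by
        rw [Finset.prod_pow_eq_pow_sum, Finset.Nat.mem_antidiagonalTuple.1 hγ, ← two_mul, pow_mul]
        norm_num

lemma L4 (n k N : ℕ) (hN : k + k < N) (c : (Fin n → ℕ) → ℂ) :
    ∑ θ : Fin n → Fin N, ‖mhEval n k c (rt N θ)‖ ^ 4
      ≤ (N : ℝ) ^ n * (4 ^ k * (∑ α ∈ Finset.Nat.antidiagonalTuple n k, ‖c α‖ ^ 2) ^ 2) := by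
  set J := Finset.Nat.antidiagonalTuple n k with hJ
  set J2 := Finset.Nat.antidiagonalTuple n (k + k) with hJ2
  set d : (Fin n → ℕ) → ℂ := fun γ => ∑ x ∈ (J ×ˢ J).filter (fun x => x.1 + x.2 = γ),
    c x.1 * c x.2 with hd
  have hmaps : ∀ x ∈ J ×ˢ J, x.1 + x.2 ∈ J2 := by
    intro x hx
    rw [Finset.mem_product] at hx
    rw [hJ2, Finset.Nat.mem_antidiagonalTuple]
    simp only [Pi.add_apply, Finset.sum_add_distrib]
    rw [Finset.Nat.mem_antidiagonalTuple.1 hx.1, Finset.Nat.mem_antidiagonalTuple.1 hx.2]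
  have hsq : ∀ θ : Fin n → Fin N, ‖mhEval n k c (rt N θ)‖ ^ 4 =
      ‖∑ γ ∈ J2, d γ * ∏ i, rt N θ i ^ γ i‖ ^ 2 := by
    intro θ
    have : mhEval n k c (rt N θ) ^ 2 = ∑ γ ∈ J2, d γ * ∏ i, rt N θ i ^ γ i := by
      unfold mhEval
      rw [sq, Finset.sum_mul_sum, ← Finset.sum_product', ← Finset.sum_fiberwise_of_maps_to hmaps]
      refine Finset.sum_congr rfl fun γ _ => ?_
      rw [hd, Finset.sum_mul]
      refine Finset.sum_congr rfl fun x hx => ?_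
      rw [Finset.mem_filter] at hx
      rw [← hx.2]
      simp only [Pi.add_apply, pow_add, Finset.prod_mul_distrib]
      ring
    rw [← this, norm_pow]; ring
  simp only [hsq]
  rw [parseval n N (by omega) J2 (fun α hα i => lt_of_le_of_lt (le_of_mem_J hα i) hN)]
  gcongr
  calc ∑ γ ∈ J2, ‖d γ‖ ^ 2 ≤ ∑ γ ∈ J2, 4 ^ k * ∑ x ∈ (J ×ˢ J).filter (fun x => x.1 + x.2 = γ),
        ‖c x.1‖ ^ 2 * ‖c x.2‖ ^ 2 := by
        refine Finset.sum_le_sum fun γ hγ => ?_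
        have h1 : ‖d γ‖ ≤ ∑ x ∈ (J ×ˢ J).filter (fun x => x.1 + x.2 = γ), ‖c x.1‖ * ‖c x.2‖ := by
          refine (norm_sum_le _ _).trans (le_of_eq ?_)
          simp only [norm_mul]
        calc ‖d γ‖ ^ 2 ≤ (∑ x ∈ (J ×ˢ J).filter (fun x => x.1 + x.2 = γ), ‖c x.1‖ * ‖c x.2‖) ^ 2 := by
              gcongr
          _ ≤ _ := sq_sum_le_card_mul_sum_sq
          _ ≤ _ := by
              simp only [mul_pow]
              gcongr
              exact_mod_cast card_decomp n k γ hγ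
    _ = _ := by
        rw [← Finset.mul_sum, Finset.sum_fiberwise_of_maps_to hmaps
          (f := fun x => ‖c x.1‖ ^ 2 * ‖c x.2‖ ^ 2), Finset.sum_product, sq, Finset.sum_mul_sum]

/-- Discrete `L¹`-`L²` hypercontractivity. -/
lemma hyper (n k N : ℕ) (hN : k + k < N) (c : (Fin n → ℕ) → ℂ) :
    (N : ℝ) ^ n * Real.sqrt (∑ α ∈ Finset.Nat.antidiagonalTuple n k, ‖c α‖ ^ 2)
      ≤ 2 ^ k * ∑ θ : Fin n → Fin N, ‖mhEval n k c (rt N θ)‖ := by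
  have hP := parseval n N (by omega) (Finset.Nat.antidiagonalTuple n k)
    (fun α hα i => lt_of_le_of_lt (le_of_mem_J hα i) (by omega)) c
  have h4 := L4 n k N hN c
  change ∑ θ : Fin n → Fin N, ‖mhEval n k c (rt N θ)‖ ^ 2 = _ at hP
  set A := ∑ α ∈ Finset.Nat.antidiagonalTuple n k, ‖c α‖ ^ 2 with hA
  have hA0 : 0 ≤ A := Finset.sum_nonneg fun _ _ => by positivity
  set f : (Fin n → Fin N) → ℝ := fun θ => ‖mhEval n k c (rt N θ)‖ with hf
  have hf0 : ∀ θ, 0 ≤ f θ := fun θ => norm_nonneg _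
  change ∑ θ, f θ ^ 4 ≤ _ at h4
  change ∑ θ, f θ ^ 2 = _ at hP
  change _ ≤ 2 ^ k * ∑ θ, f θ
  set G : ℝ := (N : ℝ) ^ n with hG
  have hG0 : 0 < G := by
    have : 0 < N := by omega
    positivity
  set M1 := ∑ θ, f θ
  set M2 := ∑ θ, f θ ^ 2
  set M3 := ∑ θ, f θ ^ 3
  set M4 := ∑ θ, f θ ^ 4
  have hM1 : 0 ≤ M1 := Finset.sum_nonneg fun θ _ => hf0 θ
  have hM3 : 0 ≤ M3 := Finset.sum_nonneg fun θ _ => pow_nonneg (hf0 θ) _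
  have c1 : M2 ^ 2 ≤ M1 * M3 := by
    have := Finset.sum_mul_sq_le_sq_mul_sq Finset.univ (fun θ => Real.sqrt (f θ))
      (fun θ => Real.sqrt (f θ) * f θ)
    have e1 : ∀ θ, Real.sqrt (f θ) * (Real.sqrt (f θ) * f θ) = f θ ^ 2 := fun θ => by
      rw [← mul_assoc, Real.mul_self_sqrt (hf0 θ), sq]
    have e2 : ∀ θ, (Real.sqrt (f θ) * f θ) ^ 2 = f θ ^ 3 := fun θ => by
      rw [mul_pow, Real.sq_sqrt (hf0 θ)]; ring
    simpa only [e1, e2, Real.sq_sqrt (hf0 _)] using this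
  have c2 : M3 ^ 2 ≤ M2 * M4 := by
    have := Finset.sum_mul_sq_le_sq_mul_sq Finset.univ (fun θ => f θ) (fun θ => f θ ^ 2)
    have e1 : ∀ θ, f θ * f θ ^ 2 = f θ ^ 3 := fun θ => by ring
    have e2 : ∀ θ, (f θ ^ 2) ^ 2 = f θ ^ 4 := fun θ => by ring
    simpa only [e1, e2] using this
  rcases hA0.eq_or_lt with h0 | hApos
  · rw [← h0]; simp; positivity
  have hM2 : 0 < M2 := by rw [hP]; positivity
  have c3 : M2 ^ 4 ≤ M1 ^ 2 * (M2 * (G * (4 ^ k * A ^ 2))) := by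
    calc M2 ^ 4 = (M2 ^ 2) ^ 2 := by ring
      _ ≤ (M1 * M3) ^ 2 := by gcongr
      _ = M1 ^ 2 * M3 ^ 2 := by ring
      _ ≤ M1 ^ 2 * (M2 * M4) := by gcongr
      _ ≤ _ := by gcongr
  rw [hP] at c3
  have c4 : (G ^ 2 * A ^ 3) * (G ^ 2 * A) ≤ (G ^ 2 * A ^ 3) * (4 ^ k * M1 ^ 2) := by
    calc _ = (G * A) ^ 4 := by ring
      _ ≤ _ := c3
      _ = _ := by ring
  have c5 := le_of_mul_le_mul_left c4 (by positivity)
  have c6 : (G * Real.sqrt A) ^ 2 ≤ (2 ^ k * M1) ^ 2 := by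
    have e : ((2 : ℝ) ^ k) ^ 2 = 4 ^ k := by
      rw [← pow_mul, mul_comm k 2, pow_mul]; norm_num
    rw [mul_pow, Real.sq_sqrt hA0, mul_pow, e]
    exact c5
  exact (le_abs_self _).trans (abs_le_of_sq_le_sq c6 (by positivity))

lemma sum_shift {R : Type*} [CommSemiring R] (n k : ℕ) (i : Fin n) (F : (Fin n → ℕ) → R) :
    ∑ α ∈ Finset.Nat.antidiagonalTuple n (k + 1), (α i : R) * F α =
      ∑ β ∈ Finset.Nat.antidiagonalTuple n k, ((β i : R) + 1) * F (β + Pi.single i 1) := by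
  symm
  refine Finset.sum_of_injOn (fun β => β + Pi.single i 1) ?_ ?_ ?_ ?_
  · intro a _ b _ h
    exact add_right_cancel h
  · intro β hβ
    have := Finset.Nat.mem_antidiagonalTuple.1 hβ
    refine Finset.Nat.mem_antidiagonalTuple.2 ?_
    simp [Finset.sum_add_distrib, this]
  · intro α hα hn
    have h0 : α i = 0 := by
      by_contra h
      apply hn
      refine ⟨α - Pi.single i 1, ?_, ?_⟩
      · have h1 := Finset.Nat.mem_antidiagonalTuple.1 hα
        refine Finset.Nat.mem_antidiagonalTuple.2 ?_
        have h2 : α - Pi.single i 1 + Pi.single i 1 = α := by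
          ext j
          by_cases hj : j = i
          · subst hj; simp; omega
          · simp [hj]
        have h3 : ∑ j, (α - Pi.single i 1 + Pi.single i 1 : Fin n → ℕ) j = k + 1 := by rw [h2]; exact h1
        simp only [Pi.add_apply, Finset.sum_add_distrib] at h3
        simp at h3
        simpa using h3
      · ext j
        by_cases hj : j = i
        · subst hj; simp; omega
        · simp [hj]
    simp [h0]
  · intro β _
    simp

/-- coefficients of the directional derivative -/
noncomputable def dcoef {n : ℕ} (a : (Fin n → ℕ) → ℂ) (w : Fin n → ℂ) (β : Fin n → ℕ) : ℂ :=
  ∑ i, w i * (((β i : ℂ) + 1) * a (β + Pi.single i 1))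

lemma hasDerivAt_mhEval (n k : ℕ) (a : (Fin n → ℕ) → ℂ) (z w : Fin n → ℂ) :
    HasDerivAt (fun t : ℂ => mhEval n (k + 1) a (fun i => z i + t * w i))
      (mhEval n k (dcoef a w) z) 0 := by
  have h1 : ∀ α : Fin n → ℕ, HasDerivAt (fun t : ℂ => a α * ∏ i, (z i + t * w i) ^ α i)
      (a α * ∑ i, (∏ j ∈ Finset.univ.erase i, z j ^ α j) * ((α i : ℂ) * z i ^ (α i - 1) * w i)) 0 := by
    intro α
    have h2 : ∀ i ∈ Finset.univ, HasDerivAt (fun t : ℂ => (z i + t * w i) ^ α i)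
        ((α i : ℂ) * z i ^ (α i - 1) * w i) 0 := by
      intro i _
      have h3 : HasDerivAt (fun t : ℂ => z i + t * w i) (w i) 0 := by
        simpa using ((hasDerivAt_id (0:ℂ)).mul_const (w i)).const_add (z i)
      simpa using h3.fun_pow (α i)
    have h4 := (HasDerivAt.fun_finsetProd h2).const_mul (a α)
    simpa [smul_eq_mul] using h4
  have h5 := HasDerivAt.fun_sum (u := Finset.Nat.antidiagonalTuple n (k+1)) (fun α _ => h1 α)
  unfold mhEval
  refine h5.congr_deriv (Eq.symm ?_)
  simp only [dcoef]
  calc ∑ β ∈ Finset.Nat.antidiagonalTuple n k,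
        (∑ i, w i * (((β i : ℂ) + 1) * a (β + Pi.single i 1))) * ∏ i, z i ^ β i
      = ∑ i, ∑ β ∈ Finset.Nat.antidiagonalTuple n k,
        ((β i : ℂ) + 1) * ((fun α : Fin n → ℕ => a α * w i * z i ^ (α i - 1) *
          ∏ j ∈ Finset.univ.erase i, z j ^ α j) (β + Pi.single i 1)) := by
        rw [Finset.sum_comm]
        refine Finset.sum_congr rfl fun β _ => ?_
        rw [Finset.sum_mul]
        refine Finset.sum_congr rfl fun i _ => ?_
        have e : ∏ j ∈ Finset.univ.erase i, z j ^ (β + Pi.single i 1 : Fin n → ℕ) j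
            = ∏ j ∈ Finset.univ.erase i, z j ^ β j := by
          refine Finset.prod_congr rfl fun j hj => ?_
          have := Finset.ne_of_mem_erase hj
          simp [this]
        beta_reduce
        rw [e, ← Finset.mul_prod_erase Finset.univ (fun j => z j ^ β j) (Finset.mem_univ i)]
        simp
        ring
    _ = _ := by
        rw [Finset.sum_congr rfl fun i _ => (sum_shift n k i (fun α : Fin n → ℕ =>
          a α * w i * z i ^ (α i - 1) * ∏ j ∈ Finset.univ.erase i, z j ^ α j)).symm]
        rw [Finset.sum_comm]
        refine Finset.sum_congr rfl fun α _ => ?_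
        rw [Finset.mul_sum]
        refine Finset.sum_congr rfl fun i _ => ?_
        ring

lemma deriv_bound (n k : ℕ) (a : (Fin n → ℕ) → ℂ) (z w : Fin n → ℂ) (M : ℝ)
    (hM : ∀ t : ℂ, ‖t‖ = 1 / ((k : ℝ) + 1) → ‖mhEval n (k + 1) a (fun i => z i + t * w i)‖ ≤ M) :
    ‖mhEval n k (dcoef a w) z‖ ≤ ((k : ℝ) + 1) * M := by
  rw [← (hasDerivAt_mhEval n k a z w).deriv]
  have hR : (0 : ℝ) < 1 / ((k : ℝ) + 1) := by positivity
  have hd : Differentiable ℂ (fun t : ℂ => mhEval n (k + 1) a (fun i => z i + t * w i)) := by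
    unfold mhEval
    fun_prop
  have := Complex.norm_deriv_le_of_forall_mem_sphere_norm_le (c := 0) (C := M) hR hd.diffContOnCl
    (fun t ht => hM t (by simpa using ht))
  refine this.trans (le_of_eq ?_)
  field_simp

lemma mhEval_smul (n m : ℕ) (a : (Fin n → ℕ) → ℂ) (z : Fin n → ℂ) (l : ℂ) :
    mhEval n m a (fun i => l * z i) = l ^ m * mhEval n m a z := by
  unfold mhEval
  rw [Finset.mul_sum]
  refine Finset.sum_congr rfl fun α hα => ?_
  simp only [mul_pow, Finset.prod_mul_distrib]
  rw [Finset.prod_pow_eq_pow_sum, Finset.Nat.mem_antidiagonalTuple.1 hα]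
  ring

lemma exp_bound (k : ℕ) : (1 + 1 / ((k : ℝ) + 1)) ^ (k + 1) ≤ Real.exp 1 := by
  have h := Real.add_one_le_exp (1 / ((k : ℝ) + 1))
  calc (1 + 1 / ((k : ℝ) + 1)) ^ (k + 1) ≤ (Real.exp (1 / ((k : ℝ) + 1))) ^ (k + 1) := by
        gcongr; linarith
    _ = Real.exp 1 := by
        rw [← Real.exp_nat_mul]; congr 1; push_cast; field_simp

/-- derivative estimate, from a bound on the scaled points -/
lemma deriv_bound' (n k : ℕ) (a : (Fin n → ℕ) → ℂ) (z w : Fin n → ℂ) (S : ℝ)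
    (hS : ∀ t : ℂ, ‖t‖ = 1 / ((k : ℝ) + 1) → ‖mhEval n (k + 1) a
      (fun i => ((1 + 1 / ((k : ℝ) + 1) : ℝ) : ℂ)⁻¹ * (z i + t * w i))‖ ≤ S) :
    ‖mhEval n k (dcoef a w) z‖ ≤ ((k : ℝ) + 1) * (Real.exp 1 * S) := by
  apply deriv_bound
  intro t ht
  have h := hS t ht
  have hS0 : 0 ≤ S := (norm_nonneg _).trans h
  set q : ℝ := 1 + 1 / ((k : ℝ) + 1) with hq
  have hq0 : 0 < q := by positivity
  rw [mhEval_smul, norm_mul, norm_pow, norm_inv, Complex.norm_real, Real.norm_eq_abs,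
    abs_of_pos hq0, inv_pow, inv_mul_le_iff₀ (by positivity)] at h
  refine h.trans ?_
  gcongr
  exact exp_bound k

/-- phase -/
lemma exists_phase (x : ℂ) : ∃ u : ℂ, ‖u‖ ≤ 1 ∧ u * x = (‖x‖ : ℂ) := by
  by_cases hx : x = 0
  · exact ⟨0, by simp, by simp [hx]⟩
  · refine ⟨(starRingEnd ℂ) x / ‖x‖, ?_, ?_⟩
    · have : ‖x‖ ≠ 0 := by simpa using hx
      simp [this]
    · have : (‖x‖ : ℂ) ≠ 0 := by simpa using hx
      rw [div_mul_eq_mul_div, mul_comm, Complex.mul_conj, Complex.normSq_eq_norm_sq]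
      push_cast
      field_simp

lemma pNorm_eq (p : ℝ≥0∞) (hp : 1 ≤ p) {n : ℕ} (z : Fin n → ℂ) :
    pNorm p z = ‖WithLp.toLp p z‖ := by
  unfold pNorm
  split_ifs with h
  · subst h
    rw [PiLp.norm_eq_ciSup]
  · rw [PiLp.norm_eq_sum (ENNReal.toReal_pos (by positivity) h)]

lemma pNorm_add_le (p : ℝ≥0∞) (hp : 1 ≤ p) {n : ℕ} (z w : Fin n → ℂ) :
    pNorm p (fun i => z i + w i) ≤ pNorm p z + pNorm p w := by
  have : Fact (1 ≤ p) := ⟨hp⟩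
  rw [pNorm_eq p hp, pNorm_eq p hp, pNorm_eq p hp]
  exact norm_add_le (WithLp.toLp p z) (WithLp.toLp p w)

lemma pNorm_smul (p : ℝ≥0∞) (hp : 1 ≤ p) {n : ℕ} (c : ℂ) (z : Fin n → ℂ) :
    pNorm p (fun i => c * z i) = ‖c‖ * pNorm p z := by
  have : Fact (1 ≤ p) := ⟨hp⟩
  rw [pNorm_eq p hp, pNorm_eq p hp]
  exact norm_smul c (WithLp.toLp p z)

lemma pNorm_nonneg (p : ℝ≥0∞) (hp : 1 ≤ p) {n : ℕ} (z : Fin n → ℂ) : 0 ≤ pNorm p z := by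
  have : Fact (1 ≤ p) := ⟨hp⟩
  rw [pNorm_eq p hp]; exact norm_nonneg _

lemma norm_le_pNorm (p : ℝ≥0∞) (hp : 1 ≤ p) {n : ℕ} (z : Fin n → ℂ) (i : Fin n) :
    ‖z i‖ ≤ pNorm p z := by
  have : Fact (1 ≤ p) := ⟨hp⟩
  rw [pNorm_eq p hp]; exact PiLp.norm_apply_le (WithLp.toLp p z) i

lemma pNorm_zero (p : ℝ≥0∞) (hp : 1 ≤ p) {n : ℕ} : pNorm p (fun _ : Fin n => (0:ℂ)) = 0 := by
  have : Fact (1 ≤ p) := ⟨hp⟩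
  rw [pNorm_eq p hp]
  exact norm_zero (E := PiLp p fun _ : Fin n => ℂ)

lemma pNorm_mono (p : ℝ≥0∞) {n : ℕ} (z w : Fin n → ℂ) (h : ∀ i, ‖z i‖ ≤ ‖w i‖) :
    pNorm p z ≤ pNorm p w := by
  unfold pNorm
  split_ifs with hp
  · exact ciSup_mono (Set.finite_range _).bddAbove h
  · gcongr with i
    exact h i

lemma mhEval_dcoef (n k : ℕ) (a : (Fin n → ℕ) → ℂ) (z w : Fin n → ℂ) :
    mhEval n k (dcoef a w) z =
      ∑ i, w i * mhEval n k (fun β => ((β i : ℂ) + 1) * a (β + Pi.single i 1)) z := by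
  simp only [mhEval, dcoef, Finset.mul_sum, Finset.sum_mul]
  rw [Finset.sum_comm]
  refine Finset.sum_congr rfl fun i _ => Finset.sum_congr rfl fun β _ => ?_
  ring

lemma sum_euler (n k : ℕ) (F : (Fin n → ℕ) → ℝ) :
    ((k : ℝ) + 1) * ∑ α ∈ Finset.Nat.antidiagonalTuple n (k + 1), F α =
      ∑ i, ∑ β ∈ Finset.Nat.antidiagonalTuple n k, ((β i : ℝ) + 1) * F (β + Pi.single i 1) := by
  simp only [← sum_shift]
  rw [Finset.sum_comm, Finset.mul_sum]
  refine Finset.sum_congr rfl fun α hα => ?_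
  rw [← Finset.sum_mul]
  congr 1
  have := Finset.Nat.mem_antidiagonalTuple.1 hα
  exact_mod_cast this.symm

lemma upper_inf (n k : ℕ) (a : (Fin n → ℕ) → ℂ) (S : ℝ)
    (hS : ∀ z : Fin n → ℂ, (∀ i, ‖z i‖ ≤ 1) → ‖mhEval n (k + 1) a z‖ ≤ S) :
    ∑ α ∈ Finset.Nat.antidiagonalTuple n (k + 1), ‖a α‖ ≤
      2 ^ k * Real.exp 1 * Real.sqrt (#(Finset.Nat.antidiagonalTuple n k)) * S := by
  set J := Finset.Nat.antidiagonalTuple n k with hJ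
  set b : Fin n → (Fin n → ℕ) → ℂ := fun i β => ((β i : ℂ) + 1) * a (β + Pi.single i 1) with hb
  set N := k + k + 1 with hN
  set G : ℝ := (N : ℝ) ^ n with hG
  have hG0 : 0 < G := by positivity
  have h1 : ((k : ℝ) + 1) * ∑ α ∈ Finset.Nat.antidiagonalTuple n (k + 1), ‖a α‖ =
      ∑ i, ∑ β ∈ J, ‖b i β‖ := by
    rw [sum_euler]
    refine Finset.sum_congr rfl fun i _ => Finset.sum_congr rfl fun β _ => ?_
    rw [hb, norm_mul]
    congr 1
    have : ((β i : ℂ) + 1) = ((β i + 1 : ℕ) : ℂ) := by push_cast; rfl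
    rw [this, Complex.norm_natCast]; push_cast; rfl
  have h2 : ∀ i, ∑ β ∈ J, ‖b i β‖ ≤ Real.sqrt (#J) * Real.sqrt (∑ β ∈ J, ‖b i β‖ ^ 2) := by
    intro i
    rw [← Real.sqrt_mul (by positivity)]
    exact Real.le_sqrt_of_sq_le sq_sum_le_card_mul_sum_sq
  have h3 : ∀ i, G * ∑ β ∈ J, ‖b i β‖ ≤ Real.sqrt (#J) * (2 ^ k *
      ∑ θ : Fin n → Fin N, ‖mhEval n k (b i) (rt N θ)‖) := by
    intro i
    calc G * ∑ β ∈ J, ‖b i β‖ ≤ G * (Real.sqrt (#J) * Real.sqrt (∑ β ∈ J, ‖b i β‖ ^ 2)) := by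
          gcongr; exact h2 i
      _ = Real.sqrt (#J) * (G * Real.sqrt (∑ β ∈ J, ‖b i β‖ ^ 2)) := by ring
      _ ≤ _ := by
          exact mul_le_mul_of_nonneg_left (hyper n k N (by omega) (b i)) (Real.sqrt_nonneg _)
  have h4 : ∀ θ : Fin n → Fin N, ∑ i, ‖mhEval n k (b i) (rt N θ)‖ ≤
      ((k : ℝ) + 1) * (Real.exp 1 * S) := by
    intro θ
    choose w hw1 hw2 using fun i => exists_phase (mhEval n k (b i) (rt N θ))
    have e : mhEval n k (dcoef a w) (rt N θ) = ((∑ i, ‖mhEval n k (b i) (rt N θ)‖ : ℝ) : ℂ) := by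
      rw [mhEval_dcoef]
      push_cast
      exact Finset.sum_congr rfl fun i _ => hw2 i
    have h5 := deriv_bound' n k a (rt N θ) w S (by
      intro t ht
      apply hS
      intro i
      have hq0 : (0:ℝ) < 1 + 1 / ((k : ℝ) + 1) := by positivity
      rw [norm_mul, norm_inv, Complex.norm_real, Real.norm_eq_abs, abs_of_pos hq0,
        inv_mul_le_iff₀ hq0, mul_one]
      refine (norm_add_le _ _).trans ?_
      rw [norm_rt, norm_mul, ht]
      have : (0:ℝ) ≤ 1 / ((k : ℝ) + 1) := by positivity
      nlinarith [hw1 i])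
    rw [e, Complex.norm_real, Real.norm_eq_abs] at h5
    exact (le_abs_self _).trans h5
  have h6 : G * (((k : ℝ) + 1) * ∑ α ∈ Finset.Nat.antidiagonalTuple n (k + 1), ‖a α‖) ≤
      G * (((k : ℝ) + 1) * (2 ^ k * Real.exp 1 * Real.sqrt (#J) * S)) := by
    rw [h1, Finset.mul_sum]
    calc ∑ i, G * ∑ β ∈ J, ‖b i β‖ ≤ ∑ i, Real.sqrt (#J) * (2 ^ k *
          ∑ θ : Fin n → Fin N, ‖mhEval n k (b i) (rt N θ)‖) := Finset.sum_le_sum fun i _ => h3 i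
      _ = Real.sqrt (#J) * (2 ^ k * ∑ θ : Fin n → Fin N, ∑ i, ‖mhEval n k (b i) (rt N θ)‖) := by
          rw [← Finset.mul_sum, ← Finset.mul_sum, Finset.sum_comm]
      _ ≤ Real.sqrt (#J) * (2 ^ k * ∑ θ : Fin n → Fin N, ((k : ℝ) + 1) * (Real.exp 1 * S)) := by
          gcongr with θ
          exact h4 θ
      _ = _ := by
          simp only [Finset.sum_const, Finset.card_univ, Fintype.card_pi, Fintype.card_fin,
            Finset.prod_const, nsmul_eq_mul]
          push_cast
          rw [hG]
          ring
  have h7 := le_of_mul_le_mul_left h6 hG0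
  exact le_of_mul_le_mul_left h7 (by positivity)

lemma mult_prod (n k : ℕ) (β : Fin n → ℕ) (hβ : β ∈ Finset.Nat.antidiagonalTuple n k) :
    1 ≤ Real.exp k * (Nat.multinomial Finset.univ β : ℝ) * ∏ i, ((β i : ℝ) / k) ^ β i := by
  have hs := Finset.Nat.mem_antidiagonalTuple.1 hβ
  have h1 := Nat.multinomial_spec Finset.univ β
  rw [hs] at h1
  have h1' : (∏ i, ((β i).factorial : ℝ)) * (Nat.multinomial Finset.univ β : ℝ) = k.factorial := by
    exact_mod_cast h1
  have h2 := Real.pow_div_factorial_le_exp (k : ℝ) (by positivity) k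
  rw [div_le_iff₀ (by positivity)] at h2
  have h3 : ∏ i, ((β i : ℝ) / k) ^ β i = (∏ i, (β i : ℝ) ^ β i) / (k : ℝ) ^ k := by
    simp only [div_pow, Finset.prod_div_distrib]
    rw [Finset.prod_pow_eq_pow_sum, hs]
  have h4 : ∏ i, ((β i).factorial : ℝ) ≤ ∏ i, (β i : ℝ) ^ β i := by
    apply Finset.prod_le_prod
    · intro i _; positivity
    · intro i _; exact_mod_cast Nat.factorial_le_pow (β i)
  have h5 : (0 : ℝ) < (k : ℝ) ^ k := by
    rcases Nat.eq_zero_or_pos k with h | h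
    · subst h; simp
    · positivity
  rw [h3, ← mul_div_assoc, le_div_iff₀ h5, one_mul]
  refine h2.trans ?_
  rw [← h1', mul_assoc]
  rw [mul_comm (∏ i, ((β i).factorial : ℝ))]
  gcongr

lemma upper_p (p : ℝ≥0∞) (hp : 1 ≤ p) (hpt : p ≠ ∞) (n k : ℕ) (a : (Fin n → ℕ) → ℂ) (S : ℝ)
    (hS : ∀ z : Fin n → ℂ, pNorm p z < 1 → ‖mhEval n (k + 1) a z‖ ≤ S)
    (u : Fin n → ℂ) (hu : pNorm p u < 1) :
    ∑ α ∈ Finset.Nat.antidiagonalTuple n (k + 1), ‖a α‖ * ∏ i, ‖u i‖ ^ α i ≤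
      Real.exp k * Real.exp 1 *
        (#(Finset.Nat.antidiagonalTuple n k) : ℝ) ^ (1 - 1 / p.toReal) * S := by
  set J := Finset.Nat.antidiagonalTuple n k with hJ
  set q := p.toReal with hq
  have hq1 : 1 ≤ q := by
    rw [hq, ← ENNReal.toReal_one]; exact (ENNReal.toReal_le_toReal (by simp) hpt).2 hp
  have hq0 : 0 < q := by linarith
  have hS0 : 0 ≤ S := (norm_nonneg _).trans (hS (fun _ => 0) (by rw [pNorm_zero p hp]; norm_num))
  set b : Fin n → (Fin n → ℕ) → ℂ := fun i β => ((β i : ℂ) + 1) * a (β + Pi.single i 1) with hb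
  have hbn : ∀ i β, ‖b i β‖ = ((β i : ℝ) + 1) * ‖a (β + Pi.single i 1)‖ := by
    intro i β
    rw [hb, norm_mul]
    congr 1
    have : ((β i : ℂ) + 1) = ((β i + 1 : ℕ) : ℂ) := by push_cast; rfl
    rw [this, Complex.norm_natCast]; push_cast; rfl
  set Dβ : (Fin n → ℕ) → ℝ := fun β => ∑ i, ‖u i‖ * ‖b i β‖ with hD
  have h1 : ((k : ℝ) + 1) * ∑ α ∈ Finset.Nat.antidiagonalTuple n (k + 1),
      ‖a α‖ * ∏ i, ‖u i‖ ^ α i = ∑ β ∈ J, Dβ β * ∏ i, ‖u i‖ ^ β i := by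
    rw [sum_euler, Finset.sum_comm]
    refine Finset.sum_congr rfl fun β _ => ?_
    rw [hD, Finset.sum_mul]
    refine Finset.sum_congr rfl fun i _ => ?_
    rw [hbn]
    have : ∏ j, ‖u j‖ ^ ((β + Pi.single i 1 : Fin n → ℕ) j) = ‖u i‖ * ∏ j, ‖u j‖ ^ β j := by
      simp only [Pi.add_apply, pow_add, Finset.prod_mul_distrib]
      rw [mul_comm]
      congr 1
      rw [Finset.prod_eq_single i]
      · simp
      · intro j _ hj; simp [hj]
      · simp
    rw [this]; ring
  -- bound on D
  have h2 : ∀ β ∈ J, Dβ β ≤ ((k : ℝ) + 1) * (Real.exp 1 * S) *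
      (Real.exp k * (Nat.multinomial Finset.univ β : ℝ)) ^ (1 / q) := by
    intro β hβ
    have hs := Finset.Nat.mem_antidiagonalTuple.1 hβ
    set r : Fin n → ℝ := fun i => ((β i : ℝ) / k) ^ (1 / q) with hr
    have hr0 : ∀ i, 0 ≤ r i := fun i => by positivity
    choose ph hph1 hph2 using fun i => exists_phase (b i β)
    set w : Fin n → ℂ := fun i => ‖u i‖ * ph i with hw
    have hwn : pNorm p w < 1 := by
      refine lt_of_le_of_lt (pNorm_mono p w u fun i => ?_) hu
      rw [hw]; simp only [norm_mul, Complex.norm_real, norm_norm]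
      exact mul_le_of_le_one_right (norm_nonneg _) (hph1 i)
    have hdc : dcoef a w β = (Dβ β : ℂ) := by
      rw [hD]; simp only [dcoef, hw]
      push_cast
      refine Finset.sum_congr rfl fun i _ => ?_
      rw [mul_assoc]; congr 1
      exact hph2 i
    have h3 := coeff_le n k (dcoef a w) r hr0 (((k : ℝ) + 1) * (Real.exp 1 * S)) (by
      intro ξ hξ
      apply deriv_bound'
      intro t ht
      apply hS
      have hq0 : (0:ℝ) < 1 + 1 / ((k : ℝ) + 1) := by positivity
      rw [pNorm_smul p hp, norm_inv, Complex.norm_real, Real.norm_eq_abs, abs_of_pos hq0,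
        inv_mul_lt_iff₀ hq0, mul_one]
      refine lt_of_le_of_lt (pNorm_add_le p hp ξ (fun i => t * w i)) ?_
      rw [pNorm_smul p hp, ht]
      have hξ1 : pNorm p ξ ≤ 1 := by
        unfold pNorm
        rw [if_neg hpt]
        apply Real.rpow_le_one (Finset.sum_nonneg fun i _ => by positivity) _ (by positivity)
        simp only [hξ]
        have e : ∀ i, (r i) ^ p.toReal = (β i : ℝ) / k := by
          intro i
          rw [hr]; simp only
          rw [← Real.rpow_mul (by positivity), ← hq, one_div_mul_cancel (by positivity), Real.rpow_one]
        simp only [e]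
        rw [← Finset.sum_div]
        have : (∑ i, (β i : ℝ)) = k := by exact_mod_cast hs
        rw [this]
        exact div_self_le_one _
      have hpos : (0:ℝ) < 1 / ((k : ℝ) + 1) := by positivity
      nlinarith) β hβ
    rw [hdc, Complex.norm_real, Real.norm_eq_abs] at h3
    have h4 : ∏ i, r i ^ β i = (∏ i, ((β i : ℝ) / k) ^ β i) ^ (1 / q) := by
      rw [← Real.finsetProd_rpow _ _ (fun i _ => by positivity)]
      refine Finset.prod_congr rfl fun i _ => ?_
      rw [hr]; simp only
      rw [← Real.rpow_natCast, ← Real.rpow_mul (by positivity), mul_comm, Real.rpow_mul (by positivity),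
        Real.rpow_natCast]
    rw [h4] at h3
    have h5 := mult_prod n k β hβ
    set X := ∏ i, ((β i : ℝ) / k) ^ β i
    have hX0 : 0 ≤ X := Finset.prod_nonneg fun i _ => by positivity
    set Y := Real.exp k * (Nat.multinomial Finset.univ β : ℝ) with hY
    have hY0 : 0 ≤ Y := by positivity
    have h6 : 1 ≤ X ^ (1/q) * Y ^ (1/q) := by
      rw [← Real.mul_rpow hX0 hY0]
      apply Real.one_le_rpow _ (by positivity)
      linarith
    have hD0 : 0 ≤ |Dβ β| := abs_nonneg _
    calc Dβ β ≤ |Dβ β| := le_abs_self _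
      _ ≤ |Dβ β| * (X ^ (1/q) * Y ^ (1/q)) := le_mul_of_one_le_right hD0 h6
      _ = (|Dβ β| * X ^ (1/q)) * Y ^ (1/q) := by ring
      _ ≤ _ := by gcongr
  -- Hölder
  set x : (Fin n → ℕ) → ℝ := fun β => (Nat.multinomial Finset.univ β : ℝ) ^ (1 / q) *
    ∏ i, ‖u i‖ ^ β i with hx
  have hx0 : ∀ β, 0 ≤ x β := fun β => by positivity
  have h7 : ∑ β ∈ J, x β ^ q ≤ 1 := by
    have e : ∀ β, x β ^ q = (Nat.multinomial Finset.univ β : ℝ) * ∏ i, (‖u i‖ ^ q) ^ β i := by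
      intro β
      rw [hx]; simp only
      rw [Real.mul_rpow (by positivity) (by positivity), ← Real.rpow_mul (by positivity),
        one_div_mul_cancel (by positivity), Real.rpow_one,
        ← Real.finsetProd_rpow _ _ (fun i _ => by positivity)]
      congr 1
      refine Finset.prod_congr rfl fun i _ => ?_
      rw [← Real.rpow_natCast, ← Real.rpow_natCast, ← Real.rpow_mul (by positivity),
        ← Real.rpow_mul (by positivity), mul_comm]
    simp only [e]
    rw [hJ, ← Finset.piAntidiag_univ_fin_eq_antidiagonalTuple, ← Finset.sum_pow_eq_sum_piAntidiag]
    have h0 : 0 ≤ ∑ i, ‖u i‖ ^ q := Finset.sum_nonneg fun i _ => by positivity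
    apply pow_le_one₀ h0
    unfold pNorm at hu
    rw [if_neg hpt] at hu
    by_contra hc
    push Not at hc
    have := Real.one_le_rpow hc.le (z := 1 / q) (by positivity)
    linarith
  have h8 : ∑ β ∈ J, x β ≤ (#J : ℝ) ^ (1 - 1 / q) := by
    have := Real.rpow_sum_le_const_mul_sum_rpow J x hq1
    simp only [abs_of_nonneg (hx0 _)] at this
    have h9 : (∑ β ∈ J, x β) ^ q ≤ (#J : ℝ) ^ (q - 1) :=
      this.trans (mul_le_of_le_one_right (by positivity) h7)
    have hs0 : 0 ≤ ∑ β ∈ J, x β := Finset.sum_nonneg fun β _ => hx0 β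
    calc ∑ β ∈ J, x β = ((∑ β ∈ J, x β) ^ q) ^ (1 / q) := by
          rw [← Real.rpow_mul hs0, mul_one_div_cancel (by positivity), Real.rpow_one]
      _ ≤ ((#J : ℝ) ^ (q - 1)) ^ (1 / q) := by gcongr
      _ = _ := by
          rw [← Real.rpow_mul (by positivity)]
          congr 1; field_simp
  have h10 : (Real.exp k) ^ (1 / q) ≤ Real.exp k := by
    apply Real.rpow_le_self_of_one_le
    · exact Real.one_le_exp (by positivity)
    · rw [div_le_one hq0]; exact hq1
  have h11 : ((k : ℝ) + 1) * ∑ α ∈ Finset.Nat.antidiagonalTuple n (k + 1),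
      ‖a α‖ * ∏ i, ‖u i‖ ^ α i ≤ ((k : ℝ) + 1) * (Real.exp k * Real.exp 1 *
        (#J : ℝ) ^ (1 - 1 / q) * S) := by
    rw [h1]
    calc ∑ β ∈ J, Dβ β * ∏ i, ‖u i‖ ^ β i ≤ ∑ β ∈ J, (((k : ℝ) + 1) * (Real.exp 1 * S) *
      (Real.exp k * (Nat.multinomial Finset.univ β : ℝ)) ^ (1 / q)) * ∏ i, ‖u i‖ ^ β i := by
          refine Finset.sum_le_sum fun β hβ => ?_
          have := h2 β hβ
          gcongr
      _ = ((k : ℝ) + 1) * (Real.exp 1 * S) * (Real.exp k) ^ (1 / q) * ∑ β ∈ J, x β := by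
          rw [Finset.mul_sum]
          refine Finset.sum_congr rfl fun β _ => ?_
          rw [Real.mul_rpow (by positivity) (by positivity), hx]; ring
      _ ≤ ((k : ℝ) + 1) * (Real.exp 1 * S) * Real.exp k * (#J : ℝ) ^ (1 - 1 / q) := by
          gcongr
      _ = _ := by ring
  exact le_of_mul_le_mul_left h11 (by positivity)

/-- The admissible constants in the definition of `chiMon`. -/
def chiSet (p : ℝ≥0∞) (m n : ℕ) : Set ℝ :=
  {c : ℝ | 0 ≤ c ∧ ∀ (a ε : (Fin n → ℕ) → ℂ), (∀ α, ‖ε α‖ ≤ 1) →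
    ∀ z : Fin n → ℂ, pNorm p z < 1 →
      ‖mhEval n m (fun α => ε α * a α) z‖
        ≤ c * sSup {x : ℝ | ∃ w : Fin n → ℂ, pNorm p w < 1 ∧ x = ‖mhEval n m a w‖}}

lemma chiMon_eq (p : ℝ≥0∞) (m n : ℕ) : chiMon p m n = sInf (chiSet p m n) := rfl

lemma norm_mhEval_le (n m : ℕ) (a : (Fin n → ℕ) → ℂ) (z : Fin n → ℂ) :
    ‖mhEval n m a z‖ ≤ ∑ α ∈ Finset.Nat.antidiagonalTuple n m, ‖a α‖ * ∏ i, ‖z i‖ ^ α i := by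
  unfold mhEval
  refine (norm_sum_le _ _).trans (le_of_eq ?_)
  simp only [norm_mul, norm_prod, norm_pow]

lemma bdd_sup (p : ℝ≥0∞) (hp : 1 ≤ p) (n m : ℕ) (a : (Fin n → ℕ) → ℂ) :
    BddAbove {x : ℝ | ∃ w : Fin n → ℂ, pNorm p w < 1 ∧ x = ‖mhEval n m a w‖} := by
  refine ⟨∑ α ∈ Finset.Nat.antidiagonalTuple n m, ‖a α‖, ?_⟩
  rintro x ⟨w, hw, rfl⟩
  refine (norm_mhEval_le n m a w).trans (Finset.sum_le_sum fun α _ => ?_)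
  apply mul_le_of_le_one_right (norm_nonneg _)
  apply Finset.prod_le_one
  · intro i _; positivity
  · intro i _
    exact pow_le_one₀ (norm_nonneg _) ((norm_le_pNorm p hp w i).trans hw.le)

lemma toReal_min (p : ℝ≥0∞) (hp : 1 ≤ p) : 1 ≤ (min p 2).toReal ∧ (min p 2).toReal ≤ 2 := by
  have ht : min p 2 ≠ ∞ := ne_top_of_le_ne_top (by simp) (min_le_right p 2)
  constructor
  · rw [← ENNReal.toReal_one]
    exact (ENNReal.toReal_le_toReal (by simp) ht).2 (le_min hp (by norm_num))
  · have := (ENNReal.toReal_le_toReal ht (by simp)).2 (min_le_right p 2)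
    simpa using this

lemma chi_mem (p : ℝ≥0∞) (hp : 1 ≤ p) (n k : ℕ) :
    Real.exp (k + 1) * (#(Finset.Nat.antidiagonalTuple n k) : ℝ) ^ (1 - 1 / (min p 2).toReal)
      ∈ chiSet p (k + 1) n := by
  refine ⟨by positivity, ?_⟩
  intro a ε hε z hz
  set S := sSup {x : ℝ | ∃ w : Fin n → ℂ, pNorm p w < 1 ∧ x = ‖mhEval n (k+1) a w‖} with hSdef
  have hS : ∀ w : Fin n → ℂ, pNorm p w < 1 → ‖mhEval n (k + 1) a w‖ ≤ S := fun w hw =>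
    le_csSup (bdd_sup p hp n (k+1) a) ⟨w, hw, rfl⟩
  have hS0 : 0 ≤ S := (norm_nonneg _).trans (hS z hz)
  have h1 : ‖mhEval n (k+1) (fun α => ε α * a α) z‖ ≤
      ∑ α ∈ Finset.Nat.antidiagonalTuple n (k+1), ‖a α‖ * ∏ i, ‖z i‖ ^ α i := by
    refine (norm_mhEval_le n (k+1) _ z).trans (Finset.sum_le_sum fun α _ => ?_)
    rw [norm_mul]
    gcongr
    exact mul_le_of_le_one_left (norm_nonneg _) (hε α)
  refine h1.trans ?_
  rcases le_total p 2 with h2 | h2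
  · rw [min_eq_left h2]
    have hpt : p ≠ ∞ := ne_top_of_le_ne_top (by simp) h2
    refine (upper_p p hp hpt n k a S hS z hz).trans (le_of_eq ?_)
    rw [Real.exp_add]
  · rw [min_eq_right h2]
    have h3 := upper_inf n k (fun α => a α * ∏ i, z i ^ α i) S (by
      intro y hy
      have e : mhEval n (k+1) (fun α => a α * ∏ i, z i ^ α i) y
          = mhEval n (k+1) a (fun i => z i * y i) := by
        unfold mhEval
        refine Finset.sum_congr rfl fun α _ => ?_
        simp only [mul_pow, Finset.prod_mul_distrib]; ring
      rw [e]
      apply hS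
      refine lt_of_le_of_lt (pNorm_mono p _ z fun i => ?_) hz
      rw [norm_mul]
      exact mul_le_of_le_one_right (norm_nonneg _) (hy i))
    simp only [norm_mul, norm_prod, norm_pow] at h3
    refine h3.trans ?_
    have e2 : (1 - 1 / (2:ℝ≥0∞).toReal : ℝ) = 1 / 2 := by simp; norm_num
    rw [e2, ← Real.sqrt_eq_rpow]
    have h4 : (2:ℝ) ^ k * Real.exp 1 ≤ Real.exp (k + 1) := by
      rw [Real.exp_add]
      gcongr
      have : Real.exp (k : ℝ) = Real.exp 1 ^ k := by rw [← Real.exp_nat_mul, mul_one]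
      rw [this]
      gcongr
      have := Real.add_one_le_exp 1
      linarith
    gcongr

lemma card_le_gen (n k : ℕ) (x : ℝ) (hx0 : 0 ≤ x) (hx1 : x < 1) :
    (#(Finset.Nat.antidiagonalTuple n k) : ℝ) * x ^ k ≤ ((1 - x)⁻¹) ^ n := by
  calc (#(Finset.Nat.antidiagonalTuple n k) : ℝ) * x ^ k
      = ∑ β ∈ Finset.Nat.antidiagonalTuple n k, ∏ i, x ^ β i := by
        rw [← nsmul_eq_mul, ← Finset.sum_const]
        refine Finset.sum_congr rfl fun β hβ => ?_
        rw [Finset.prod_pow_eq_pow_sum, Finset.Nat.mem_antidiagonalTuple.1 hβ]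
    _ ≤ ∑ β ∈ Fintype.piFinset (fun _ : Fin n => Finset.range (k + 1)), ∏ i, x ^ β i := by
        apply Finset.sum_le_sum_of_subset_of_nonneg
        · intro β hβ
          rw [Fintype.mem_piFinset]
          intro i
          rw [Finset.mem_range]
          exact Nat.lt_succ_of_le (le_of_mem_J hβ i)
        · intro β _ _; positivity
    _ = ∏ _i : Fin n, ∑ j ∈ Finset.range (k + 1), x ^ j := by
        rw [Finset.prod_univ_sum]
    _ ≤ ((1 - x)⁻¹) ^ n := by
        rw [Finset.prod_const, Finset.card_univ, Fintype.card_fin]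
        have h0 : 0 ≤ ∑ j ∈ Finset.range (k + 1), x ^ j := Finset.sum_nonneg fun _ _ => by positivity
        gcongr
        rw [le_inv_comm₀ ?_ (by linarith)] <;> try skip
        · rw [← sub_nonneg]
          have h1 := mul_geom_sum x (k + 1)
          have hpos : 0 < ∑ j ∈ Finset.range (k + 1), x ^ j := by
            rw [Finset.sum_range_succ']; 
            have : 0 ≤ ∑ j ∈ Finset.range k, x ^ (j+1) := Finset.sum_nonneg fun _ _ => by positivity
            simp; linarith
          rw [sub_nonneg, le_inv_comm₀ (by linarith) hpos] 
          rw [← one_div, le_div_iff₀ (by linarith)]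
          nlinarith [pow_nonneg hx0 (k+1)]
        · rw [Finset.sum_range_succ']; 
          have : 0 ≤ ∑ j ∈ Finset.range k, x ^ (j+1) := Finset.sum_nonneg fun _ _ => by positivity
          simp; linarith

lemma card_bound (n k : ℕ) (hn : 0 < n) (hk : 0 < k) :
    (#(Finset.Nat.antidiagonalTuple n k) : ℝ) ≤ Real.exp k * (1 + (n : ℝ) / k) ^ k := by
  have hn' : (0 : ℝ) < n := by exact_mod_cast hn
  have hk' : (0 : ℝ) < k := by exact_mod_cast hk
  have h := card_le_gen n k ((k : ℝ) / (n + k)) (by positivity)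
    (by rw [div_lt_one (by positivity)]; linarith)
  have e1 : (1 - (k : ℝ) / (n + k))⁻¹ = 1 + (k : ℝ) / n := by
    have : 1 - (k : ℝ) / (n + k) = n / (n + k) := by field_simp; ring
    rw [this, inv_div]; field_simp
  have e2 : ((k : ℝ) / (n + k)) ^ k = ((1 + (n : ℝ) / k) ^ k)⁻¹ := by
    rw [← inv_pow]; congr 1; field_simp; ring
  rw [e1, e2, ← div_eq_mul_inv, div_le_iff₀ (by positivity)] at h
  refine h.trans ?_
  gcongr
  calc (1 + (k : ℝ) / n) ^ n ≤ (Real.exp ((k : ℝ) / n)) ^ n := by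
        gcongr
        have := Real.add_one_le_exp ((k : ℝ) / n)
        linarith
    _ = Real.exp k := by rw [← Real.exp_nat_mul]; congr 1; field_simp

lemma log_pos_of (n : ℕ) (hn : 2 ≤ n) : 0 < Real.log n :=
  Real.log_pos (by exact_mod_cast hn)

lemma one_le_ratio (n : ℕ) (hn : 2 ≤ n) : 1 ≤ (n : ℝ) / Real.log n := by
  rw [le_div_iff₀ (log_pos_of n hn), one_mul]
  exact Real.log_le_self (by positivity)

lemma card_root (n k : ℕ) (hn : 2 ≤ n) :
    (#(Finset.Nat.antidiagonalTuple n k) : ℝ) ^ (1 / ((k : ℝ) + 1)) ≤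
      Real.exp 1 * 8 * ((n : ℝ) / Real.log n) := by
  have hR := one_le_ratio n hn
  have hL := log_pos_of n hn
  have hn' : (2 : ℝ) ≤ n := by exact_mod_cast hn
  have he : (1 : ℝ) ≤ Real.exp 1 := Real.one_le_exp (by norm_num)
  rcases Nat.eq_zero_or_pos k with hk | hk
  · subst hk
    have : #(Finset.Nat.antidiagonalTuple n 0) = 1 := by
      rw [Finset.Nat.antidiagonalTuple_zero_right]; simp
    rw [this]; simp
    nlinarith
  have hk' : (0 : ℝ) < k := by exact_mod_cast hk
  have hk1 : (1 : ℝ) ≤ k := by exact_mod_cast hk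
  set y := 1 + (n : ℝ) / k with hy
  have hy1 : 1 ≤ y := by rw [hy]; have : 0 ≤ (n : ℝ) / k := by positivity
                         linarith
  have hcard := card_bound n k (by omega) hk
  have h1 : (#(Finset.Nat.antidiagonalTuple n k) : ℝ) ^ (1 / ((k : ℝ) + 1)) ≤
      Real.exp 1 * y ^ ((k : ℝ) / (k + 1)) := by
    calc _ ≤ (Real.exp k * y ^ k) ^ (1 / ((k : ℝ) + 1)) := by gcongr
      _ = (Real.exp k) ^ (1 / ((k : ℝ) + 1)) * y ^ ((k : ℝ) / (k + 1)) := by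
          rw [Real.mul_rpow (by positivity) (by positivity), ← Real.rpow_natCast y k,
            ← Real.rpow_mul (by positivity)]
          congr 2; ring
      _ ≤ _ := by
          gcongr
          rw [← Real.exp_mul]
          apply Real.exp_le_exp.2
          rw [mul_one_div, div_le_one (by positivity)]; linarith
  refine h1.trans ?_
  rw [mul_assoc]
  gcongr
  rcases le_total n k with hnk | hnk
  · have hnk' : (n : ℝ) ≤ k := by exact_mod_cast hnk
    have hy2 : y ≤ 2 := by
      have : (n : ℝ) / k ≤ 1 := by rw [div_le_one hk']; exact hnk'
      linarith
    have : y ^ ((k : ℝ) / (k + 1)) ≤ y := by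
      apply Real.rpow_le_self_of_one_le hy1
      rw [div_le_one (by positivity)]; linarith
    linarith
  · have hnk' : (k : ℝ) ≤ n := by exact_mod_cast hnk
    have hyn : y ≤ 2 * (n / k) := by
      have : 1 ≤ (n : ℝ) / k := by rw [le_div_iff₀ hk']; linarith
      linarith
    have hyn' : (n : ℝ) / k ≤ y := by linarith
    -- y^(k/(k+1)) = y * y^(-1/(k+1))
    set t : ℝ := 1 / ((k : ℝ) + 1) with ht
    have e : y ^ ((k : ℝ) / (k + 1)) = y / y ^ t := by
      rw [← Real.rpow_one_sub' (by positivity)]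
      · congr 1; rw [ht]; field_simp; ring
      · rw [ht]; have : (1 - 1 / ((k:ℝ) + 1)) = k / (k+1) := by field_simp; ring
        rw [this]; positivity
    have hyt : (n / k : ℝ) ^ t ≤ y ^ t := by gcongr
    have hkt : (k : ℝ) ^ t ≤ 2 := by
      have h2k : (k : ℝ) ≤ 2 ^ (k + 1) := by
        have : k < 2 ^ (k + 1) := lt_trans Nat.lt_two_pow_self (Nat.pow_lt_pow_right (by norm_num) (by omega))
        exact_mod_cast this.le
      calc (k : ℝ) ^ t ≤ ((2:ℝ) ^ (k + 1)) ^ t := by gcongr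
        _ = 2 := by
          rw [← Real.rpow_natCast, ← Real.rpow_mul (by norm_num)]
          have : (((k + 1 : ℕ) : ℝ) * t) = 1 := by rw [ht]; push_cast; field_simp
          rw [this, Real.rpow_one]
    have hnt : Real.log n / (2 * k) ≤ (n : ℝ) ^ t := by
      rw [Real.rpow_def_of_pos (by positivity)]
      have h3 := Real.add_one_le_exp (Real.log n * t)
      have h4 : Real.log n / (2 * k) ≤ Real.log n * t := by
        rw [ht, mul_one_div]
        gcongr
        linarith
      linarith
    have h5 : Real.log n / (4 * k) ≤ y ^ t := by
      refine le_trans ?_ hyt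
      rw [Real.div_rpow (by positivity) (by positivity), le_div_iff₀ (by positivity)]
      calc Real.log n / (4 * k) * (k : ℝ) ^ t ≤ Real.log n / (4 * k) * 2 := by gcongr
        _ = Real.log n / (2 * k) := by field_simp; ring
        _ ≤ _ := hnt
    rw [e, div_le_iff₀ (by positivity)]
    calc y ≤ 2 * (n / k) := hyn
      _ = 8 * (n / Real.log n) * (Real.log n / (4 * k)) := by field_simp; ring
      _ ≤ _ := by gcongr

lemma chi_upper (p : ℝ≥0∞) (hp : 1 ≤ p) (n : ℕ) (hn : 2 ≤ n) (m : ℕ) (hm : 0 < m) :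
    chiMon p m n ^ ((1 : ℝ) / (m : ℝ)) ≤ Real.exp 1 * (Real.exp 1 * 8) *
      ((n : ℝ) / Real.log n) ^ (1 - 1 / (min p 2).toReal) := by
  obtain ⟨k, rfl⟩ : ∃ k, m = k + 1 := ⟨m - 1, by omega⟩
  obtain ⟨hq1, hq2⟩ := toReal_min p hp
  set s := 1 - 1 / (min p 2).toReal with hs
  have hs0 : 0 ≤ s := by
    rw [hs, sub_nonneg, div_le_one (by linarith)]; exact hq1
  have hs1 : s ≤ 1 := by
    rw [hs]; have : 0 ≤ 1 / (min p 2).toReal := by positivity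
    linarith
  have hR := one_le_ratio n hn
  have hL := log_pos_of n hn
  have hmem := chi_mem p hp n k
  have h0 : 0 ≤ chiMon p (k+1) n := by
    rw [chiMon_eq]; exact Real.sInf_nonneg (fun c hc => hc.1)
  have h1 : chiMon p (k+1) n ≤ _ := csInf_le ⟨0, fun c hc => hc.1⟩ hmem
  push_cast
  calc chiMon p (k+1) n ^ ((1 : ℝ) / ((k : ℝ) + 1))
      ≤ (Real.exp (k + 1) * (#(Finset.Nat.antidiagonalTuple n k) : ℝ) ^ s) ^ ((1 : ℝ) / ((k : ℝ) + 1)) := by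
        gcongr
    _ = Real.exp 1 * ((#(Finset.Nat.antidiagonalTuple n k) : ℝ) ^ (1 / ((k : ℝ) + 1))) ^ s := by
        rw [Real.mul_rpow (by positivity) (by positivity), ← Real.exp_mul,
          ← Real.rpow_mul (by positivity), ← Real.rpow_mul (by positivity), mul_comm s]
        congr 2; field_simp
    _ ≤ Real.exp 1 * (Real.exp 1 * 8 * ((n : ℝ) / Real.log n)) ^ s := by
        gcongr
        exact card_root n k hn
    _ = Real.exp 1 * ((Real.exp 1 * 8) ^ s * ((n : ℝ) / Real.log n) ^ s) := by
        rw [Real.mul_rpow (by positivity) (by positivity)]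
    _ ≤ Real.exp 1 * ((Real.exp 1 * 8) * ((n : ℝ) / Real.log n) ^ s) := by
        gcongr
        apply Real.rpow_le_self_of_one_le _ hs1
        have := Real.one_le_exp (x := 1) (by norm_num)
        linarith
    _ = _ := by ring

/-- the sign attached to a boolean -/
def sg (b : Bool) : ℝ := if b then 1 else -1

lemma sg_sq (b : Bool) : sg b * sg b = 1 := by cases b <;> simp [sg]

lemma rad {ι : Type*} [Fintype ι] [DecidableEq ι] (x : ι → ℝ) :
    ∑ ε : ι → Bool, Real.exp (∑ i, sg (ε i) * x i) ≤
      2 ^ Fintype.card ι * Real.exp ((∑ i, x i ^ 2) / 2) := by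
  simp only [Real.exp_sum]
  rw [← Fintype.prod_sum (fun i (b : Bool) => Real.exp (sg b * x i))]
  rw [Finset.sum_div, Real.exp_sum, ← Finset.card_univ, ← Finset.prod_const, ← Finset.prod_mul_distrib]
  apply Finset.prod_le_prod
  · intro i _; positivity
  · intro i _
    have h := Real.cosh_le_exp_half_sq (x i)
    rw [Real.cosh_eq] at h
    simp only [Fintype.sum_bool, sg]
    simp
    linarith

lemma exists_signs {ι τ : Type*} [Fintype ι] [DecidableEq ι] [Fintype τ] (X : τ → ι → ℝ) (σ : ℝ)
    (hσ : 0 < σ) (hX : ∀ t, ∑ i, X t i ^ 2 ≤ σ ^ 2) :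
    ∃ ε : ι → Bool, ∀ t, ∑ i, sg (ε i) * X t i ≤ σ * (Real.log (Fintype.card τ) + 1 / 2) := by
  by_contra hcon
  push Not at hcon
  have hτ : 0 < Fintype.card τ := by
    obtain ⟨t, _⟩ := hcon (fun _ => true)
    exact Fintype.card_pos_iff.2 ⟨t⟩
  have hτ' : (0 : ℝ) < Fintype.card τ := by exact_mod_cast hτ
  have h1 : ∀ ε : ι → Bool, (Fintype.card τ : ℝ) * Real.exp (1 / 2) <
      ∑ t, Real.exp (∑ i, sg (ε i) * (X t i / σ)) := by
    intro ε
    obtain ⟨t, ht⟩ := hcon ε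
    refine lt_of_lt_of_le ?_ (Finset.single_le_sum (f := fun t => Real.exp (∑ i, sg (ε i) * (X t i / σ)))
      (fun _ _ => (Real.exp_pos _).le) (Finset.mem_univ t))
    have e : ∑ i, sg (ε i) * (X t i / σ) = (∑ i, sg (ε i) * X t i) / σ := by
      rw [Finset.sum_div]; exact Finset.sum_congr rfl fun i _ => by ring
    rw [e]
    have h2 : Real.log (Fintype.card τ) + 1 / 2 < (∑ i, sg (ε i) * X t i) / σ := by
      rw [lt_div_iff₀ hσ]; linarith
    calc (Fintype.card τ : ℝ) * Real.exp (1 / 2) = Real.exp (Real.log (Fintype.card τ) + 1 / 2) := by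
          rw [Real.exp_add, Real.exp_log hτ']
      _ < _ := Real.exp_lt_exp.2 h2
  have h3 := Finset.sum_lt_sum_of_nonempty (s := (Finset.univ : Finset (ι → Bool)))
    ⟨fun _ => true, Finset.mem_univ _⟩ (fun ε _ => h1 ε)
  rw [Finset.sum_comm] at h3
  have h4 : ∑ t, ∑ ε : ι → Bool, Real.exp (∑ i, sg (ε i) * (X t i / σ)) ≤
      ∑ _t : τ, 2 ^ Fintype.card ι * Real.exp (1 / 2) := by
    refine Finset.sum_le_sum fun t _ => (rad _).trans ?_
    gcongr
    simp only [div_pow]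
    rw [← Finset.sum_div, div_le_one (by positivity)]
    exact hX t
  have h5 := lt_of_lt_of_le h3 h4
  simp only [Finset.sum_const, Finset.card_univ, Fintype.card_pi, Fintype.card_bool,
    Finset.prod_const, nsmul_eq_mul] at h5
  push_cast at h5
  apply lt_irrefl _ (lt_of_lt_of_eq h5 _)
  ring

lemma exists_signs_complex {ι τ : Type*} [Fintype ι] [DecidableEq ι] [Fintype τ]
    (b : τ → ι → ℂ) (σ : ℝ) (hσ : 0 < σ) (hb : ∀ t, ∑ i, ‖b t i‖ ^ 2 ≤ σ ^ 2) :
    ∃ ε : ι → Bool, ∀ t, ‖∑ i, (sg (ε i) : ℂ) * b t i‖ ≤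
      2 * (σ * (Real.log (4 * Fintype.card τ) + 1 / 2)) := by
  obtain ⟨ε, hε⟩ := exists_signs (τ := τ × Bool × Bool)
    (fun x i => sg x.2.1 * (if x.2.2 then (b x.1 i).re else (b x.1 i).im)) σ hσ (by
      intro x
      refine le_trans (Finset.sum_le_sum fun i _ => ?_) (hb x.1)
      rw [mul_pow, sq (sg _), sg_sq, one_mul]
      split_ifs
      · rw [← sq_abs]; gcongr; exact Complex.abs_re_le_norm _
      · rw [← sq_abs]; gcongr; exact Complex.abs_im_le_norm _)
  refine ⟨ε, fun t => ?_⟩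
  have hc : (Fintype.card (τ × Bool × Bool) : ℝ) = 4 * Fintype.card τ := by
    simp only [Fintype.card_prod, Fintype.card_bool]; push_cast; ring
  rw [hc] at hε
  have h1 := hε (t, true, true)
  have h2 := hε (t, true, false)
  have h3 := hε (t, false, true)
  have h4 := hε (t, false, false)
  simp [sg, -one_div] at h1 h2 h3 h4
  have hre : (∑ i, (sg (ε i) : ℂ) * b t i).re = ∑ i, sg (ε i) * (b t i).re := by
    simp [Complex.re_sum]
  have him : (∑ i, (sg (ε i) : ℂ) * b t i).im = ∑ i, sg (ε i) * (b t i).im := by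
    simp [Complex.im_sum]
  refine (Complex.norm_le_abs_re_add_abs_im _).trans ?_
  rw [hre, him, two_mul]
  simp only [sg, ite_mul, one_mul, neg_mul]
  apply add_le_add
  · rw [abs_le]; constructor <;> linarith
  · rw [abs_le]; constructor <;> linarith

lemma exists_net (n K : ℕ) (hK : 0 < K) (B : Set (Fin n → ℂ)) (hB : ∀ z ∈ B, ∀ i, ‖z i‖ ≤ 1) :
    ∃ T : Finset (Fin n → ℂ), (∀ t ∈ T, t ∈ B) ∧ #T ≤ ((2 * K + 1) ^ 2) ^ n ∧
      ∀ z ∈ B, ∃ t ∈ T, ∀ i, ‖z i - t i‖ ≤ 2 / (K : ℝ) := by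
  classical
  have hK' : (0 : ℝ) < K := by exact_mod_cast hK
  let φ : (Fin n → ℂ) → Fin n → ℤ × ℤ := fun z i => (⌊K * (z i).re⌋, ⌊K * (z i).im⌋)
  let cells : Finset (Fin n → ℤ × ℤ) := Fintype.piFinset fun _ : Fin n =>
    Finset.Icc (-(K : ℤ)) K ×ˢ Finset.Icc (-(K : ℤ)) K
  let ch : (Fin n → ℤ × ℤ) → (Fin n → ℂ) := fun c =>
    if h : ∃ z ∈ B, φ z = c then h.choose else 0
  have hch : ∀ z ∈ B, ch (φ z) ∈ B ∧ φ (ch (φ z)) = φ z := by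
    intro z hz
    have h : ∃ z' ∈ B, φ z' = φ z := ⟨z, hz, rfl⟩
    have e : ch (φ z) = h.choose := dif_pos h
    rw [e]
    exact h.choose_spec
  have hfl : ∀ x : ℝ, |x| ≤ 1 → ⌊K * x⌋ ∈ Finset.Icc (-(K : ℤ)) K := by
    intro x hx
    rw [abs_le] at hx
    rw [Finset.mem_Icc]
    constructor
    · rw [Int.le_floor]; push_cast; nlinarith
    · have : (⌊K * x⌋ : ℝ) ≤ K := (Int.floor_le _).trans (by nlinarith)
      exact_mod_cast this
  have hcell : ∀ z ∈ B, φ z ∈ cells := by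
    intro z hz
    rw [Fintype.mem_piFinset]
    intro i
    rw [Finset.mem_product]
    exact ⟨hfl _ ((Complex.abs_re_le_norm _).trans (hB z hz i)),
      hfl _ ((Complex.abs_im_le_norm _).trans (hB z hz i))⟩
  have hfloor : ∀ x y : ℝ, ⌊K * x⌋ = ⌊K * y⌋ → |x - y| ≤ 1 / K := by
    intro x y h
    have := Int.abs_sub_lt_one_of_floor_eq_floor h
    rw [← mul_sub, abs_mul, abs_of_pos hK'] at this
    rw [le_div_iff₀ hK']
    linarith
  refine ⟨(cells.filter fun c => ∃ z ∈ B, φ z = c).image ch, ?_, ?_, ?_⟩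
  · intro t ht
    obtain ⟨c, hc, rfl⟩ := Finset.mem_image.1 ht
    obtain ⟨z, hz, rfl⟩ := (Finset.mem_filter.1 hc).2
    exact (hch z hz).1
  · refine Finset.card_image_le.trans ((Finset.card_filter_le _ _).trans ?_)
    rw [Fintype.card_piFinset]
    simp only [Finset.card_product, Int.card_Icc, Finset.prod_const, Finset.card_univ,
      Fintype.card_fin]
    apply le_of_eq
    congr 1
    have : ((K : ℤ) + 1 - -(K : ℤ)).toNat = 2 * K + 1 := by omega
    rw [this, sq]
  · intro z hz
    refine ⟨ch (φ z), Finset.mem_image.2 ⟨φ z, Finset.mem_filter.2 ⟨hcell z hz, z, hz, rfl⟩, rfl⟩, ?_⟩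
    intro i
    have h := congrFun (hch z hz).2 i
    have h1 : ⌊K * (ch (φ z) i).re⌋ = ⌊K * (z i).re⌋ := congrArg Prod.fst h
    have h2 : ⌊K * (ch (φ z) i).im⌋ = ⌊K * (z i).im⌋ := congrArg Prod.snd h
    refine (Complex.norm_le_abs_re_add_abs_im _).trans ?_
    have h3 := hfloor _ _ h1.symm
    have h4 := hfloor _ _ h2.symm
    rw [Complex.sub_re, Complex.sub_im]
    have : 2 / (K : ℝ) = 1 / K + 1 / K := by ring
    linarith

lemma norm_prod_sub {ι : Type*} (s : Finset ι) (a b : ι → ℂ) (ha : ∀ i, ‖a i‖ ≤ 1)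
    (hb : ∀ i, ‖b i‖ ≤ 1) : ‖∏ i ∈ s, a i - ∏ i ∈ s, b i‖ ≤ ∑ i ∈ s, ‖a i - b i‖ := by
  classical
  induction s using Finset.induction_on with
  | empty => simp
  | insert j s hj ih =>
    rw [Finset.prod_insert hj, Finset.prod_insert hj, Finset.sum_insert hj]
    have e : a j * ∏ i ∈ s, a i - b j * ∏ i ∈ s, b i =
      (a j - b j) * ∏ i ∈ s, a i + b j * (∏ i ∈ s, a i - ∏ i ∈ s, b i) := by ring
    rw [e]
    refine (norm_add_le _ _).trans ?_
    rw [norm_mul, norm_mul]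
    have h1 : ‖∏ i ∈ s, a i‖ ≤ 1 := by
      rw [norm_prod]; exact Finset.prod_le_one (fun _ _ => norm_nonneg _) (fun i _ => ha i)
    apply add_le_add
    · exact mul_le_of_le_one_right (norm_nonneg _) h1
    · exact (mul_le_of_le_one_left (norm_nonneg _) (hb j)).trans ih

lemma norm_monomial_sub (n m : ℕ) (α : Fin n → ℕ) (hα : α ∈ Finset.Nat.antidiagonalTuple n m)
    (a b : Fin n → ℂ) (ha : ∀ i, ‖a i‖ ≤ 1) (hb : ∀ i, ‖b i‖ ≤ 1) (δ : ℝ)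
    (hδ : ∀ i, ‖a i - b i‖ ≤ δ) : ‖∏ i, a i ^ α i - ∏ i, b i ^ α i‖ ≤ m * δ := by
  refine (norm_prod_sub Finset.univ (fun i => a i ^ α i) (fun i => b i ^ α i) ?_ ?_).trans ?_
  · intro i; rw [norm_pow]; exact pow_le_one₀ (norm_nonneg _) (ha i)
  · intro i; rw [norm_pow]; exact pow_le_one₀ (norm_nonneg _) (hb i)
  · have h1 : ∀ i, ‖a i ^ α i - b i ^ α i‖ ≤ (α i : ℝ) * δ := by
      intro i
      have := norm_prod_sub (Finset.range (α i)) (fun _ => a i) (fun _ => b i)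
        (fun _ => ha i) (fun _ => hb i)
      simp only [Finset.prod_const, Finset.sum_const, Finset.card_range, nsmul_eq_mul] at this
      exact this.trans (by gcongr; exact hδ i)
    refine (Finset.sum_le_sum fun i _ => h1 i).trans (le_of_eq ?_)
    rw [← Finset.sum_mul]
    congr 1
    exact_mod_cast Finset.Nat.mem_antidiagonalTuple.1 hα

/-- multinomial theorem -/
lemma multinomial_sum {R : Type*} [CommSemiring R] (n m : ℕ) (f : Fin n → R) :
    ∑ α ∈ Finset.Nat.antidiagonalTuple n m, (Nat.multinomial Finset.univ α : R) * ∏ i, f i ^ α i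
      = (∑ i, f i) ^ m := by
  rw [Finset.sum_pow_eq_sum_piAntidiag, Finset.piAntidiag_univ_fin_eq_antidiagonalTuple]

lemma random_poly (n m K : ℕ) (hK : 0 < K) (hKm : 2 * m * n ^ m ≤ K) (B : Set (Fin n → ℂ))
    (hB : ∀ z ∈ B, ∀ i, ‖z i‖ ≤ 1) (σ : ℝ) (hσ : 1 ≤ σ)
    (hvar : ∀ z ∈ B, ∑ α ∈ Finset.Nat.antidiagonalTuple n m,
      ((Nat.multinomial Finset.univ α : ℝ) * ∏ i, ‖z i‖ ^ α i) ^ 2 ≤ σ ^ 2) :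
    ∃ ε : (Fin n → ℕ) → ℂ, (∀ α, ‖ε α‖ ≤ 1 ∧ ε α * ε α = 1) ∧ ∀ z ∈ B,
      ‖mhEval n m (fun α => ε α * (Nat.multinomial Finset.univ α : ℂ)) z‖ ≤
        σ * (2 * Real.log (4 * ((2 * K + 1) ^ 2) ^ n) + 2) := by
  classical
  obtain ⟨T, hTB, hTc, hTn⟩ := exists_net n K hK B hB
  have hK' : (0 : ℝ) < K := by exact_mod_cast hK
  set J := Finset.Nat.antidiagonalTuple n m with hJ
  obtain ⟨ε, hε⟩ := exists_signs_complex (ι := J) (τ := T)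
    (fun t α => (Nat.multinomial Finset.univ α.1 : ℂ) * ∏ i, t.1 i ^ α.1 i) σ (by linarith) (by
      intro t
      rw [Finset.sum_coe_sort J (fun α => ‖(Nat.multinomial Finset.univ α : ℂ) *
        ∏ i, t.1 i ^ α i‖ ^ 2)]
      simpa only [norm_mul, norm_prod, norm_pow, Complex.norm_natCast] using hvar t.1 (hTB _ t.2))
  let η : (Fin n → ℕ) → ℂ := fun α => if h : α ∈ J then (sg (ε ⟨α, h⟩) : ℂ) else 1
  have hη1 : ∀ α, η α * η α = 1 := by
    intro α
    simp only [η]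
    split_ifs with h
    · exact_mod_cast sg_sq _
    · simp
  have hη2 : ∀ α, ‖η α‖ ≤ 1 := by
    intro α
    have h := congrArg norm (hη1 α)
    rw [norm_mul, norm_one] at h
    nlinarith [norm_nonneg (η α)]
  refine ⟨η, fun α => ⟨hη2 α, hη1 α⟩, ?_⟩
  intro z hz
  obtain ⟨t, htT, ht⟩ := hTn z hz
  have hnet : ‖mhEval n m (fun α => η α * (Nat.multinomial Finset.univ α : ℂ)) t‖ ≤
      2 * (σ * (Real.log (4 * Fintype.card T) + 1 / 2)) := by
    refine le_trans (le_of_eq ?_) (hε ⟨t, htT⟩)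
    congr 1
    unfold mhEval
    rw [← Finset.sum_coe_sort J]
    refine Finset.sum_congr rfl fun α _ => ?_
    simp only [η, dif_pos α.2]
    ring
  have hdiff : ‖mhEval n m (fun α => η α * (Nat.multinomial Finset.univ α : ℂ)) z -
      mhEval n m (fun α => η α * (Nat.multinomial Finset.univ α : ℂ)) t‖ ≤ 1 := by
    unfold mhEval
    rw [← Finset.sum_sub_distrib]
    refine (norm_sum_le _ _).trans ?_
    calc _ ≤ ∑ α ∈ J, (Nat.multinomial Finset.univ α : ℝ) * (m * (2 / (K : ℝ))) := by
          refine Finset.sum_le_sum fun α hα => ?_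
          rw [← mul_sub, norm_mul, norm_mul, Complex.norm_natCast]
          have h1 := norm_monomial_sub n m α hα z t (hB z hz) (hB t (hTB t htT)) _ ht
          have h2 := hη2 α
          gcongr
          exact mul_le_of_le_one_left (by positivity) h2
      _ = (n : ℝ) ^ m * (m * (2 / (K : ℝ))) := by
          rw [← Finset.sum_mul]
          congr 1
          have := multinomial_sum (R := ℝ) n m (fun _ => 1)
          simpa using this
      _ ≤ 1 := by
          have h3 : (2 * m * n ^ m : ℝ) ≤ K := by exact_mod_cast hKm
          have e : (n : ℝ) ^ m * (m * (2 / (K : ℝ))) = (2 * m * n ^ m) / K := by ring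
          rw [e, div_le_one hK']
          exact h3
  have hlog : Real.log (4 * Fintype.card T) ≤ Real.log (4 * ((2 * K + 1) ^ 2) ^ n) := by
    have hpos : (0 : ℝ) < Fintype.card T := by
      have h : 0 < Fintype.card T := Fintype.card_pos_iff.2 ⟨(⟨t, htT⟩ : T)⟩
      exact_mod_cast h
    apply Real.log_le_log (by positivity)
    have h4 : (Fintype.card T : ℝ) ≤ ((2 * K + 1) ^ 2) ^ n := by
      rw [Fintype.card_coe]; exact_mod_cast hTc
    linarith
  have h5 := norm_sub_norm_le (mhEval n m (fun α => η α * (Nat.multinomial Finset.univ α : ℂ)) z)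
    (mhEval n m (fun α => η α * (Nat.multinomial Finset.univ α : ℂ)) t)
  nlinarith

lemma multinomial_le (n m : ℕ) (α : Fin n → ℕ) (hα : α ∈ Finset.Nat.antidiagonalTuple n m) :
    (Nat.multinomial Finset.univ α : ℝ) ≤ (m.factorial : ℝ) := by
  have h : Nat.multinomial Finset.univ α ≤ m.factorial := by
    unfold Nat.multinomial
    rw [Finset.Nat.mem_antidiagonalTuple.1 hα]
    exact Nat.div_le_self _ _
  exact_mod_cast h

lemma one_le_factorial (m : ℕ) : (1 : ℝ) ≤ (m.factorial : ℝ) := by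
  exact_mod_cast Nat.one_le_iff_ne_zero.2 (Nat.factorial_ne_zero m)

lemma sum_rpow_le_one (p : ℝ≥0∞) (hp : 1 ≤ p) (hp' : p ≠ ∞) (n : ℕ) (z : Fin n → ℂ)
    (hz : pNorm p z < 1) : ∑ i, ‖z i‖ ^ p.toReal ≤ 1 := by
  have hq : 0 < p.toReal := ENNReal.toReal_pos (by positivity) hp'
  unfold pNorm at hz
  rw [if_neg hp'] at hz
  by_contra hcon
  push Not at hcon
  have := Real.one_lt_rpow hcon (show 0 < 1 / p.toReal by positivity)
  linarith

lemma variance_small (q : ℝ) (hq1 : 1 ≤ q) (hq2 : q ≤ 2) (n m : ℕ) (r : Fin n → ℝ)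
    (hr : ∀ i, 0 ≤ r i) (hs : ∑ i, r i ^ q ≤ 1) :
    ∑ α ∈ Finset.Nat.antidiagonalTuple n m,
      ((Nat.multinomial Finset.univ α : ℝ) * ∏ i, r i ^ α i) ^ 2 ≤
      ((m.factorial : ℝ) ^ (1 - 1 / q)) ^ 2 := by
  have hq0 : 0 < q := by linarith
  have hrq : ∀ i, 0 ≤ r i ^ q := fun i => Real.rpow_nonneg (hr i) _
  have hsum := multinomial_sum n m (fun i => r i ^ q)
  have hle : (∑ i, r i ^ q) ^ m ≤ 1 :=
    pow_le_one₀ (Finset.sum_nonneg fun i _ => hrq i) hs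
  rw [← hsum] at hle
  have hy0 : ∀ α : Fin n → ℕ, 0 ≤ (Nat.multinomial Finset.univ α : ℝ) * ∏ i, (r i ^ q) ^ α i :=
    fun α => mul_nonneg (Nat.cast_nonneg _) (Finset.prod_nonneg fun i _ => pow_nonneg (hrq i) _)
  calc _ ≤ ∑ α ∈ Finset.Nat.antidiagonalTuple n m,
        ((Nat.multinomial Finset.univ α : ℝ) * ∏ i, (r i ^ q) ^ α i) *
          ((m.factorial : ℝ) ^ (1 - 1 / q)) ^ 2 := by
        refine Finset.sum_le_sum fun α hα => ?_
        have hy1 : (Nat.multinomial Finset.univ α : ℝ) * ∏ i, (r i ^ q) ^ α i ≤ 1 :=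
          (Finset.single_le_sum (f := fun α => (Nat.multinomial Finset.univ α : ℝ) *
            ∏ i, (r i ^ q) ^ α i) (fun α _ => hy0 α) hα).trans hle
        have hy0' := hy0 α
        have hM0 : (0 : ℝ) ≤ (Nat.multinomial Finset.univ α : ℝ) := Nat.cast_nonneg _
        have hM1 := multinomial_le n m α hα
        have hMpos : (0 : ℝ) < (Nat.multinomial Finset.univ α : ℝ) := by
          exact_mod_cast Nat.multinomial_pos _ _
        have hR : ∏ i, (r i ^ q) ^ α i = (∏ i, r i ^ α i) ^ q := by
          rw [← Real.finsetProd_rpow _ _ (fun i _ => pow_nonneg (hr i) _)]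
          refine Finset.prod_congr rfl fun i _ => ?_
          rw [← Real.rpow_natCast, ← Real.rpow_natCast, ← Real.rpow_mul (hr i),
            ← Real.rpow_mul (hr i), mul_comm]
        have hR0 : 0 ≤ ∏ i, r i ^ α i := Finset.prod_nonneg fun i _ => pow_nonneg (hr i) _
        rw [hR] at hy1 hy0' ⊢
        set M : ℝ := (Nat.multinomial Finset.univ α : ℝ)
        set R := ∏ i, r i ^ α i
        have e : (M * R) ^ 2 = (M * R ^ q) ^ (2 / q) * (M ^ (1 - 1 / q)) ^ 2 := by
          rw [Real.mul_rpow hM0 (by positivity), ← Real.rpow_mul hR0,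
            ← Real.rpow_natCast (M ^ (1 - 1 / q)), ← Real.rpow_mul hM0]
          rw [mul_right_comm, ← Real.rpow_add hMpos]
          have e1 : 2 / q + (1 - 1 / q) * ((2 : ℕ) : ℝ) = ((2 : ℕ) : ℝ) := by
            push_cast; field_simp; ring
          have e2 : q * (2 / q) = ((2 : ℕ) : ℝ) := by push_cast; field_simp
          rw [e1, e2, Real.rpow_natCast, Real.rpow_natCast, mul_pow]
        rw [e]
        have h1 : (M * R ^ q) ^ (2 / q) ≤ M * R ^ q := by
          have := Real.rpow_le_rpow_of_exponent_ge' hy0' hy1 zero_le_one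
            (show (1 : ℝ) ≤ 2 / q by rw [le_div_iff₀ hq0]; linarith)
          rwa [Real.rpow_one] at this
        have h2 : M ^ (1 - 1 / q) ≤ (m.factorial : ℝ) ^ (1 - 1 / q) := by
          apply Real.rpow_le_rpow hM0 hM1
          rw [sub_nonneg, div_le_one hq0]; exact hq1
        gcongr
    _ ≤ _ := by
        rw [← Finset.sum_mul]
        exact mul_le_of_le_one_left (by positivity) hle

lemma variance_large (n m : ℕ) (r : Fin n → ℝ) (hr : ∀ i, 0 ≤ r i) :
    ∑ α ∈ Finset.Nat.antidiagonalTuple n m,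
      ((Nat.multinomial Finset.univ α : ℝ) * ∏ i, r i ^ α i) ^ 2 ≤
      (m.factorial : ℝ) * (∑ i, r i ^ 2) ^ m := by
  rw [← multinomial_sum n m (fun i => r i ^ 2), Finset.mul_sum]
  refine Finset.sum_le_sum fun α hα => ?_
  have hM1 := multinomial_le n m α hα
  have hR : ∏ i, (r i ^ 2) ^ α i = (∏ i, r i ^ α i) ^ 2 := by
    rw [← Finset.prod_pow]
    refine Finset.prod_congr rfl fun i _ => ?_
    rw [← pow_mul, ← pow_mul, mul_comm]
  rw [hR]
  have : ((Nat.multinomial Finset.univ α : ℝ) * ∏ i, r i ^ α i) ^ 2 =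
    (Nat.multinomial Finset.univ α : ℝ) * ((Nat.multinomial Finset.univ α : ℝ) *
      (∏ i, r i ^ α i) ^ 2) := by ring
  rw [this]
  gcongr

lemma sum_sq_le (p : ℝ≥0∞) (hp : 2 ≤ p) (n : ℕ) (z : Fin n → ℂ)
    (hz : pNorm p z < 1) : ∑ i, ‖z i‖ ^ 2 ≤ (n : ℝ) ^ (1 - 2 * (1 / p.toReal)) := by
  have hp1 : 1 ≤ p := le_trans (by norm_num) hp
  by_cases hp' : p = ∞
  · have h1 : ∀ i, ‖z i‖ ^ 2 ≤ 1 := fun i =>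
      pow_le_one₀ (norm_nonneg _) ((norm_le_pNorm p hp1 z i).trans hz.le)
    have := Finset.sum_le_sum (s := Finset.univ) fun i _ => h1 i
    simpa [hp'] using this
  · have hq : 2 ≤ p.toReal := by
      have := (ENNReal.toReal_le_toReal (by norm_num) hp').2 hp
      simpa using this
    have h1 := sum_rpow_le_one p hp1 hp' n z hz
    set q := p.toReal
    have h2 := Real.rpow_sum_le_const_mul_sum_rpow_of_nonneg (s := (Finset.univ : Finset (Fin n)))
      (f := fun i => ‖z i‖ ^ 2) (p := q / 2) (by linarith) (fun i _ => by positivity)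
    have e : ∀ i, (‖z i‖ ^ 2) ^ (q / 2) = ‖z i‖ ^ q := by
      intro i
      rw [← Real.rpow_natCast, ← Real.rpow_mul (norm_nonneg _)]
      congr 1; push_cast; ring
    simp only [e, Finset.card_univ, Fintype.card_fin] at h2
    have h3 : (∑ i, ‖z i‖ ^ 2) ^ (q / 2) ≤ (n : ℝ) ^ (q / 2 - 1) :=
      h2.trans (mul_le_of_le_one_right (by positivity) h1)
    have h4 := Real.rpow_le_rpow (by positivity) h3 (show 0 ≤ 2 / q by positivity)
    rw [← Real.rpow_mul (by positivity), ← Real.rpow_mul (by positivity)] at h4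
    have e1 : q / 2 * (2 / q) = 1 := by field_simp
    have e2 : (q / 2 - 1) * (2 / q) = 1 - 2 * (1 / q) := by field_simp
    rwa [e1, e2, Real.rpow_one] at h4

lemma variance (p : ℝ≥0∞) (hp : 1 ≤ p) (n m : ℕ) (hn : 1 ≤ n) :
    ∃ σ : ℝ, 1 ≤ σ ∧ (∀ z : Fin n → ℂ, pNorm p z < 1 →
      ∑ α ∈ Finset.Nat.antidiagonalTuple n m,
      ((Nat.multinomial Finset.univ α : ℝ) * ∏ i, ‖z i‖ ^ α i) ^ 2 ≤ σ ^ 2) ∧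
      σ * (n : ℝ) ^ ((m : ℝ) * (1 - 1 / (min p 2).toReal)) =
        (n : ℝ) ^ ((m : ℝ) * (1 - 1 / p.toReal)) *
          (m.factorial : ℝ) ^ (1 - 1 / (min p 2).toReal) := by
  have hn' : (1 : ℝ) ≤ n := by exact_mod_cast hn
  have hf := one_le_factorial m
  rcases le_total p 2 with h | h
  · rw [min_eq_left h]
    have hp' : p ≠ ∞ := ne_top_of_le_ne_top (by norm_num) h
    have hq1 : 1 ≤ p.toReal := by
      simpa using (ENNReal.toReal_le_toReal (by norm_num) hp').2 hp
    have hq2 : p.toReal ≤ 2 := by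
      simpa using (ENNReal.toReal_le_toReal hp' (by norm_num)).2 h
    refine ⟨(m.factorial : ℝ) ^ (1 - 1 / p.toReal), ?_, ?_, mul_comm _ _⟩
    · apply Real.one_le_rpow hf
      rw [sub_nonneg, div_le_one (by linarith)]; exact hq1
    · intro z hz
      exact variance_small _ hq1 hq2 n m _ (fun i => norm_nonneg _) (sum_rpow_le_one p hp hp' n z hz)
  · rw [min_eq_right h]
    have ht : 1 / p.toReal ≤ 1 / 2 := by
      by_cases hp' : p = ∞
      · simp [hp']
      · have hq : 2 ≤ p.toReal := by
          simpa using (ENNReal.toReal_le_toReal (by norm_num) hp').2 h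
        exact one_div_le_one_div_of_le (by norm_num) hq
    have h2 : (2 : ℝ≥0∞).toReal = 2 := by norm_num
    rw [h2]
    set t := 1 / p.toReal with htdef
    refine ⟨(m.factorial : ℝ) ^ ((1 : ℝ) / 2) * (n : ℝ) ^ ((m : ℝ) * (1 / 2 - t)), ?_, ?_, ?_⟩
    · apply one_le_mul_of_one_le_of_one_le
      · exact Real.one_le_rpow hf (by norm_num)
      · exact Real.one_le_rpow hn' (mul_nonneg (Nat.cast_nonneg _) (by linarith))
    · intro z hz
      refine (variance_large n m _ (fun i => norm_nonneg _)).trans ?_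
      have h3 := sum_sq_le p h n z hz
      have e : ((m.factorial : ℝ) ^ ((1 : ℝ) / 2) * (n : ℝ) ^ ((m : ℝ) * (1 / 2 - t))) ^ 2 =
        (m.factorial : ℝ) * ((n : ℝ) ^ (1 - 2 * t)) ^ m := by
        rw [mul_pow, ← Real.rpow_natCast _ 2, ← Real.rpow_mul (by positivity),
          ← Real.rpow_natCast _ 2, ← Real.rpow_mul (by positivity),
          ← Real.rpow_natCast _ m, ← Real.rpow_mul (by positivity)]
        norm_num
        left
        congr 1; ring
      rw [e]
      gcongr
    · rw [mul_assoc, ← Real.rpow_add (by linarith), mul_comm]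
      congr 2
      · ring
      · norm_num

lemma lower_c (p : ℝ≥0∞) (hp : 1 ≤ p) (n m : ℕ) (hn : 1 ≤ n) (hm : 1 ≤ m) (c : ℝ)
    (hc : c ∈ chiSet p m n) :
    (n : ℝ) ^ ((m : ℝ) * (1 - 1 / (min p 2).toReal)) ≤
      c * ((m.factorial : ℝ) ^ (1 - 1 / (min p 2).toReal) * 2 ^ m *
        (2 * Real.log (4 * ((2 * ((2 * m * n ^ m : ℕ) : ℝ) + 1) ^ 2) ^ n) + 2)) := by
  obtain ⟨σ, hσ, hvar, heq⟩ := variance p hp n m hn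
  have hnpos : (0 : ℝ) < n := by exact_mod_cast hn
  obtain ⟨ε, hε, hP⟩ := random_poly n m (2 * m * n ^ m) (by positivity) le_rfl
    {z | pNorm p z < 1} (fun z hz i => (norm_le_pNorm p hp z i).trans (le_of_lt hz)) σ hσ hvar
  set A := 2 * Real.log (4 * ((2 * ((2 * m * n ^ m : ℕ) : ℝ) + 1) ^ 2) ^ n) + 2 with hA
  set s := 1 - 1 / (min p 2).toReal with hs
  set t := 1 / p.toReal with ht
  obtain ⟨hc0, hc⟩ := hc
  have hu : pNorm p (fun _ : Fin n => (((1 / 2 : ℝ) * (n : ℝ) ^ (-t) : ℝ) : ℂ)) < 1 := by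
    have : Nonempty (Fin n) := ⟨⟨0, hn⟩⟩
    have hnn : ‖(((1 / 2 : ℝ) * (n : ℝ) ^ (-t) : ℝ) : ℂ)‖ = (1 / 2 : ℝ) * (n : ℝ) ^ (-t) := by
      rw [Complex.norm_real, Real.norm_of_nonneg (by positivity)]
    unfold pNorm
    simp only [hnn]
    split_ifs with h
    · rw [ciSup_const, ht, h]; norm_num
    · have hq : 0 < p.toReal := ENNReal.toReal_pos (by positivity) h
      simp only [Finset.sum_const, Finset.card_univ, Fintype.card_fin, nsmul_eq_mul]
      rw [Real.mul_rpow (x := (1 / 2 : ℝ)) (by norm_num) (by positivity), ← Real.rpow_mul hnpos.le]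
      have e : -t * p.toReal = -1 := by rw [ht]; field_simp
      rw [e, Real.rpow_neg_one]
      have e2 : (n : ℝ) * ((1 / 2 : ℝ) ^ p.toReal * (n : ℝ)⁻¹) = (1 / 2 : ℝ) ^ p.toReal := by
        field_simp
      rw [e2, ← Real.rpow_mul (by norm_num)]
      have e3 : p.toReal * t = 1 := by rw [ht]; field_simp
      rw [e3]; norm_num
  have h1 := hc (fun α => ε α * (Nat.multinomial Finset.univ α : ℂ)) ε (fun α => (hε α).1) _ hu
  have h2 : mhEval n m (fun α => ε α * (ε α * (Nat.multinomial Finset.univ α : ℂ)))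
      (fun _ : Fin n => (((1 / 2 : ℝ) * (n : ℝ) ^ (-t) : ℝ) : ℂ)) =
      (((n : ℝ) * ((1 / 2 : ℝ) * (n : ℝ) ^ (-t)) : ℝ) : ℂ) ^ m := by
    have := multinomial_sum n m (fun _ : Fin n => (((1 / 2 : ℝ) * (n : ℝ) ^ (-t) : ℝ) : ℂ))
    rw [Finset.sum_const, Finset.card_univ, Fintype.card_fin, nsmul_eq_mul] at this
    rw [Complex.ofReal_mul (n : ℝ), Complex.ofReal_natCast, ← this]
    unfold mhEval
    refine Finset.sum_congr rfl fun α _ => ?_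
    beta_reduce
    rw [← mul_assoc (ε α), (hε α).2, one_mul]
  rw [h2, norm_pow, Complex.norm_real, Real.norm_of_nonneg (by positivity)] at h1
  have h3 : sSup {x : ℝ | ∃ w : Fin n → ℂ, pNorm p w < 1 ∧
      x = ‖mhEval n m (fun α => ε α * (Nat.multinomial Finset.univ α : ℂ)) w‖} ≤ σ * A := by
    apply csSup_le
    · exact ⟨_, _, hu, rfl⟩
    · rintro x ⟨w, hw, rfl⟩
      exact hP w hw
  have h4 := h1.trans (mul_le_mul_of_nonneg_left h3 hc0)
  have e : ((n : ℝ) * ((1 / 2 : ℝ) * (n : ℝ) ^ (-t))) ^ m =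
      (n : ℝ) ^ ((m : ℝ) * (1 - t)) / 2 ^ m := by
    have e1 : (n : ℝ) * ((1 / 2 : ℝ) * (n : ℝ) ^ (-t)) = (n : ℝ) ^ (1 - t) / 2 := by
      rw [Real.rpow_sub hnpos, Real.rpow_neg hnpos.le, Real.rpow_one]; ring
    rw [e1, div_pow, mul_comm (m : ℝ), Real.rpow_mul hnpos.le, Real.rpow_natCast]
  rw [e, div_le_iff₀ (by positivity)] at h4
  have hX : 0 < (n : ℝ) ^ ((m : ℝ) * (1 - t)) := by positivity
  have hY : 0 < (n : ℝ) ^ ((m : ℝ) * s) := by positivity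
  set X := (n : ℝ) ^ ((m : ℝ) * (1 - t))
  set Y := (n : ℝ) ^ ((m : ℝ) * s)
  set F := (m.factorial : ℝ) ^ s
  have h5 := mul_le_mul_of_nonneg_right h4 hY.le
  have e5 : c * (σ * A) * 2 ^ m * Y = X * (c * (F * 2 ^ m * A)) := by
    calc _ = (σ * Y) * (c * A * 2 ^ m) := by ring
      _ = _ := by rw [heq]; ring
  rw [e5] at h5
  exact le_of_mul_le_mul_left h5 hX

lemma A_bound (n m : ℕ) (hn : 2 ≤ n) (hm : 1 ≤ m) (hnm : (n : ℝ) ≤ Real.exp m) :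
    2 * Real.log (4 * ((2 * ((2 * m * n ^ m : ℕ) : ℝ) + 1) ^ 2) ^ n) + 2 ≤
      (104 * Real.exp 1) ^ m := by
  have hnpos : (0 : ℝ) < n := by positivity
  have hm1 : (1 : ℝ) ≤ m := by exact_mod_cast hm
  have hn1 : (1 : ℝ) ≤ n := by exact_mod_cast (by omega : 1 ≤ n)
  have hl4 : Real.log 4 ≤ 2 := by
    have e : (4 : ℝ) = 2 ^ 2 := by norm_num
    rw [e, Real.log_pow]
    have := Real.log_two_lt_d9
    push_cast; linarith
  have hl8 : Real.log 8 ≤ 3 := by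
    have e : (8 : ℝ) = 2 ^ 3 := by norm_num
    rw [e, Real.log_pow]
    have := Real.log_two_lt_d9
    push_cast; linarith
  have hln : Real.log n ≤ m := (Real.log_le_iff_le_exp hnpos).2 hnm
  have hlm : Real.log m ≤ m := (Real.log_le_sub_one_of_pos (by positivity)).trans (by linarith)
  have h1 : Real.log (2 * ((2 * m * n ^ m : ℕ) : ℝ) + 1) ≤ 3 + m + m ^ 2 := by
    calc _ ≤ Real.log (8 * (m * (n : ℝ) ^ m)) := by
          apply Real.log_le_log (by positivity)
          push_cast
          have : (1 : ℝ) ≤ m * (n : ℝ) ^ m :=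
            one_le_mul_of_one_le_of_one_le hm1 (one_le_pow₀ hn1)
          nlinarith
      _ = Real.log 8 + (Real.log m + m * Real.log n) := by
          rw [Real.log_mul (by norm_num) (by positivity), Real.log_mul (by positivity) (by positivity),
            Real.log_pow]
      _ ≤ _ := by nlinarith
  rw [Real.log_mul (by norm_num) (by positivity), Real.log_pow, Real.log_pow]
  have h2 : (m : ℝ) ^ 2 ≤ 4 ^ m := by
    have : (m : ℝ) ≤ 2 ^ m := by exact_mod_cast Nat.lt_two_pow_self.le
    calc (m : ℝ) ^ 2 ≤ (2 ^ m) ^ 2 := by gcongr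
      _ = 4 ^ m := by rw [← pow_mul, mul_comm, pow_mul]; norm_num
  have h3 : (1 : ℝ) ≤ m ^ 2 := one_le_pow₀ hm1
  have h4 : (m : ℝ) ≤ m ^ 2 := by nlinarith
  have h5 : (n : ℝ) * Real.log (2 * ((2 * m * n ^ m : ℕ) : ℝ) + 1) ≤ n * (5 * m ^ 2) := by
    gcongr; linarith
  have h6 : (1 : ℝ) ≤ n * m ^ 2 := one_le_mul_of_one_le_of_one_le hn1 h3
  calc _ ≤ 26 * (n * (m : ℝ) ^ 2) := by push_cast at h5 ⊢; nlinarith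
    _ ≤ 26 ^ m * (Real.exp m * 4 ^ m) := by
        gcongr
        exact le_self_pow₀ (by norm_num) (by omega)
    _ = _ := by
        have : Real.exp m = Real.exp 1 ^ m := by rw [← Real.exp_nat_mul, mul_one]
        rw [this, mul_pow, ← mul_assoc, mul_right_comm, ← mul_pow]; norm_num

lemma chi_lower (p : ℝ≥0∞) (hp : 1 ≤ p) (n : ℕ) (hn : 2 ≤ n) :
    ∃ m : ℕ, 0 < m ∧ 1 / (624 * Real.exp 1) * ((n : ℝ) / Real.log n) ^ (1 - 1 / (min p 2).toReal)
      ≤ chiMon p m n ^ ((1 : ℝ) / (m : ℝ)) := by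
  have hL := log_pos_of n hn
  have hn2 : (2 : ℝ) ≤ n := by exact_mod_cast hn
  have hm0 : 0 < ⌈Real.log n⌉₊ := Nat.ceil_pos.2 hL
  have hm3 : (⌈Real.log n⌉₊ : ℝ) ≤ 3 * Real.log n := by
    have h1 := (Nat.ceil_lt_add_one hL.le).le
    have h2 : Real.log 2 ≤ Real.log n := Real.log_le_log (by norm_num) hn2
    have h3 := Real.log_two_gt_d9
    linarith
  have hnm : (n : ℝ) ≤ Real.exp ⌈Real.log n⌉₊ :=
    (Real.log_le_iff_le_exp (by linarith)).1 (Nat.le_ceil _)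
  set m := ⌈Real.log n⌉₊ with hm
  refine ⟨m, hm0, ?_⟩
  obtain ⟨hq1, hq2⟩ := toReal_min p hp
  set s := 1 - 1 / (min p 2).toReal with hs
  have hs0 : 0 ≤ s := by
    rw [hs, sub_nonneg, div_le_one (by linarith)]; exact hq1
  have hs1 : s ≤ 1 := by
    rw [hs]; have : 0 ≤ 1 / (min p 2).toReal := by positivity
    linarith
  have hmpos : (0 : ℝ) < m := by exact_mod_cast hm0
  have hnpos : (0 : ℝ) < n := by linarith
  have hE := Real.exp_pos 1
  have key : (((n : ℝ) / m) ^ s / (208 * Real.exp 1)) ^ m ≤ chiMon p m n := by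
    rw [chiMon_eq]
    apply le_csInf
    · obtain ⟨k, hk⟩ : ∃ k, m = k + 1 := ⟨m - 1, by omega⟩
      rw [hk]
      exact ⟨_, chi_mem p hp n k⟩
    · intro c hc
      have h1 := lower_c p hp n m (by omega) hm0 c hc
      have hc0 : 0 ≤ c := hc.1
      have hA := A_bound n m hn hm0 hnm
      have hF : (m.factorial : ℝ) ^ s ≤ ((m : ℝ) ^ s) ^ m := by
        have h2 : (m.factorial : ℝ) ≤ (m : ℝ) ^ m := by exact_mod_cast Nat.factorial_le_pow m
        calc _ ≤ ((m : ℝ) ^ m) ^ s := Real.rpow_le_rpow (by positivity) h2 hs0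
          _ = _ := by
            rw [← Real.rpow_natCast, ← Real.rpow_natCast, ← Real.rpow_mul hmpos.le,
              ← Real.rpow_mul hmpos.le, mul_comm]
      have h3 : (n : ℝ) ^ ((m : ℝ) * s) ≤ c * (((m : ℝ) ^ s) ^ m * 2 ^ m * (104 * Real.exp 1) ^ m) := by
        refine h1.trans (mul_le_mul_of_nonneg_left ?_ hc0)
        refine (mul_le_mul_of_nonneg_left hA (by positivity)).trans ?_
        gcongr
      rw [mul_comm (m : ℝ) s, Real.rpow_mul hnpos.le, Real.rpow_natCast, ← mul_pow, ← mul_pow] at h3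
      rw [Real.div_rpow hnpos.le hmpos.le, div_div, div_pow, div_le_iff₀ (by positivity)]
      have e : (m : ℝ) ^ s * 2 * (104 * Real.exp 1) = (m : ℝ) ^ s * (208 * Real.exp 1) := by ring
      rwa [e] at h3
  have hbase : 0 ≤ ((n : ℝ) / m) ^ s / (208 * Real.exp 1) := by positivity
  have h5 := Real.rpow_le_rpow (by positivity) key (show 0 ≤ (1 : ℝ) / m by positivity)
  rw [one_div, Real.pow_rpow_inv_natCast hbase (by omega)] at h5
  rw [one_div (m : ℝ)]
  refine le_trans ?_ h5
  have h6 : 1 / 3 * ((n : ℝ) / Real.log n) ^ s ≤ ((n : ℝ) / m) ^ s := by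
    have h7 : (1 / 3 : ℝ) ≤ (1 / 3 : ℝ) ^ s := by
      have := Real.rpow_le_rpow_of_exponent_ge (show (0 : ℝ) < 1 / 3 by norm_num) (by norm_num) hs1
      rwa [Real.rpow_one] at this
    calc _ ≤ (1 / 3 : ℝ) ^ s * ((n : ℝ) / Real.log n) ^ s := by gcongr
      _ = ((n : ℝ) / (3 * Real.log n)) ^ s := by
          rw [← Real.mul_rpow (by norm_num) (by positivity)]
          congr 1
          field_simp
      _ ≤ _ := by gcongr
  rw [le_div_iff₀ (by positivity)]
  refine le_trans (le_of_eq ?_) h6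
  field_simp
  ring

end ChiMonProof

/-- `sup_m χ_mon(𝒫(^m ℓ_p^n))^{1/m}` is, up to an absolute constant,
`(n / log n)^{1 - 1/min(p,2)}`. -/
theorem sup_chiMon_asymptotics :
    ∃ C : ℝ, 0 < C ∧ ∀ (p : ℝ≥0∞), 1 ≤ p → ∀ n : ℕ, 2 ≤ n →
      (1 / C) * ((n : ℝ) / Real.log n) ^ (1 - 1 / (min p 2).toReal)
          ≤ sSup {x : ℝ | ∃ m : ℕ, 0 < m ∧ x = chiMon p m n ^ ((1 : ℝ) / (m : ℝ))}
      ∧ sSup {x : ℝ | ∃ m : ℕ, 0 < m ∧ x = chiMon p m n ^ ((1 : ℝ) / (m : ℝ))}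
          ≤ C * ((n : ℝ) / Real.log n) ^ (1 - 1 / (min p 2).toReal) := by
  have h8 : Real.exp 1 * (Real.exp 1 * 8) ≤ 624 * Real.exp 1 := by
    have := Real.exp_one_lt_d9
    nlinarith [Real.exp_pos 1]
  refine ⟨624 * Real.exp 1, by positivity, fun p hp n hn => ?_⟩
  have hup : ∀ x ∈ {x : ℝ | ∃ m : ℕ, 0 < m ∧ x = chiMon p m n ^ ((1 : ℝ) / (m : ℝ))},
      x ≤ 624 * Real.exp 1 * ((n : ℝ) / Real.log n) ^ (1 - 1 / (min p 2).toReal) := by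
    rintro x ⟨m, hm, rfl⟩
    refine (ChiMonProof.chi_upper p hp n hn m hm).trans ?_
    have h1 := ChiMonProof.one_le_ratio n hn
    have h2 : 0 ≤ ((n : ℝ) / Real.log n) ^ (1 - 1 / (min p 2).toReal) :=
      Real.rpow_nonneg (by linarith) _
    exact mul_le_mul_of_nonneg_right h8 h2
  constructor
  · obtain ⟨m, hm, h⟩ := ChiMonProof.chi_lower p hp n hn
    exact h.trans (le_csSup ⟨_, hup⟩ ⟨m, hm, rfl⟩)
  · exact csSup_le ⟨_, 1, one_pos, rfl⟩ hup
end
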